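/- Let n ≥ 2. The Birman–Murakami–Wenzl algebra B(A_{n−1}) over K = ℚ(l,δ) is Morita equivalent to the direct sum ⊕_{i=0}^{⌊n/2⌋} H_{n−2i}, where H_m is the Iwahori–Hecke algebra of the symmetric group S_m over K with quadratic relation T_j² = 1 − m·T_j (and H_0 = H_1 = K). -/

import Mathlib

open FreeAlgebra

/-- Two rings are Morita equivalent if their categories of left modules are equivalent. -/
def MoritaEquivalent (A : Type u) (B : Type u) [Ring A] [Ring B] : Prop :=
  Nonempty (ModuleCat.{u} A ≌ ModuleCat.{u} B)
/-- The path graph (Coxeter diagram of type `A_n`) on nodes `1, …, n`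
(realized as `Fin n`, node `i` corresponding to index `i-1`): node `i` is
adjacent to node `i+1` for `1 ≤ i ≤ n-1`. -/
def typeA (n : ℕ) : SimpleGraph (Fin n) :=
  SimpleGraph.fromRel (fun i j => (i : ℕ) + 1 = (j : ℕ))

/-- The Coxeter diagram of type `D_n` (`n ≥ 4`) on nodes `1, …, n` (realized as
`Fin n`, node `i` corresponding to index `i-1`): nodes `1` and `2` are both
adjacent to node `3`, and nodes `i`, `i+1` are adjacent for `3 ≤ i ≤ n-1`. -/
def typeD (n : ℕ) : SimpleGraph (Fin n) :=
  SimpleGraph.fromRel (fun i j =>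
    ((i : ℕ) = 0 ∧ (j : ℕ) = 2) ∨ ((i : ℕ) = 1 ∧ (j : ℕ) = 2) ∨
      (2 ≤ (i : ℕ) ∧ (i : ℕ) + 1 = (j : ℕ)))

/-- The Coxeter diagram of type `E_n` (`n = 6, 7, 8`) on nodes `1, …, n`
(realized as `Fin n`, node `i` corresponding to index `i-1`): a path on nodes
`1, 3, 4, …, n` together with node `2` attached to node `4`. -/
def typeE (n : ℕ) : SimpleGraph (Fin n) :=
  SimpleGraph.fromRel (fun i j =>
    ((i : ℕ) = 0 ∧ (j : ℕ) = 2) ∨ ((i : ℕ) = 1 ∧ (j : ℕ) = 3) ∨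
      (2 ≤ (i : ℕ) ∧ (i : ℕ) + 1 = (j : ℕ)))
/-- The field `K = ℚ(l,δ)` of rational functions over `ℚ` in two independent
variables `l` and `δ`, realized as an iterated rational function field. -/
abbrev BMWField : Type := RatFunc (RatFunc ℚ)

/-- The variable `l` of `K = ℚ(l,δ)`. -/
noncomputable def lVar : BMWField := RatFunc.X

/-- The variable `δ` of `K = ℚ(l,δ)`. -/
noncomputable def deltaVar : BMWField := RatFunc.C RatFunc.X

/-- The element `m = (l - l⁻¹)/(1 - δ)` of `K = ℚ(l,δ)`. -/
noncomputable def mVar : BMWField := (lVar - lVar⁻¹) / (1 - deltaVar)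

/-- The defining relations of the Birman–Murakami–Wenzl algebra `B(Q)` of the
simply-laced type given by the graph `Q`, imposed on the free algebra over
`K = ℚ(l,δ)` on the generators `g_1, …, g_n` (encoded as `Sum.inl i`) and
`e_1, …, e_n` (encoded as `Sum.inr i`). -/
inductive BMWRel (n : ℕ) (Q : SimpleGraph (Fin n)) :
    FreeAlgebra BMWField (Fin n ⊕ Fin n) → FreeAlgebra BMWField (Fin n ⊕ Fin n) → Prop
  /-- `g_i g_j = g_j g_i` whenever `i ≁ j` -/
  | gg (i j : Fin n) (hne : i ≠ j) (hadj : ¬ Q.Adj i j) :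
      BMWRel n Q (ι BMWField (.inl i) * ι BMWField (.inl j))
        (ι BMWField (.inl j) * ι BMWField (.inl i))
  /-- `g_i g_j g_i = g_j g_i g_j` whenever `i ∼ j` -/
  | braid (i j : Fin n) (hadj : Q.Adj i j) :
      BMWRel n Q (ι BMWField (.inl i) * ι BMWField (.inl j) * ι BMWField (.inl i))
        (ι BMWField (.inl j) * ι BMWField (.inl i) * ι BMWField (.inl j))
  /-- `m·e_i = l·(g_i² + m·g_i - 1)` -/
  | quad (i : Fin n) :
      BMWRel n Q (mVar • ι BMWField (.inr i))
        (lVar • (ι BMWField (.inl i) * ι BMWField (.inl i)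
          + mVar • ι BMWField (.inl i) - 1))
  /-- `g_i e_i = l⁻¹·e_i` -/
  | ge (i : Fin n) :
      BMWRel n Q (ι BMWField (.inl i) * ι BMWField (.inr i)) (lVar⁻¹ • ι BMWField (.inr i))
  /-- `e_i g_j e_i = l·e_i` whenever `i ∼ j` -/
  | ege (i j : Fin n) (hadj : Q.Adj i j) :
      BMWRel n Q (ι BMWField (.inr i) * ι BMWField (.inl j) * ι BMWField (.inr i))
        (lVar • ι BMWField (.inr i))

/-- The Birman–Murakami–Wenzl algebra `B(Q)` of simply-laced type `Q` over
the rational function field `K = ℚ(l,δ)`. -/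
abbrev BMWAlgebra (n : ℕ) (Q : SimpleGraph (Fin n)) : Type :=
  RingQuot (BMWRel n Q)
/-- The defining relations of the Iwahori–Hecke algebra of the symmetric group
over `K = ℚ(l,δ)`, imposed on the free `K`-algebra on generators `T_1, …, T_N`
(encoded as `Fin N`): `T_iT_j = T_jT_i` for `|i - j| ≥ 2`,
`T_iT_{i+1}T_i = T_{i+1}T_iT_{i+1}`, and `T_i² = 1 - m·T_i`
where `m = (l - l⁻¹)/(1 - δ)`. -/
inductive HeckeRel (N : ℕ) :
    FreeAlgebra BMWField (Fin N) → FreeAlgebra BMWField (Fin N) → Prop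
  /-- `T_i T_j = T_j T_i` for `|i - j| ≥ 2` -/
  | comm (i j : Fin N) (h : (i : ℕ) + 2 ≤ (j : ℕ) ∨ (j : ℕ) + 2 ≤ (i : ℕ)) :
      HeckeRel N (ι BMWField i * ι BMWField j) (ι BMWField j * ι BMWField i)
  /-- `T_i T_{i+1} T_i = T_{i+1} T_i T_{i+1}` -/
  | braid (i j : Fin N) (h : (i : ℕ) + 1 = (j : ℕ)) :
      HeckeRel N (ι BMWField i * ι BMWField j * ι BMWField i)
        (ι BMWField j * ι BMWField i * ι BMWField j)
  /-- `T_i² = 1 - m·T_i` -/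
  | quad (i : Fin N) :
      HeckeRel N (ι BMWField i * ι BMWField i) (1 - mVar • ι BMWField i)

/-- The Iwahori–Hecke algebra `H_m` of the symmetric group `S_m` over
`K = ℚ(l,δ)`, presented on the generators `T_1, …, T_{m-1}`; for `m ≤ 1` there
are no generators and no relations, so `H_0 = H_1 = K`. -/
abbrev HeckeAlgebra (m : ℕ) : Type := RingQuot (HeckeRel (m - 1))

/-!
Let `J` be the two-sided ideal of `B(A_M)` generated by `e_M`. Killing the `e_i` identifies
`B(A_M) / J` with the Hecke algebra `H_{M+1}`, and `δ⁻¹ e_M` is an idempotent that generates `J`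
and whose corner is isomorphic to `B(A_{M-2})`. If `J` is generated by a central idempotent, then
`B(A_M) ≃ H_{M+1} × J`, so a full corner of `B(A_{M-2})` isomorphic to a product of Hecke algebras
gives one of `B(A_M)` with the additional factor `H_{M+1}`; and a ring is Morita equivalent to its
full corners.

The central idempotent comes from positivity. On the tensor powers of the vector representation of
quantum `𝔰𝔬₂ₖ`, with real parameters, the BMW generators act by symmetric operators, so the image
of `B(A_M)` is a finite-dimensional algebra with an anisotropic involution and hence semisimple.
With `l` fixed and transcendental, `δ` varies with `k`, and the ultraproduct over `k` is a
representation over `ℚ(l,δ)`. It is faithful, by induction on `M`: modulo `J` every element is a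
combination of the `(M + 1)!` normal words in the `g_i`, which the action on tensors of pairwise
distinct isotropic basis vectors separates while `J` kills such tensors; and multiplication by
`e_M` reduces elements of `J` to `B(A_{M-1})`.
-/

/-! ### Quantum orthogonal spaces -/

section ThreeSlots

variable {F I : Type*} [Field F]

/-- A linear operator on two-variable functions acting on the first two of three variables. -/
def leg₁₂ (T : Module.End F (I → I → F)) : Module.End F (I → I → I → F) where
  toFun f x y z := T (fun u v => f u v z) x y
  map_add' f g := by
    ext x y z
    exact congrFun₂ (T.map_add (fun u v => f u v z) (fun u v => g u v z)) x y
  map_smul' c f := by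
    ext x y z
    exact congrFun₂ (T.map_smul c (fun u v => f u v z)) x y

/-- A linear operator on two-variable functions acting on the last two of three variables. -/
def leg₂₃ (T : Module.End F (I → I → F)) : Module.End F (I → I → I → F) where
  toFun f x := T (f x)
  map_add' f g := by
    ext x : 1
    exact T.map_add (f x) (g x)
  map_smul' c f := by
    ext x : 1
    exact T.map_smul c (f x)

theorem leg₁₂_apply (T : Module.End F (I → I → F)) (f : I → I → I → F) (x y z : I) :
    leg₁₂ T f x y z = T (fun u v => f u v z) x y := rfl

theorem leg₂₃_apply (T : Module.End F (I → I → F)) (f : I → I → I → F) (x y z : I) :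
    leg₂₃ T f x y z = T (fun u v => f x u v) y z := rfl

/-- Creation of the two-variable function `w` in the first two of three variables. -/
def cup₁₂ (w : I → I → F) (f : I → F) : I → I → I → F := fun x y z => f z * w x y

/-- Creation of the two-variable function `w` in the last two of three variables. -/
def cup₂₃ (w : I → I → F) (f : I → F) : I → I → I → F := fun x y z => f x * w y z

variable [Fintype I]

/-- The bilinear pairing of two-variable functions. -/
def pairing (w f : I → I → F) : F := ∑ u, ∑ v, w u v * f u v

theorem pairing_comm (w f : I → I → F) : pairing w f = pairing f w := by
  simp only [pairing, mul_comm]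

theorem pairing_add (w f g : I → I → F) :
    pairing w (fun x y => f x y + g x y) = pairing w f + pairing w g := by
  simp only [pairing, mul_add, Finset.sum_add_distrib]

theorem pairing_sub (w f g : I → I → F) :
    pairing w (fun x y => f x y - g x y) = pairing w f - pairing w g := by
  simp only [pairing, mul_sub, Finset.sum_sub_distrib]

theorem pairing_mul_left (w f : I → I → F) (c : F) :
    pairing w (fun x y => c * f x y) = c * pairing w f := by
  simp only [pairing, Finset.mul_sum, mul_left_comm]

/-- Contraction of the first two of three variables against `w`. -/
def cap₁₂ (w : I → I → F) : (I → I → I → F) →ₗ[F] (I → F) where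
  toFun f z := pairing w (fun x y => f x y z)
  map_add' _ _ := funext fun _ => pairing_add _ _ _
  map_smul' _ _ := funext fun _ => pairing_mul_left _ _ _

/-- Contraction of the last two of three variables against `w`. -/
def cap₂₃ (w : I → I → F) : (I → I → I → F) →ₗ[F] (I → F) where
  toFun f x := pairing w (f x)
  map_add' _ _ := funext fun _ => pairing_add _ _ _
  map_smul' _ _ := funext fun _ => pairing_mul_left _ _ _

theorem cap₁₂_apply (w : I → I → F) (f : I → I → I → F) (z : I) :
    cap₁₂ w f z = pairing w (fun x y => f x y z) := rfl

theorem cap₂₃_apply (w : I → I → F) (f : I → I → I → F) (x : I) :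
    cap₂₃ w f x = pairing w (fun y z => f x y z) := rfl

/-- The bilinear pairing of three-variable functions. -/
def pairing₃ (f g : I → I → I → F) : F := ∑ x, ∑ y, ∑ z, f x y z * g x y z

theorem pairing₃_eq_sum_last (f g : I → I → I → F) :
    pairing₃ f g = ∑ z, pairing (fun x y => f x y z) (fun x y => g x y z) := by
  simp only [pairing₃, pairing]
  exact (Finset.sum_congr rfl fun _ _ => Finset.sum_comm).trans Finset.sum_comm

theorem ext_pairing₃ {f g : I → I → I → F}
    (h : ∀ φ, pairing₃ φ f = pairing₃ φ g) : f = g := by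
  classical
  ext x y z
  simpa [pairing₃] using
    h fun x' y' z' => if x' = x then if y' = y then if z' = z then 1 else 0 else 0 else 0

section Adjoint

variable {T : Module.End F (I → I → F)}

theorem pairing₃_leg₁₂ (hT : ∀ f g, pairing f (T g) = pairing (T f) g) (f g : I → I → I → F) :
    pairing₃ f (leg₁₂ T g) = pairing₃ (leg₁₂ T f) g := by
  simp only [pairing₃_eq_sum_last]
  exact Finset.sum_congr rfl fun z _ => hT _ _

theorem pairing₃_leg₂₃ (hT : ∀ f g, pairing f (T g) = pairing (T f) g) (f g : I → I → I → F) :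
    pairing₃ f (leg₂₃ T g) = pairing₃ (leg₂₃ T f) g :=
  Finset.sum_congr rfl fun x _ => hT (f x) (g x)

theorem pairing₃_cup₁₂ (w : I → I → F) (f : I → I → I → F) (g : I → F) :
    pairing₃ f (cup₁₂ w g) = cap₁₂ w f ⬝ᵥ g := by
  simp only [pairing₃_eq_sum_last, cup₁₂, pairing_mul_left, dotProduct, cap₁₂_apply]
  exact Finset.sum_congr rfl fun z _ => by rw [pairing_comm w, mul_comm]

theorem pairing₃_cup₂₃ (w : I → I → F) (f : I → I → I → F) (g : I → F) :
    pairing₃ f (cup₂₃ w g) = cap₂₃ w f ⬝ᵥ g := by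
  change ∑ x, pairing (f x) (fun y z => g x * w y z) = _
  simp only [pairing_mul_left, dotProduct, cap₂₃_apply]
  exact Finset.sum_congr rfl fun x _ => by rw [pairing_comm w, mul_comm]

end Adjoint

end ThreeSlots

/-- A quantum orthogonal space of dimension `2k`: the braiding `R` of the vector representation
of quantum `𝔰𝔬₂ₖ`, written as a symmetric operator on functions of two basis labels, its invariant
tensor `w`, and a maximal isotropic family `a` of basis labels, on which `R` is of Hecke type.
Here `t = q ^ k`, and the eigenvalue `q t⁻²` of `R` on `w` is the `l⁻¹` of the BMW algebra. -/
structure QuantumOrthogonalSpace (F : Type*) [Field F] (q t : F) (k : ℕ) where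
  I : Type
  [fintype : Fintype I]
  [decidableEq : DecidableEq I]
  R : Module.End F (I → I → F)
  w : I → I → F
  a : Fin k ↪ I
  braid : ∀ f, leg₁₂ R (leg₂₃ R (leg₁₂ R f)) = leg₂₃ R (leg₁₂ R (leg₂₃ R f))
  R_R : ∀ f x y, R (R f) x y = f x y + (q - q⁻¹) * R f x y
    - (q - q⁻¹) * (q * t⁻¹ ^ 2) * pairing w f * w x y
  R_w : ∀ x y, R w x y = q * t⁻¹ ^ 2 * w x y
  pairing_R : ∀ f g, pairing f (R g) = pairing (R f) g
  pairing_w_w : (q - q⁻¹) * pairing w w = (q - q⁻¹) + t ^ 2 * q⁻¹ - q * t⁻¹ ^ 2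
  w_mul_w : ∀ x y, ∑ v, w x v * w v y = if x = y then 1 else 0
  cap₁₂_R_R : ∀ f, cap₁₂ w (leg₂₃ R (leg₁₂ R f)) = cap₂₃ w f
  w_isotropic : ∀ i j, w (a i) (a j) = 0
  R_isotropic : ∀ f, (∀ x y, ¬ (x ∈ Set.range a ∧ y ∈ Set.range a) → f x y = 0) →
    ∀ x y, ¬ (x ∈ Set.range a ∧ y ∈ Set.range a) → R f x y = 0
  R_single : ∀ i j, i < j → ∀ x y,
    R (fun x y => if x = a i ∧ y = a j then 1 else 0) x y = if x = a j ∧ y = a i then 1 else 0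

namespace QuantumOrthogonalSpace

attribute [instance] fintype decidableEq

variable {F : Type*} [Field F] {q t : F} {k : ℕ} (S : QuantumOrthogonalSpace F q t k)

theorem R_add (f g : S.I → S.I → F) (x y : S.I) :
    S.R (fun x y => f x y + g x y) x y = S.R f x y + S.R g x y :=
  congrFun₂ (S.R.map_add f g) x y

theorem R_sub (f g : S.I → S.I → F) (x y : S.I) :
    S.R (fun x y => f x y - g x y) x y = S.R f x y - S.R g x y :=
  congrFun₂ (S.R.map_sub f g) x y

theorem R_mul_left (c : F) (f : S.I → S.I → F) (x y : S.I) :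
    S.R (fun x y => c * f x y) x y = c * S.R f x y :=
  congrFun₂ (S.R.map_smul c f) x y

theorem R_zero (x y : S.I) : S.R (fun _ _ => 0) x y = 0 :=
  congrFun₂ S.R.map_zero x y

theorem pairing_w_R (f : S.I → S.I → F) :
    pairing S.w (S.R f) = q * t⁻¹ ^ 2 * pairing S.w f := by
  have hw : S.R S.w = fun x y => q * t⁻¹ ^ 2 * S.w x y := funext₂ S.R_w
  rw [S.pairing_R, hw, pairing_comm, pairing_mul_left, pairing_comm]

theorem pairing_w_eq_zero {f : S.I → S.I → F}
    (hf : ∀ x y, ¬ (x ∈ Set.range S.a ∧ y ∈ Set.range S.a) → f x y = 0) : pairing S.w f = 0 := by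
  refine Finset.sum_eq_zero fun x _ => Finset.sum_eq_zero fun y _ => ?_
  by_cases h : x ∈ Set.range S.a ∧ y ∈ Set.range S.a
  · obtain ⟨⟨i, rfl⟩, j, rfl⟩ := h
    rw [S.w_isotropic, zero_mul]
  · rw [hf x y h, mul_zero]

theorem leg₁₂_cup₁₂ (f : S.I → F) :
    leg₁₂ S.R (cup₁₂ S.w f) = (q * t⁻¹ ^ 2) • cup₁₂ S.w f := by
  ext x y z
  change S.R (fun u v => f z * S.w u v) x y = q * t⁻¹ ^ 2 * (f z * S.w x y)
  rw [R_mul_left]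
  exact (congrArg (f z * ·) (S.R_w x y)).trans (mul_left_comm _ _ _)

theorem leg₂₃_cup₂₃ (f : S.I → F) :
    leg₂₃ S.R (cup₂₃ S.w f) = (q * t⁻¹ ^ 2) • cup₂₃ S.w f := by
  ext x y z
  change S.R (fun u v => f x * S.w u v) y z = q * t⁻¹ ^ 2 * (f x * S.w y z)
  rw [R_mul_left]
  exact (congrArg (f x * ·) (S.R_w y z)).trans (mul_left_comm _ _ _)

theorem leg₁₂_leg₁₂ (f : S.I → S.I → S.I → F) :
    leg₁₂ S.R (leg₁₂ S.R f) = f + (q - q⁻¹) • leg₁₂ S.R f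
      - ((q - q⁻¹) * (q * t⁻¹ ^ 2)) • cup₁₂ S.w (cap₁₂ S.w f) := by
  ext x y z
  refine (S.R_R _ x y).trans ?_
  simp only [Pi.sub_apply, Pi.add_apply, Pi.smul_apply, smul_eq_mul, leg₁₂_apply, cup₁₂,
    cap₁₂_apply, mul_assoc]

theorem leg₂₃_leg₂₃ (f : S.I → S.I → S.I → F) :
    leg₂₃ S.R (leg₂₃ S.R f) = f + (q - q⁻¹) • leg₂₃ S.R f
      - ((q - q⁻¹) * (q * t⁻¹ ^ 2)) • cup₂₃ S.w (cap₂₃ S.w f) := by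
  ext x y z
  refine (S.R_R _ y z).trans ?_
  simp only [Pi.sub_apply, Pi.add_apply, Pi.smul_apply, smul_eq_mul, leg₂₃_apply, cup₂₃,
    cap₂₃_apply, mul_assoc]

theorem cap₂₃_leg₂₃ (f : S.I → S.I → S.I → F) :
    cap₂₃ S.w (leg₂₃ S.R f) = (q * t⁻¹ ^ 2) • cap₂₃ S.w f :=
  funext fun x => S.pairing_w_R (f x)

theorem cap₁₂_cup₁₂ (f : S.I → F) : cap₁₂ S.w (cup₁₂ S.w f) = pairing S.w S.w • f := by
  ext z
  exact (pairing_mul_left _ _ _).trans (mul_comm _ _)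

theorem cap₂₃_cup₂₃ (f : S.I → F) : cap₂₃ S.w (cup₂₃ S.w f) = pairing S.w S.w • f := by
  ext x
  exact (pairing_mul_left _ _ _).trans (mul_comm _ _)

theorem cap₁₂_cup₂₃ (f : S.I → F) : cap₁₂ S.w (cup₂₃ S.w f) = f := by
  ext z
  simp_rw [cap₁₂_apply, cup₂₃, pairing, mul_left_comm, ← Finset.mul_sum, S.w_mul_w]
  simp

theorem cap₂₃_cup₁₂ (f : S.I → F) : cap₂₃ S.w (cup₁₂ S.w f) = f := by
  ext x
  have inner (z : S.I) : ∑ y, S.w y z * (f z * S.w x y) = f z * if x = z then 1 else 0 := by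
    rw [← S.w_mul_w, Finset.mul_sum]
    exact Finset.sum_congr rfl fun y _ => by ring
  simp_rw [cap₂₃_apply, cup₁₂, pairing]
  rw [Finset.sum_comm]
  simp [inner]

-- Turning a cap past a strand replaces the braiding by its inverse
-- `R - (q - q⁻¹) + (q - q⁻¹) • cup ∘ cap`.
theorem cap₂₃_leg₁₂ (f : S.I → S.I → S.I → F) :
    cap₂₃ S.w (leg₁₂ S.R f) =
      cap₁₂ S.w (leg₂₃ S.R f) + (q - q⁻¹) • cap₂₃ S.w f - (q - q⁻¹) • cap₁₂ S.w f := by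
  have untwist (g : S.I → F) : (q * t⁻¹ ^ 2) • cap₁₂ S.w (leg₂₃ S.R (cup₁₂ S.w g)) = g := by
    simpa only [leg₁₂_cup₁₂, map_smul, cap₂₃_cup₁₂] using S.cap₁₂_R_R (cup₁₂ S.w g)
  rw [← S.cap₁₂_R_R, leg₁₂_leg₁₂]
  simp only [map_sub, map_add, map_smul, mul_smul _ (q * _), untwist, S.cap₁₂_R_R]

theorem cap₂₃_R_R (f : S.I → S.I → S.I → F) :
    cap₂₃ S.w (leg₁₂ S.R (leg₂₃ S.R f)) = cap₁₂ S.w f := by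
  rw [cap₂₃_leg₁₂, leg₂₃_leg₂₃]
  simp only [map_sub, map_add, map_smul, cap₁₂_cup₂₃, cap₂₃_leg₂₃, mul_smul]
  abel

theorem cap₁₂_leg₂₃_cup₁₂ (f : S.I → F) :
    cap₁₂ S.w (leg₂₃ S.R (cup₁₂ S.w f)) = (t ^ 2 * q⁻¹) • f := by
  have h := S.cap₂₃_leg₁₂ (cup₁₂ S.w f)
  rw [leg₁₂_cup₁₂, map_smul, cap₂₃_cup₁₂, cap₁₂_cup₁₂, smul_smul, S.pairing_w_w] at h
  linear_combination (norm := module) -h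

theorem cap₂₃_leg₁₂_cup₂₃ (f : S.I → F) :
    cap₂₃ S.w (leg₁₂ S.R (cup₂₃ S.w f)) = (t ^ 2 * q⁻¹) • f := by
  rw [cap₂₃_leg₁₂, leg₂₃_cup₂₃, map_smul, cap₁₂_cup₂₃, cap₂₃_cup₂₃, smul_smul, S.pairing_w_w]
  module

theorem R_R_cup₂₃ (f : S.I → F) :
    leg₂₃ S.R (leg₁₂ S.R (cup₂₃ S.w f)) = cup₁₂ S.w f :=
  ext_pairing₃ fun φ => by
    rw [pairing₃_leg₂₃ S.pairing_R, pairing₃_leg₁₂ S.pairing_R, pairing₃_cup₂₃, cap₂₃_R_R,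
      pairing₃_cup₁₂]

theorem R_R_cup₁₂ (f : S.I → F) :
    leg₁₂ S.R (leg₂₃ S.R (cup₁₂ S.w f)) = cup₂₃ S.w f :=
  ext_pairing₃ fun φ => by
    rw [pairing₃_leg₁₂ S.pairing_R, pairing₃_leg₂₃ S.pairing_R, pairing₃_cup₁₂, S.cap₁₂_R_R,
      pairing₃_cup₂₃]

theorem leg₁₂_cup₂₃ (f : S.I → F) (x y z : S.I) :
    leg₁₂ S.R (cup₂₃ S.w f) x y z =
      leg₂₃ S.R (cup₁₂ S.w f) x y z + (q - q⁻¹) * cup₂₃ S.w f x y z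
        - (q - q⁻¹) * cup₁₂ S.w f x y z := by
  suffices leg₁₂ S.R (cup₂₃ S.w f) =
      leg₂₃ S.R (cup₁₂ S.w f) + (q - q⁻¹) • cup₂₃ S.w f - (q - q⁻¹) • cup₁₂ S.w f from
    congrFun (congrFun₂ this x y) z
  refine ext_pairing₃ fun φ => ?_
  have h := congrArg (· ⬝ᵥ f) (S.cap₂₃_leg₁₂ φ)
  simp only [sub_dotProduct, add_dotProduct, smul_dotProduct, ← pairing₃_cup₂₃,
    ← pairing₃_cup₁₂, ← pairing₃_leg₁₂ S.pairing_R, ← pairing₃_leg₂₃ S.pairing_R] at h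
  rw [h]
  simp only [pairing₃, Pi.sub_apply, Pi.add_apply, Pi.smul_apply, smul_eq_mul, mul_add, mul_sub,
    Finset.sum_add_distrib, Finset.sum_sub_distrib, Finset.mul_sum, mul_left_comm]

end QuantumOrthogonalSpace

namespace QuantumOrthogonalSpace

variable {F : Type*} [Field F] {q t : F} {k : ℕ} (S : QuantumOrthogonalSpace F q t k)

/-- The quantum orthogonal space of dimension zero. -/
def zero (F : Type*) [Field F] (q : F) : QuantumOrthogonalSpace F q 1 0 where
  I := Empty
  R := 0
  w x := x.elim
  a := ⟨Fin.elim0, fun i => i.elim0⟩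
  braid _ := funext fun x => x.elim
  R_R _ x := x.elim
  R_w x := x.elim
  pairing_R _ _ := rfl
  pairing_w_w := by simp [pairing]
  w_mul_w x := x.elim
  cap₁₂_R_R _ := funext fun x => x.elim
  w_isotropic i := i.elim0
  R_isotropic _ _ x := x.elim
  R_single i := i.elim0

/-- The braiding of the hyperbolic extension: the labels `none` and `some none` are the highest and
the lowest weight of a new hyperbolic plane, and `some (some u)` are the old labels. The entries
are those of the Faddeev–Reshetikhin–Takhtajan braiding of type `D`, in its symmetric form. -/
def hyperbolicRFun (f : Option (Option S.I) → Option (Option S.I) → F) :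
    Option (Option S.I) → Option (Option S.I) → F
  | none, none => q * f none none
  | some none, some none => q * f (some none) (some none)
  | some (some v), none => f none (some (some v)) + (q - q⁻¹) * f (some (some v)) none
  | none, some (some v) => f (some (some v)) none
  | some none, some (some v) =>
      f (some (some v)) (some none) + (q - q⁻¹) * f (some none) (some (some v))
  | some (some v), some none => f (some none) (some (some v))
  | none, some none => q⁻¹ * f (some none) none
  | some none, none => q⁻¹ * f none (some none) + (q - q⁻¹) * (1 - t⁻¹ ^ 2) * f (some none) none
      - (q - q⁻¹) * t⁻¹ * pairing S.w (fun u v => f (some (some u)) (some (some v)))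
  | some (some u), some (some v) =>
      S.R (fun u v => f (some (some u)) (some (some v))) u v
        - (q - q⁻¹) * t⁻¹ * (f (some none) none * S.w u v)

/-- `hyperbolicRFun` as a linear operator. -/
def hyperbolicR : Module.End F (Option (Option S.I) → Option (Option S.I) → F) where
  toFun := S.hyperbolicRFun
  map_add' f g := by
    ext x y
    rcases x with _ | _ | x <;> rcases y with _ | _ | y <;>
      simp only [hyperbolicRFun, pairing_add, R_add, Pi.add_apply] <;> ring
  map_smul' c f := by
    ext x y
    rcases x with _ | _ | x <;> rcases y with _ | _ | y <;>
      simp only [hyperbolicRFun, pairing_mul_left, R_mul_left, Pi.smul_apply, smul_eq_mul,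
        RingHom.id_apply] <;> ring

/-- The invariant tensor of the hyperbolic extension. -/
def hyperbolicW : Option (Option S.I) → Option (Option S.I) → F
  | none, some none => t
  | some none, none => t⁻¹
  | some (some u), some (some v) => S.w u v
  | _, _ => 0

theorem hyperbolicR_apply (f : Option (Option S.I) → Option (Option S.I) → F) :
    S.hyperbolicR f = S.hyperbolicRFun f := rfl

theorem pairing_hyperbolicW (f : Option (Option S.I) → Option (Option S.I) → F) :
    pairing S.hyperbolicW f =
      t * f none (some none) + t⁻¹ * f (some none) none
        + pairing S.w (fun u v => f (some (some u)) (some (some v))) := by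
  simp [pairing, hyperbolicW, Fintype.sum_option]
  ring

section Pointwise

/- The identities between `leg`, `cap` and `cup` in the form in which they occur after
`hyperbolicRFun` has been evaluated. -/

variable (f : S.I → S.I → S.I → F) (φ : S.I → F) (x y z : S.I)

theorem braid_apply :
    S.R (fun x y => S.R (fun y z => S.R (fun x y => f x y z) x y) y z) x y =
      S.R (fun y z => S.R (fun x y => S.R (fun y z => f x y z) y z) x y) y z :=
  congrFun (congrFun₂ (S.braid f) x y) z

theorem pairing_R_R_apply :
    pairing S.w (fun x y => S.R (fun y z => S.R (fun x y => f x y z) x y) y z) =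
      pairing S.w (fun x y => f z x y) :=
  congrFun (S.cap₁₂_R_R f) z

theorem pairing_R_R_apply' :
    pairing S.w (fun y z => S.R (fun x y => S.R (fun y z => f x y z) y z) x y) =
      pairing S.w (fun y z => f y z x) :=
  congrFun (S.cap₂₃_R_R f) x

theorem pairing_zigzag_left : pairing S.w (fun x y => φ x * S.w y z) = φ z :=
  congrFun (S.cap₁₂_cup₂₃ φ) z

theorem pairing_zigzag_right : pairing S.w (fun y z => φ z * S.w x y) = φ x :=
  congrFun (S.cap₂₃_cup₁₂ φ) x

theorem pairing_R_cup_apply :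
    pairing S.w (fun x y => S.R (fun y z => φ z * S.w x y) y z) = t ^ 2 * q⁻¹ * φ z :=
  congrFun (S.cap₁₂_leg₂₃_cup₁₂ φ) z

theorem pairing_R_cup_apply' :
    pairing S.w (fun y z => S.R (fun x y => φ x * S.w y z) x y) = t ^ 2 * q⁻¹ * φ x :=
  congrFun (S.cap₂₃_leg₁₂_cup₂₃ φ) x

theorem pairing_R_turn_apply :
    pairing S.w (fun y z => S.R (fun x y => f x y z) x y) =
      pairing S.w (fun y z => S.R (fun u v => f y u v) z x)
        + (q - q⁻¹) * pairing S.w (fun y z => f x y z)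
        - (q - q⁻¹) * pairing S.w (fun y z => f y z x) :=
  congrFun (S.cap₂₃_leg₁₂ f) x

theorem R_R_cup_apply :
    S.R (fun x y => S.R (fun y z => φ z * S.w x y) y z) x y = φ x * S.w y z :=
  congrFun (congrFun₂ (S.R_R_cup₁₂ φ) x y) z

theorem R_R_cup_apply' :
    S.R (fun y z => S.R (fun x y => φ x * S.w y z) x y) y z = φ z * S.w x y :=
  congrFun (congrFun₂ (S.R_R_cup₂₃ φ) x y) z

theorem R_cup_turn_apply :
    S.R (fun x y => φ x * S.w y z) x y =
      S.R (fun y z => φ z * S.w x y) y z + (q - q⁻¹) * (φ x * S.w y z)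
        - (q - q⁻¹) * (φ z * S.w x y) :=
  S.leg₁₂_cup₂₃ φ x y z

end Pointwise

set_option maxHeartbeats 1000000 in
-- Each of the twenty-seven cases for `x`, `y` and `z` is a rational identity.
theorem hyperbolicR_braid (hq : q ≠ 0) (ht : t ≠ 0)
    (f : Option (Option S.I) → Option (Option S.I) → Option (Option S.I) → F) :
    leg₁₂ S.hyperbolicR (leg₂₃ S.hyperbolicR (leg₁₂ S.hyperbolicR f)) =
      leg₂₃ S.hyperbolicR (leg₁₂ S.hyperbolicR (leg₂₃ S.hyperbolicR f)) := by
  ext x y z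
  simp only [leg₁₂_apply, leg₂₃_apply, hyperbolicR_apply]
  rcases x with _ | _ | x <;> rcases y with _ | _ | y <;> rcases z with _ | _ | z <;>
    simp only [hyperbolicRFun, R_add, R_sub, R_mul_left, pairing_add, pairing_sub,
      pairing_mul_left] <;>
    try ring1
  all_goals try (field_simp; done)
  all_goals try (field_simp; ring1)
  · rw [S.pairing_w_R]
    linear_combination (norm := (field_simp; ring1))
      ((q - q⁻¹) ^ 2 * t⁻¹ ^ 2 * f (some none) none none) * S.pairing_w_w
  · rw [S.pairing_R_R_apply fun x y z => f (some (some x)) (some (some y)) (some (some z)),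
      S.pairing_zigzag_left, S.pairing_R_cup_apply]
    field_simp
    ring1
  · rw [S.pairing_w_R]
    linear_combination (norm := (field_simp; ring1))
      (-(q - q⁻¹) ^ 2 * t⁻¹ ^ 2 * f (some none) (some none) none) * S.pairing_w_w
  · rw [S.pairing_R_turn_apply fun x y z => f (some (some x)) (some (some y)) (some (some z)),
      S.pairing_zigzag_left, S.pairing_zigzag_right]
    field_simp
    ring1
  · rw [S.R_R, S.R_w]
    field_simp
    ring1
  · rw [S.pairing_R_R_apply' fun x y z => f (some (some x)) (some (some y)) (some (some z)),
      S.pairing_zigzag_right, S.pairing_R_cup_apply']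
    field_simp
    ring1
  · rw [S.R_R, S.R_w]
    field_simp
    ring1
  · rw [S.braid_apply fun x y z => f (some (some x)) (some (some y)) (some (some z)),
      S.R_R_cup_apply, S.R_R_cup_apply', S.R_cup_turn_apply]
    field_simp
    ring1

theorem hyperbolicR_hyperbolicR (hq : q ≠ 0) (ht : t ≠ 0)
    (f : Option (Option S.I) → Option (Option S.I) → F) (x y : Option (Option S.I)) :
    S.hyperbolicR (S.hyperbolicR f) x y = f x y + (q - q⁻¹) * S.hyperbolicR f x y
      - (q - q⁻¹) * (q * (t * q)⁻¹ ^ 2) * pairing S.hyperbolicW f * S.hyperbolicW x y := by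
  rw [pairing_hyperbolicW]
  simp only [hyperbolicR_apply]
  rcases x with _ | _ | x <;> rcases y with _ | _ | y <;>
    simp only [hyperbolicRFun, R_sub, R_mul_left, pairing_sub, pairing_mul_left, hyperbolicW]
  all_goals try (field_simp; ring1)
  · rw [S.pairing_w_R]
    linear_combination (norm := (field_simp; ring1))
      ((q - q⁻¹) * t⁻¹ ^ 2 * f (some none) none) * S.pairing_w_w
  · rw [S.R_R, S.R_w]
    field_simp
    ring1

theorem hyperbolicR_hyperbolicW (hq : q ≠ 0) (ht : t ≠ 0) (x y : Option (Option S.I)) :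
    S.hyperbolicR S.hyperbolicW x y = q * (t * q)⁻¹ ^ 2 * S.hyperbolicW x y := by
  rw [hyperbolicR_apply]
  rcases x with _ | _ | x <;> rcases y with _ | _ | y <;> simp only [hyperbolicRFun, hyperbolicW]
  all_goals try (field_simp; done)
  all_goals try (field_simp; ring1)
  · linear_combination (norm := (field_simp; ring1)) (-t⁻¹) * S.pairing_w_w
  · rw [S.R_w]
    field_simp
    ring1

theorem pairing_hyperbolicW_hyperbolicW (hq : q ≠ 0) (ht : t ≠ 0) :
    (q - q⁻¹) * pairing S.hyperbolicW S.hyperbolicW =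
      (q - q⁻¹) + (t * q) ^ 2 * q⁻¹ - q * (t * q)⁻¹ ^ 2 := by
  rw [pairing_hyperbolicW]
  simp only [hyperbolicW]
  linear_combination (norm := (field_simp; ring1)) S.pairing_w_w

theorem cap₁₂_hyperbolicR_hyperbolicR (hq : q ≠ 0) (ht : t ≠ 0)
    (f : Option (Option S.I) → Option (Option S.I) → Option (Option S.I) → F) :
    cap₁₂ S.hyperbolicW (leg₂₃ S.hyperbolicR (leg₁₂ S.hyperbolicR f)) =
      cap₂₃ S.hyperbolicW f := by
  ext z
  simp only [cap₁₂_apply, cap₂₃_apply, pairing_hyperbolicW, leg₁₂_apply, leg₂₃_apply,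
    hyperbolicR_apply]
  rcases z with _ | _ | z <;>
    simp only [hyperbolicRFun, R_sub, R_mul_left, pairing_add, pairing_sub,
      pairing_mul_left]
  all_goals try (field_simp; done)
  · rw [S.pairing_w_R]
    linear_combination (norm := (field_simp; ring1))
      (-(q - q⁻¹) * t⁻¹ * f (some none) none none) * S.pairing_w_w
  · rw [S.pairing_R_R_apply fun x y z => f (some (some x)) (some (some y)) (some (some z)),
      S.pairing_zigzag_left, S.pairing_R_cup_apply]
    field_simp
    ring1

theorem pairing_option (f g : Option (Option S.I) → Option (Option S.I) → F) :
    pairing f g =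
      pairing (fun u v => f (some (some u)) (some (some v)))
          (fun u v => g (some (some u)) (some (some v)))
        + ∑ u, (f none (some (some u)) * g none (some (some u))
          + f (some (some u)) none * g (some (some u)) none
          + f (some none) (some (some u)) * g (some none) (some (some u))
          + f (some (some u)) (some none) * g (some (some u)) (some none))
        + (f none none * g none none + f none (some none) * g none (some none)
          + f (some none) none * g (some none) none
          + f (some none) (some none) * g (some none) (some none)) := by
  simp only [pairing, Fintype.sum_option, Finset.sum_add_distrib]
  ring

theorem pairing_hyperbolicR (f g : Option (Option S.I) → Option (Option S.I) → F) :
    pairing f (S.hyperbolicR g) = pairing (S.hyperbolicR f) g := by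
  simp only [pairing_option, hyperbolicR_apply, hyperbolicRFun, pairing_sub, pairing_mul_left]
  rw [S.pairing_R, pairing_comm (fun u v => S.R _ u v - _), pairing_sub, pairing_mul_left,
    pairing_mul_left, pairing_comm _ S.w, pairing_comm _ (S.R _)]
  have mixed (u : S.I) :
      f none (some (some u)) * g (some (some u)) none
        + f (some (some u)) none * (g none (some (some u)) + (q - q⁻¹) * g (some (some u)) none)
        + f (some none) (some (some u)) *
          (g (some (some u)) (some none) + (q - q⁻¹) * g (some none) (some (some u)))
        + f (some (some u)) (some none) * g (some none) (some (some u)) =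
      f (some (some u)) none * g none (some (some u))
        + (f none (some (some u)) + (q - q⁻¹) * f (some (some u)) none) * g (some (some u)) none
        + (f (some (some u)) (some none) + (q - q⁻¹) * f (some none) (some (some u))) *
          g (some none) (some (some u))
        + f (some none) (some (some u)) * g (some (some u)) (some none) := by
    ring
  rw [Finset.sum_congr rfl fun u _ => mixed u, pairing_comm _ S.w]
  ring

/-- The isotropic labels of the hyperbolic extension: the new highest weight comes first. -/
def hyperbolicIsotropic : Fin (k + 1) ↪ Option (Option S.I) where
  toFun := Fin.cons none fun i => some (some (S.a i))
  inj' i j := by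
    cases i using Fin.cases <;> cases j using Fin.cases <;> simp

theorem hyperbolicIsotropic_zero : S.hyperbolicIsotropic 0 = none := rfl

theorem hyperbolicIsotropic_succ (i : Fin k) :
    S.hyperbolicIsotropic i.succ = some (some (S.a i)) := rfl

theorem mem_range_hyperbolicIsotropic (x : Option (Option S.I)) :
    x ∈ Set.range S.hyperbolicIsotropic ↔ x = none ∨ ∃ u ∈ Set.range S.a, x = some (some u) := by
  simp [Fin.exists_fin_succ, hyperbolicIsotropic_zero, hyperbolicIsotropic_succ, eq_comm]

theorem hyperbolicW_isotropic (i j : Fin (k + 1)) :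
    S.hyperbolicW (S.hyperbolicIsotropic i) (S.hyperbolicIsotropic j) = 0 := by
  cases i using Fin.cases <;> cases j using Fin.cases <;>
    simp [hyperbolicIsotropic_zero, hyperbolicIsotropic_succ, hyperbolicW, S.w_isotropic]

theorem hyperbolicR_isotropic (f : Option (Option S.I) → Option (Option S.I) → F)
    (hf : ∀ x y, ¬ (x ∈ Set.range S.hyperbolicIsotropic ∧ y ∈ Set.range S.hyperbolicIsotropic) →
      f x y = 0) (x y : Option (Option S.I))
    (h : ¬ (x ∈ Set.range S.hyperbolicIsotropic ∧ y ∈ Set.range S.hyperbolicIsotropic)) :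
    S.hyperbolicR f x y = 0 := by
  simp only [mem_range_hyperbolicIsotropic] at hf h
  have left (y) : f (some none) y = 0 := hf _ _ (by simp)
  have right (x) : f x (some none) = 0 := hf _ _ (by simp)
  have old (u v : S.I) (huv : ¬ (u ∈ Set.range S.a ∧ v ∈ Set.range S.a)) :
      f (some (some u)) (some (some v)) = 0 :=
    hf _ _ (by simpa using huv)
  have first (u : S.I) (hu : u ∉ Set.range S.a) :
      f none (some (some u)) = 0 ∧ f (some (some u)) none = 0 :=
    ⟨hf _ _ (by simpa using hu), hf _ _ (by simpa using hu)⟩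
  rw [hyperbolicR_apply]
  rcases x with _ | _ | u <;> rcases y with _ | _ | v
  · simp at h
  · simp [hyperbolicRFun, left]
  · simp [hyperbolicRFun, first v (by simpa using h)]
  · simp [hyperbolicRFun, left, right, S.pairing_w_eq_zero old]
  · simp [hyperbolicRFun, left]
  · simp [hyperbolicRFun, left, right]
  · simp [hyperbolicRFun, first u (by simpa using h)]
  · simp [hyperbolicRFun, left]
  · simp [hyperbolicRFun, left, S.R_isotropic _ old u v (by simpa using h)]

theorem hyperbolicR_single (i j : Fin (k + 1)) (hij : i < j) (x y : Option (Option S.I)) :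
    S.hyperbolicR
        (fun x y => if x = S.hyperbolicIsotropic i ∧ y = S.hyperbolicIsotropic j then 1 else 0)
        x y =
      if x = S.hyperbolicIsotropic j ∧ y = S.hyperbolicIsotropic i then 1 else 0 := by
  rw [hyperbolicR_apply]
  cases j using Fin.cases with
  | zero => simp at hij
  | succ j =>
    cases i using Fin.cases with
    | zero =>
      rcases x with _ | _ | x <;> rcases y with _ | _ | y <;>
        simp [hyperbolicIsotropic_zero, hyperbolicIsotropic_succ, hyperbolicRFun, pairing, R_zero]
    | succ i =>
      have hw : pairing S.w (fun x y => if x = S.a i ∧ y = S.a j then 1 else 0) = 0 :=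
        S.pairing_w_eq_zero fun x y h => if_neg fun e => h ⟨⟨i, e.1.symm⟩, j, e.2.symm⟩
      rcases x with _ | _ | x <;> rcases y with _ | _ | y <;>
        simp [hyperbolicIsotropic_succ, hyperbolicRFun, hw, S.R_single i j (by simpa using hij)]

/-- The orthogonal sum of a quantum orthogonal space and a hyperbolic plane. -/
def hyperbolicExtension (hq : q ≠ 0) (ht : t ≠ 0) :
    QuantumOrthogonalSpace F q (t * q) (k + 1) where
  I := Option (Option S.I)
  R := S.hyperbolicR
  w := S.hyperbolicW
  a := S.hyperbolicIsotropic
  braid := S.hyperbolicR_braid hq ht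
  R_R := S.hyperbolicR_hyperbolicR hq ht
  R_w := S.hyperbolicR_hyperbolicW hq ht
  pairing_R := S.pairing_hyperbolicR
  pairing_w_w := S.pairing_hyperbolicW_hyperbolicW hq ht
  w_mul_w x y := by
    rcases x with _ | _ | x <;> rcases y with _ | _ | y <;>
      simp [hyperbolicW, Fintype.sum_option, S.w_mul_w, ht]
  cap₁₂_R_R := S.cap₁₂_hyperbolicR_hyperbolicR hq ht
  w_isotropic := S.hyperbolicW_isotropic
  R_isotropic := S.hyperbolicR_isotropic
  R_single := S.hyperbolicR_single

end QuantumOrthogonalSpace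

theorem exists_quantumOrthogonalSpace {F : Type*} [Field F] {q : F} (hq : q ≠ 0) (k : ℕ) :
    Nonempty (QuantumOrthogonalSpace F q (q ^ k) k) := by
  induction k with
  | zero => exact ⟨pow_zero q ▸ QuantumOrthogonalSpace.zero F q⟩
  | succ k ih =>
    obtain ⟨S⟩ := ih
    exact ⟨pow_succ q k ▸ S.hyperbolicExtension hq (pow_ne_zero k hq)⟩

/-! ### Consequences of the BMW relations -/

/-- The nondegeneracy conditions on the parameters of a BMW algebra, and the relation between
them. -/
structure IsBMWParameters {K : Type*} [Field K] (l m d : K) : Prop where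
  l_ne_zero : l ≠ 0
  m_ne_zero : m ≠ 0
  m_mul_l_add_one_ne_zero : m * l + 1 ≠ 0
  m_mul_one_sub : m * (1 - d) = l - l⁻¹

section Relations

variable {K A : Type*} [Field K] [Ring A] [Algebra K A] {l m d : K}

/-- The BMW relations of a single node. -/
structure IsBMWNode (l m d : K) (g e : A) : Prop where
  parameters : IsBMWParameters l m d
  quad : m • e = l • (g * g + m • g - 1)
  g_e : g * e = l⁻¹ • e

namespace IsBMWNode

variable {g e : A}

theorem g_g (H : IsBMWNode l m d g e) : g * g = 1 - m • g + (m * l⁻¹) • e := by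
  rw [mul_comm, mul_smul, H.quad, smul_smul, inv_mul_cancel₀ H.parameters.l_ne_zero]
  module

theorem e_eq (H : IsBMWNode l m d g e) : e = (l * m⁻¹) • (g * g + m • g - 1) := by
  rw [mul_comm, mul_smul, ← H.quad, smul_smul, inv_mul_cancel₀ H.parameters.m_ne_zero, one_smul]

theorem commute_e (H : IsBMWNode l m d g e) {x : A} (h : Commute x g) : Commute x e := by
  rw [H.e_eq]
  exact (((h.mul_right h).add_right (h.smul_right m)).sub_right (Commute.one_right x)).smul_right _

theorem e_g (H : IsBMWNode l m d g e) : e * g = l⁻¹ • e := by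
  rw [← H.g_e]
  exact (H.commute_e (Commute.refl g)).symm

theorem e_e (H : IsBMWNode l m d g e) : e * e = d • e := by
  have h : m • (e * e) = m • (d • e) := by
    have hd := H.parameters.m_mul_one_sub
    have hl := H.parameters.l_ne_zero
    have hm : l * (l⁻¹ * l⁻¹ + m * l⁻¹ - 1) = m * d := by
      field_simp at hd ⊢
      linear_combination hd
    rw [← smul_mul_assoc, H.quad, smul_mul_assoc, sub_mul, add_mul, mul_assoc, smul_mul_assoc,
      one_mul, H.g_e, mul_smul_comm, H.g_e, smul_smul, smul_smul, smul_smul, ← hm]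
    module
  exact smul_right_injective A H.parameters.m_ne_zero h

theorem g_mul_inv (H : IsBMWNode l m d g e) : g * (g + m • 1 - m • e) = 1 := by
  simp only [mul_add, mul_sub, mul_smul_comm, mul_one, H.g_g, H.g_e, smul_smul]
  abel

theorem inv_mul_g (H : IsBMWNode l m d g e) : (g + m • 1 - m • e) * g = 1 := by
  simp only [add_mul, sub_mul, smul_mul_assoc, one_mul, H.g_g, H.e_g, smul_smul]
  abel

theorem op (H : IsBMWNode l m d g e) :
    IsBMWNode l m d (MulOpposite.op g) (MulOpposite.op e) where
  parameters := H.parameters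
  quad := by
    rw [← MulOpposite.op_smul, H.quad]
    simp
  g_e := by rw [← MulOpposite.op_mul, H.e_g, MulOpposite.op_smul]

end IsBMWNode

/-- The BMW relations of two adjacent nodes. -/
structure IsBMWEdge (l m d : K) (g e h f : A) : Prop where
  left : IsBMWNode l m d g e
  right : IsBMWNode l m d h f
  braid : g * h * g = h * g * h
  e_h_e : e * h * e = l • e
  f_g_f : f * g * f = l • f

namespace IsBMWEdge

variable {g e h f : A}

theorem swap (H : IsBMWEdge l m d g e h f) : IsBMWEdge l m d h f g e :=
  ⟨H.right, H.left, H.braid.symm, H.f_g_f, H.e_h_e⟩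

theorem op (H : IsBMWEdge l m d g e h f) :
    IsBMWEdge l m d (MulOpposite.op g) (MulOpposite.op e) (MulOpposite.op h)
      (MulOpposite.op f) where
  left := H.left.op
  right := H.right.op
  braid := by simp only [← MulOpposite.op_mul, ← mul_assoc, H.braid]
  e_h_e := by simp only [← MulOpposite.op_mul, ← mul_assoc, H.e_h_e, MulOpposite.op_smul]
  f_g_f := by simp only [← MulOpposite.op_mul, ← mul_assoc, H.f_g_f, MulOpposite.op_smul]

theorem g_h_e_eq_f_g_h (H : IsBMWEdge l m d g e h f) : g * h * e = f * g * h := by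
  have slide : g * h * (g * g) = h * h * (g * h) :=
    calc g * h * (g * g) = g * h * g * g := (mul_assoc _ _ _).symm
      _ = h * g * h * g := by rw [H.braid]
      _ = h * (g * h * g) := by simp only [mul_assoc]
      _ = h * h * (g * h) := by rw [H.braid]; simp only [mul_assoc]
  rw [H.left.e_eq, H.right.e_eq]
  simp only [smul_mul_assoc, mul_smul_comm, mul_add, add_mul, mul_sub, sub_mul, mul_one, one_mul]
  rw [slide, H.braid]
  simp only [mul_assoc]

theorem h_g_f_e (H : IsBMWEdge l m d g e h f) : h * g * f * e = e := by
  rw [H.swap.g_h_e_eq_f_g_h, mul_assoc, H.left.g_e, mul_smul_comm, H.e_h_e, smul_smul,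
    inv_mul_cancel₀ H.left.parameters.l_ne_zero, one_smul]

theorem g_f_e (H : IsBMWEdge l m d g e h f) : g * f * e = (h + m • 1 - m • f) * e := by
  conv_rhs => rw [← H.h_g_f_e]
  simp only [← mul_assoc, H.right.inv_mul_g, one_mul]

theorem e_f_e (H : IsBMWEdge l m d g e h f) : e * f * e = e := by
  have hl := H.left.parameters.l_ne_zero
  have absorb : e * (g * f * e) = l⁻¹ • (e * f * e) := by
    simp only [← mul_assoc, H.left.e_g, smul_mul_assoc]
  rw [H.g_f_e] at absorb
  simp only [add_mul, sub_mul, mul_add, mul_sub, smul_mul_assoc, one_mul, mul_smul_comm,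
    ← mul_assoc, H.e_h_e, H.left.e_e] at absorb
  have scalar : l + m * d = l⁻¹ + m := by linear_combination -H.left.parameters.m_mul_one_sub
  have scalar_ne_zero : l⁻¹ + m ≠ 0 := fun h0 => H.left.parameters.m_mul_l_add_one_ne_zero <| by
    field_simp at h0
    linear_combination h0
  refine (smul_right_injective A scalar_ne_zero ?_).symm
  change (l⁻¹ + m) • e = (l⁻¹ + m) • (e * f * e)
  rw [← scalar, add_smul, scalar, add_smul, ← absorb]
  module

theorem g_h_e (H : IsBMWEdge l m d g e h f) : g * h * e = f * e := by
  have untwist : (g + m • 1 - m • e) * f * e = h * e := by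
    simp only [add_mul, sub_mul, smul_mul_assoc, one_mul, H.g_f_e, H.e_f_e]
    abel
  rw [mul_assoc, ← untwist]
  simp only [← mul_assoc, H.left.g_mul_inv, one_mul]

theorem e_f_g (H : IsBMWEdge l m d g e h f) : e * f * g = e * (h + m • 1 - m • f) := by
  simpa [mul_assoc] using congrArg MulOpposite.unop H.op.g_f_e

theorem h_e_h (H : IsBMWEdge l m d g e h f) :
    h * e * h = (g + m • 1 - m • e) * f * (g + m • 1 - m • e) := by
  have conj : g * (h * e * h) = f * (g + m • 1 - m • e) := by
    rw [← H.swap.e_f_g, ← H.g_h_e]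
    simp only [mul_assoc]
  rw [mul_assoc _ f, ← conj, ← mul_assoc, H.left.inv_mul_g, one_mul]

end IsBMWEdge

/-- The BMW relations of type `A_N` for the first `N` members of the sequences `g` and `e`. -/
structure IsBMWFamily (l m d : K) (N : ℕ) (g e : ℕ → A) : Prop where
  parameters : IsBMWParameters l m d
  comm : ∀ i j, i < N → j < N → i + 2 ≤ j → g i * g j = g j * g i
  braid : ∀ i, i + 1 < N → g i * g (i + 1) * g i = g (i + 1) * g i * g (i + 1)
  quad : ∀ i, i < N → m • e i = l • (g i * g i + m • g i - 1)
  g_e : ∀ i, i < N → g i * e i = l⁻¹ • e i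
  e_g_e : ∀ i, i + 1 < N → e i * g (i + 1) * e i = l • e i
  e_g_e' : ∀ i, i + 1 < N → e (i + 1) * g i * e (i + 1) = l • e (i + 1)

namespace IsBMWFamily

variable {N : ℕ} {g e : ℕ → A}

theorem mono (H : IsBMWFamily l m d N g e) {M : ℕ} (h : M ≤ N) : IsBMWFamily l m d M g e where
  parameters := H.parameters
  comm i j hi hj := H.comm i j (by lia) (by lia)
  braid i hi := H.braid i (by lia)
  quad i hi := H.quad i (by lia)
  g_e i hi := H.g_e i (by lia)
  e_g_e i hi := H.e_g_e i (by lia)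
  e_g_e' i hi := H.e_g_e' i (by lia)

theorem node (H : IsBMWFamily l m d N g e) {i : ℕ} (hi : i < N) : IsBMWNode l m d (g i) (e i) :=
  ⟨H.parameters, H.quad i hi, H.g_e i hi⟩

theorem edge (H : IsBMWFamily l m d N g e) {i : ℕ} (hi : i + 1 < N) :
    IsBMWEdge l m d (g i) (e i) (g (i + 1)) (e (i + 1)) :=
  ⟨H.node (by lia), H.node hi, H.braid i hi, H.e_g_e i hi, H.e_g_e' i hi⟩

theorem congr_right {e' : ℕ → A} (H : IsBMWFamily l m d N g e) (h : ∀ i < N, e i = e' i) :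
    IsBMWFamily l m d N g e' where
  parameters := H.parameters
  comm := H.comm
  braid := H.braid
  quad i hi := h i hi ▸ H.quad i hi
  g_e i hi := h i hi ▸ H.g_e i hi
  e_g_e i hi := h i (by lia) ▸ H.e_g_e i hi
  e_g_e' i hi := h (i + 1) hi ▸ H.e_g_e' i hi

theorem op (H : IsBMWFamily l m d N g e) :
    IsBMWFamily l m d N (fun i => MulOpposite.op (g i)) (fun i => MulOpposite.op (e i)) where
  parameters := H.parameters
  comm i j hi hj h := by simp only [← MulOpposite.op_mul, H.comm i j hi hj h]
  braid _ hi := (H.edge hi).op.braid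
  quad _ hi := (H.node hi).op.quad
  g_e _ hi := (H.node hi).op.g_e
  e_g_e _ hi := (H.edge hi).op.e_h_e
  e_g_e' _ hi := (H.edge hi).op.f_g_f

theorem map {C : Type*} [Ring C] [Algebra K C] (H : IsBMWFamily l m d N g e) (φ : A →ₐ[K] C) :
    IsBMWFamily l m d N (fun i => φ (g i)) (fun i => φ (e i)) where
  parameters := H.parameters
  comm i j hi hj h := by simp only [← map_mul, H.comm i j hi hj h]
  braid i hi := by simp only [← map_mul, H.braid i hi]
  quad i hi := by simpa only [map_smul, map_mul, map_add, map_sub, map_one]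
    using congrArg φ (H.quad i hi)
  g_e i hi := by simpa only [map_smul, map_mul] using congrArg φ (H.g_e i hi)
  e_g_e i hi := by simpa only [map_smul, map_mul] using congrArg φ (H.e_g_e i hi)
  e_g_e' i hi := by simpa only [map_smul, map_mul] using congrArg φ (H.e_g_e' i hi)

end IsBMWFamily

end Relations

section Filtration

variable {K A : Type*} [Field K] [Ring A] [Algebra K A]

/-- The subalgebra generated by the first `k` members of the sequence `g`. -/
def initialSubalgebra (K : Type*) [Field K] {A : Type*} [Ring A] [Algebra K A] (g : ℕ → A)
    (k : ℕ) : Subalgebra K A :=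
  Algebra.adjoin K (g '' Set.Iio k)

/-- The submodule underlying `initialSubalgebra K g k`; products of such submodules express the
factorizations of elements. -/
abbrev initialSubmodule (K : Type*) [Field K] {A : Type*} [Ring A] [Algebra K A] (g : ℕ → A)
    (k : ℕ) : Submodule K A :=
  Subalgebra.toSubmodule (initialSubalgebra K g k)

variable {g : ℕ → A} {k : ℕ}

theorem mem_initialSubalgebra (g : ℕ → A) {i : ℕ} (h : i < k) : g i ∈ initialSubalgebra K g k :=
  Algebra.subset_adjoin ⟨i, h, rfl⟩

theorem initialSubalgebra_mono (g : ℕ → A) {k' : ℕ} (h : k ≤ k') :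
    initialSubalgebra K g k ≤ initialSubalgebra K g k' :=
  Algebra.adjoin_mono (Set.image_mono (Set.Iio_subset_Iio h))

theorem initialSubmodule_zero : initialSubmodule K g 0 = 1 := by
  simp [initialSubmodule, initialSubalgebra, Algebra.toSubmodule_bot]

theorem one_le_initialSubmodule : 1 ≤ initialSubmodule K g k :=
  Submodule.one_le.2 (one_mem (initialSubalgebra K g k))

theorem initialSubmodule_mul_self :
    initialSubmodule K g k * initialSubmodule K g k = initialSubmodule K g k :=
  (initialSubalgebra K g k).isIdempotentElem_toSubmodule

theorem commute_of_mem_initialSubalgebra {x y : A} (h : ∀ i < k, Commute (g i) x)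
    (hy : y ∈ initialSubalgebra K g k) : Commute y x := by
  have hle : initialSubalgebra K g k ≤ Subalgebra.centralizer K {x} := by
    refine Algebra.adjoin_le ?_
    rintro _ ⟨i, hi, rfl⟩
    exact (Subalgebra.mem_centralizer_iff K).2 fun _ hx => hx ▸ (h i hi).symm
  exact ((Subalgebra.mem_centralizer_iff K).1 (hle hy) x rfl).symm

theorem initialSubmodule_mul_span_comm {S : Set A} (h : ∀ x ∈ S, ∀ i < k, Commute (g i) x) :
    initialSubmodule K g k * Submodule.span K S = Submodule.span K S * initialSubmodule K g k := by
  refine Submodule.mul_comm_of_commute fun y hy x hx => ?_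
  induction hx using Submodule.span_induction with
  | mem x hx => exact commute_of_mem_initialSubalgebra (h x hx) hy
  | zero => exact Commute.zero_right y
  | add _ _ _ _ hx hx' => exact hx.add_right hx'
  | smul c _ _ hx => exact hx.smul_right c

theorem initialSubmodule_le {M : Submodule K A} (one_mem : 1 ∈ M)
    (mul_mem : ∀ i < k, ∀ y ∈ M, g i * y ∈ M) : initialSubmodule K g k ≤ M := by
  suffices h : ∀ x ∈ initialSubalgebra K g k, ∀ y ∈ M, x * y ∈ M from
    fun x hx => mul_one x ▸ h x hx 1 one_mem
  intro x hx
  induction hx using Algebra.adjoin_induction with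
  | mem x hx =>
    obtain ⟨i, hi, rfl⟩ := hx
    exact mul_mem i hi
  | algebraMap r => exact fun y hy => Algebra.smul_def r y ▸ M.smul_mem r hy
  | add x x' _ _ hx hx' => exact fun y hy => add_mul x x' y ▸ M.add_mem (hx y hy) (hx' y hy)
  | mul x x' _ _ hx hx' => exact fun y hy => mul_assoc x x' y ▸ hx _ (hx' y hy)

/-- The span of `1`, `g` and `e`: the algebra generated by a single BMW node. -/
def nodeSpan (K : Type*) [Field K] {A : Type*} [Ring A] [Algebra K A] (g e : A) : Submodule K A :=
  Submodule.span K {1, g, e}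

theorem one_le_nodeSpan (g e : A) : 1 ≤ nodeSpan K g e :=
  Submodule.one_le.2 (Submodule.subset_span (by simp))

namespace IsBMWFamily

open Submodule

variable {l m d : K} {N : ℕ} {e : ℕ → A}

theorem e_mem (H : IsBMWFamily l m d N g e) {i : ℕ} (hi : i < k) (hN : i < N) :
    e i ∈ initialSubalgebra K g k := by
  have hg := mem_initialSubalgebra (K := K) g hi
  rw [(H.node hN).e_eq]
  exact Subalgebra.smul_mem _
    (sub_mem (add_mem (mul_mem hg hg) (Subalgebra.smul_mem _ hg _)) (one_mem _)) _

theorem inv_mem (H : IsBMWFamily l m d N g e) {i : ℕ} (hi : i < k) (hN : i < N) :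
    g i + m • 1 - m • e i ∈ initialSubalgebra K g k :=
  sub_mem (add_mem (mem_initialSubalgebra g hi) (Subalgebra.smul_mem _ (one_mem _) _))
    (Subalgebra.smul_mem _ (H.e_mem hi hN) _)

theorem initialSubmodule_mul_span_comm (H : IsBMWFamily l m d N g e) {j : ℕ} (hkj : k < j)
    (hj : j < N) {S : Set A} (hS : S ⊆ {1, g j, e j}) :
    initialSubmodule K g k * span K S = span K S * initialSubmodule K g k := by
  refine _root_.initialSubmodule_mul_span_comm fun x hx i hi => ?_
  have hg : Commute (g i) (g j) := H.comm i j (by lia) hj (by lia)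
  rcases hS hx with rfl | rfl | rfl
  exacts [Commute.one_right _, hg, (H.node hj).commute_e hg]

theorem span_g_mul_nodeSpan_le (H : IsBMWFamily l m d N g e) {i : ℕ} (hi : i < N) :
    span K {g i} * nodeSpan K (g i) (e i) ≤ nodeSpan K (g i) (e i) := by
  have one : (1 : A) ∈ nodeSpan K (g i) (e i) := subset_span (by simp)
  have hg : g i ∈ nodeSpan K (g i) (e i) := subset_span (by simp)
  have he : e i ∈ nodeSpan K (g i) (e i) := subset_span (by simp)
  rw [nodeSpan, span_mul_span, span_le]
  rintro _ ⟨_, rfl, _, rfl | rfl | rfl, rfl⟩ <;> dsimp only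
  · rwa [mul_one]
  · rw [(H.node hi).g_g]
    exact add_mem (sub_mem one (smul_mem _ _ hg)) (smul_mem _ _ he)
  · rw [H.g_e i hi]
    exact smul_mem _ _ he

theorem nodeSpan_mul_span_e_le (H : IsBMWFamily l m d N g e) {i : ℕ} (hi : i < N) :
    nodeSpan K (g i) (e i) * span K {e i} ≤ span K {e i} := by
  have he : e i ∈ span K {e i} := mem_span_singleton_self _
  rw [nodeSpan, span_mul_span, span_le]
  rintro _ ⟨_, rfl | rfl | rfl, _, rfl, rfl⟩ <;> dsimp only
  · rwa [one_mul]
  · rw [H.g_e i hi]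
    exact smul_mem _ _ he
  · rw [(H.node hi).e_e]
    exact smul_mem _ _ he

theorem span_g_mul_nodeSpan_mul_nodeSpan_le (H : IsBMWFamily l m d N g e) (hk : k + 1 < N) :
    span K {g (k + 1)} * nodeSpan K (g k) (e k) * nodeSpan K (g (k + 1)) (e (k + 1)) ≤
      initialSubmodule K g (k + 1) * nodeSpan K (g (k + 1)) (e (k + 1)) *
        initialSubmodule K g (k + 1) := by
  have E := H.edge hk
  have hg := mem_initialSubalgebra (K := K) g k.lt_succ_self
  have he := H.e_mem k.lt_succ_self (by lia)
  have hinv := H.inv_mem k.lt_succ_self (by lia)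
  have one := one_mem (initialSubalgebra K g (k + 1))
  have hg' : g (k + 1) ∈ nodeSpan K (g (k + 1)) (e (k + 1)) := subset_span (by simp)
  have he' : e (k + 1) ∈ nodeSpan K (g (k + 1)) (e (k + 1)) := subset_span (by simp)
  have factor {a x b : A} (ha : a ∈ initialSubalgebra K g (k + 1))
      (hx : x ∈ nodeSpan K (g (k + 1)) (e (k + 1))) (hb : b ∈ initialSubalgebra K g (k + 1)) :
      a * x * b ∈ initialSubmodule K g (k + 1) * nodeSpan K (g (k + 1)) (e (k + 1)) *
        initialSubmodule K g (k + 1) :=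
    mul_mem_mul (mul_mem_mul ha hx) hb
  have absorb {x : A} (hx : x ∈ nodeSpan K (g (k + 1)) (e (k + 1))) :
      g (k + 1) * x ∈ initialSubmodule K g (k + 1) * nodeSpan K (g (k + 1)) (e (k + 1)) *
        initialSubmodule K g (k + 1) := by
    have := H.span_g_mul_nodeSpan_le hk (mul_mem_mul (mem_span_singleton_self _) hx)
    simpa using factor one this one
  nth_rw 1 [nodeSpan]
  nth_rw 1 [nodeSpan]
  rw [span_mul_span, span_mul_span, span_le]
  rintro _ ⟨_, ⟨_, rfl, _, rfl | rfl | rfl, rfl⟩, y, hy, rfl⟩ <;> dsimp only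
  · rw [mul_one]
    exact absorb (subset_span hy)
  · rcases hy with rfl | rfl | rfl
    · simpa using factor one hg' hg
    · rw [← E.braid]
      exact factor hg hg' hg
    · rw [E.swap.g_h_e]
      simpa using factor he he' one
  · rcases hy with rfl | rfl | rfl
    · simpa using factor one hg' he
    · rw [E.h_e_h]
      exact factor hinv he' hinv
    · rw [E.swap.g_f_e]
      simpa using factor hinv he' one

theorem initialSubmodule_succ_le (H : IsBMWFamily l m d N g e) (hk : k < N) :
    initialSubmodule K g (k + 1) ≤
      initialSubmodule K g k * nodeSpan K (g k) (e k) * initialSubmodule K g k := by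
  induction k with
  | zero =>
    rw [initialSubmodule_zero, one_mul, mul_one]
    refine initialSubmodule_le (one_le.1 (one_le_nodeSpan _ _)) fun i hi y hy => ?_
    obtain rfl : i = 0 := by lia
    exact H.span_g_mul_nodeSpan_le hk (mul_mem_mul (mem_span_singleton_self _) hy)
  | succ k ih =>
    set B := initialSubmodule K g k
    set B' := initialSubmodule K g (k + 1)
    set X := nodeSpan K (g k) (e k)
    set X' := nodeSpan K (g (k + 1)) (e (k + 1))
    have le : B ≤ B' := initialSubalgebra_mono g k.le_succ
    have idem : B' * B' = B' := initialSubmodule_mul_self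
    have comm_X' : B * X' = X' * B := H.initialSubmodule_mul_span_comm k.lt_succ_self hk subset_rfl
    have comm_g' : span K {g (k + 1)} * B = B * span K {g (k + 1)} :=
      (H.initialSubmodule_mul_span_comm k.lt_succ_self hk (by simp)).symm
    have lower_mul : B' * (B' * X' * B') ≤ B' * X' * B' := by
      rw [← mul_assoc, ← mul_assoc, idem]
    have top_mul : span K {g (k + 1)} * (B' * X' * B') ≤ B' * X' * B' :=
      calc span K {g (k + 1)} * (B' * X' * B')
          ≤ span K {g (k + 1)} * (B * X * B * X' * B') := by gcongr; exact ih (by lia)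
        _ = span K {g (k + 1)} * B * X * (B * X') * B' := by simp only [mul_assoc]
        _ = B * (span K {g (k + 1)} * X * X') * B * B' := by
          rw [comm_X', comm_g']; simp only [mul_assoc]
        _ ≤ B' * (B' * X' * B') * B' * B' := by
          gcongr ?_ * ?_ * ?_ * _
          exact H.span_g_mul_nodeSpan_mul_nodeSpan_le hk
        _ = B' * B' * X' * (B' * B' * B') := by simp only [mul_assoc]
        _ = B' * X' * B' := by simp only [idem]
    refine initialSubmodule_le (one_le.1 ?_) fun i hi y hy => ?_
    · calc (1 : Submodule K A) = 1 * 1 * 1 := by simp only [mul_one]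
        _ ≤ B' * X' * B' := by
          gcongr
          exacts [one_le_initialSubmodule, one_le_nodeSpan _ _, one_le_initialSubmodule]
    · obtain hi | rfl := Nat.lt_succ_iff_lt_or_eq.1 hi
      · exact lower_mul (mul_mem_mul (mem_initialSubalgebra g hi) hy)
      · exact top_mul (mul_mem_mul (mem_span_singleton_self _) hy)

theorem initialSubmodule_fg (H : IsBMWFamily l m d N g e) (hk : k ≤ N) :
    (initialSubmodule K g k).FG := by
  induction k with
  | zero =>
    rw [initialSubmodule_zero, one_eq_span]
    exact fg_span_singleton 1
  | succ k ih =>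
    have hX : (nodeSpan K (g k) (e k)).FG := fg_span (by simp)
    have := Module.Finite.of_fg (((ih (by lia)).mul hX).mul (ih (by lia)))
    exact FG.of_le_of_isNoetherian (H.initialSubmodule_succ_le hk)

theorem nodeSpan_mul_nodeSpan_mul_span_e_le (H : IsBMWFamily l m d N g e) (hk : k + 1 < N) :
    nodeSpan K (g (k + 1)) (e (k + 1)) * nodeSpan K (g k) (e k) * span K {e (k + 1)} ≤
      initialSubmodule K g (k + 1) * span K {e (k + 1)} := by
  have E := H.edge hk
  have hg := mem_initialSubalgebra (K := K) g k.lt_succ_self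
  have he := H.e_mem k.lt_succ_self (by lia)
  have hinv := H.inv_mem k.lt_succ_self (by lia)
  have absorb {a : A} (ha : a ∈ initialSubalgebra K g (k + 1)) :
      a * e (k + 1) ∈ initialSubmodule K g (k + 1) * span K {e (k + 1)} :=
    mul_mem_mul ha (mem_span_singleton_self _)
  have one : e (k + 1) ∈ initialSubmodule K g (k + 1) * span K {e (k + 1)} := by
    simpa using absorb (one_mem _)
  rw [nodeSpan, nodeSpan, span_mul_span, span_mul_span, span_le]
  rintro _ ⟨_, ⟨_, rfl | rfl | rfl, y, hy, rfl⟩, _, rfl, rfl⟩ <;> dsimp only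
  · rw [one_mul]
    rcases hy with rfl | rfl | rfl
    exacts [absorb (one_mem _), absorb hg, absorb he]
  · rcases hy with rfl | rfl | rfl
    · rw [mul_one, E.right.g_e]
      exact smul_mem _ _ one
    · rw [E.swap.g_h_e]
      exact absorb he
    · rw [E.swap.g_f_e]
      exact absorb hinv
  · rcases hy with rfl | rfl | rfl
    · rw [mul_one, E.right.e_e]
      exact smul_mem _ _ one
    · rw [E.f_g_f]
      exact smul_mem _ _ one
    · rwa [E.swap.e_f_e]

theorem initialSubmodule_succ_mul_span_e_le (H : IsBMWFamily l m d N g e) {M : ℕ} (hM : M < N) :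
    initialSubmodule K g (M + 1) * span K {e M} ≤ initialSubmodule K g M * span K {e M} := by
  cases M with
  | zero =>
    have le := H.initialSubmodule_succ_le hM
    simp only [initialSubmodule_zero, one_mul, mul_one] at le ⊢
    calc _ ≤ nodeSpan K (g 0) (e 0) * span K {e 0} := by gcongr
      _ ≤ span K {e 0} := H.nodeSpan_mul_span_e_le hM
  | succ M =>
    set B := initialSubmodule K g M
    set B' := initialSubmodule K g (M + 1)
    set X := nodeSpan K (g M) (e M)
    set X' := nodeSpan K (g (M + 1)) (e (M + 1))
    set E' := span K {e (M + 1)}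
    have le : B ≤ B' := initialSubalgebra_mono g M.le_succ
    have comm_X' : X' * B = B * X' :=
      (H.initialSubmodule_mul_span_comm M.lt_succ_self hM subset_rfl).symm
    have comm_E' : B * E' = E' * B :=
      H.initialSubmodule_mul_span_comm M.lt_succ_self hM (by simp)
    calc initialSubmodule K g (M + 1 + 1) * E'
        ≤ B' * X' * B' * E' := by gcongr; exact H.initialSubmodule_succ_le hM
      _ ≤ B' * X' * (B * X * B) * E' := by gcongr; exact H.initialSubmodule_succ_le (by lia)
      _ = B' * (X' * B) * X * (B * E') := by simp only [mul_assoc]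
      _ = B' * B * (X' * X * E') * B := by rw [comm_X', comm_E']; simp only [mul_assoc]
      _ ≤ B' * B' * (B' * E') * B :=
        mul_le_mul' (mul_le_mul' (mul_le_mul' le_rfl le)
          (H.nodeSpan_mul_nodeSpan_mul_span_e_le hM)) le_rfl
      _ = B' * B' * B' * B * E' := by simp only [mul_assoc, comm_E']
      _ ≤ B' * B' * B' * B' * E' := mul_le_mul' (mul_le_mul' le_rfl le) le_rfl
      _ = B' * E' := by simp only [B', initialSubmodule_mul_self]

theorem span_e_mul_nodeSpan_mul_span_e_le (H : IsBMWFamily l m d N g e) (hk : k + 1 < N) :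
    span K {e (k + 1)} * nodeSpan K (g k) (e k) * span K {e (k + 1)} ≤ span K {e (k + 1)} := by
  have E := H.edge hk
  have he : e (k + 1) ∈ span K {e (k + 1)} := mem_span_singleton_self _
  rw [nodeSpan, span_mul_span, span_mul_span, span_le]
  rintro _ ⟨_, ⟨_, rfl, _, rfl | rfl | rfl, rfl⟩, _, rfl, rfl⟩ <;> dsimp only
  · rw [mul_one, E.right.e_e]
    exact smul_mem _ _ he
  · rw [E.f_g_f]
    exact smul_mem _ _ he
  · rwa [E.swap.e_f_e]

theorem span_e_mul_initialSubmodule_succ_mul_span_e_le (H : IsBMWFamily l m d N g e) {M : ℕ}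
    (hM : M < N) :
    span K {e M} * initialSubmodule K g (M + 1) * span K {e M} ≤
      initialSubmodule K g (M - 1) * span K {e M} := by
  have lower : span K {e M} * initialSubmodule K g (M + 1) * span K {e M} ≤
      span K {e M} * initialSubmodule K g M * span K {e M} := by
    simpa only [mul_assoc] using mul_le_mul' le_rfl (H.initialSubmodule_succ_mul_span_e_le hM)
  refine lower.trans ?_
  cases M with
  | zero =>
    simp only [initialSubmodule_zero, one_mul, mul_one, Nat.zero_sub]
    refine le_trans ?_ (H.nodeSpan_mul_span_e_le hM)
    gcongr
    exact span_mono (by simp)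
  | succ M =>
    set B := initialSubmodule K g M
    set E' := span K {e (M + 1)}
    set X := nodeSpan K (g M) (e M)
    have comm_E' : B * E' = E' * B :=
      H.initialSubmodule_mul_span_comm M.lt_succ_self hM (by simp)
    calc E' * initialSubmodule K g (M + 1) * E'
        ≤ E' * (B * X * B) * E' := by gcongr; exact H.initialSubmodule_succ_le (by lia)
      _ = E' * B * X * (B * E') := by simp only [mul_assoc]
      _ = B * E' * X * (E' * B) := by rw [← comm_E']
      _ = B * (E' * X * E') * B := by simp only [mul_assoc]
      _ ≤ B * E' * B := by
        gcongr
        exact H.span_e_mul_nodeSpan_mul_span_e_le hM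
      _ = B * E' := by rw [mul_assoc, ← comm_E', ← mul_assoc, initialSubmodule_mul_self]

theorem exists_mul_e_eq (H : IsBMWFamily l m d N g e) {M : ℕ} (hM : M < N) {x : A}
    (hx : x ∈ initialSubalgebra K g (M + 1)) :
    ∃ y ∈ initialSubalgebra K g M, y * e M = x * e M :=
  mem_mul_span_singleton.1 <| H.initialSubmodule_succ_mul_span_e_le hM <|
    mul_mem_mul hx (mem_span_singleton_self _)

theorem exists_mul_e_eq_e_mul_mul_e (H : IsBMWFamily l m d N g e) {M : ℕ} (hM : M < N) {x : A}
    (hx : x ∈ initialSubalgebra K g (M + 1)) :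
    ∃ y ∈ initialSubalgebra K g (M - 1), y * e M = e M * x * e M :=
  mem_mul_span_singleton.1 <| H.span_e_mul_initialSubmodule_succ_mul_span_e_le hM <|
    mul_mem_mul (mul_mem_mul (mem_span_singleton_self _) hx) (mem_span_singleton_self _)

end IsBMWFamily

end Filtration

/-! ### BMW and Hecke algebras of type A -/

section Parameters

theorem one_sub_deltaVar_ne_zero : 1 - deltaVar ≠ 0 := by
  refine sub_ne_zero.2 fun h => ?_
  have h' : (1 : RatFunc ℚ) = RatFunc.X :=
    (RatFunc.C (K := RatFunc ℚ)).injective (by rw [map_one]; exact h)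
  have h'' : algebraMap (Polynomial ℚ) (RatFunc ℚ) 1 =
      algebraMap (Polynomial ℚ) (RatFunc ℚ) Polynomial.X := by simpa using h'
  have h''' : (1 : Polynomial ℚ) = Polynomial.X := RatFunc.algebraMap_injective ℚ h''
  simpa using congrArg (Polynomial.eval 0) h'''

theorem lVar_sq_ne_C (c : RatFunc ℚ) : lVar ^ 2 ≠ RatFunc.C c := by
  intro h
  have h' : algebraMap (Polynomial (RatFunc ℚ)) BMWField (Polynomial.X ^ 2) =
      algebraMap _ _ (Polynomial.C c) := by simpa [lVar] using h
  simpa using congrArg Polynomial.natDegree (RatFunc.algebraMap_injective _ h')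

theorem deltaVar_ne_zero : deltaVar ≠ 0 := by
  simp [deltaVar, RatFunc.X_ne_zero]

theorem isBMWParameters_bmwField : IsBMWParameters lVar mVar deltaVar where
  l_ne_zero := RatFunc.X_ne_zero
  m_ne_zero := by
    have hl : lVar ≠ 0 := RatFunc.X_ne_zero
    refine div_ne_zero (fun h => lVar_sq_ne_C 1 ?_) one_sub_deltaVar_ne_zero
    rw [map_one]
    field_simp at h
    linear_combination h
  m_mul_l_add_one_ne_zero h := by
    have hl : lVar ≠ 0 := RatFunc.X_ne_zero
    have hd := one_sub_deltaVar_ne_zero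
    refine lVar_sq_ne_C RatFunc.X ?_
    change _ = deltaVar
    rw [mVar] at h
    field_simp at h
    linear_combination h
  m_mul_one_sub := div_mul_cancel₀ _ one_sub_deltaVar_ne_zero

end Parameters

section Generators

theorem subalgebra_ringQuot_eq_top {K X : Type*} [Field K]
    {r : FreeAlgebra K X → FreeAlgebra K X → Prop}
    {S : Subalgebra K (RingQuot r)} (h : ∀ x, RingQuot.mkAlgHom K r (ι K x) ∈ S) : S = ⊤ := by
  rw [eq_top_iff, ← (AlgHom.range_eq_top _).2 (RingQuot.mkAlgHom_surjective K r),
    ← Algebra.map_top, ← FreeAlgebra.adjoin_range_ι, AlgHom.map_adjoin]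
  refine Algebra.adjoin_le ?_
  rintro _ ⟨_, ⟨x, rfl⟩, rfl⟩
  exact h x

theorem typeA_adj {N : ℕ} {i j : Fin N} :
    (typeA N).Adj i j ↔ (i : ℕ) + 1 = j ∨ (j : ℕ) + 1 = i := by
  rw [typeA, SimpleGraph.fromRel_adj, and_iff_right_iff_imp]
  rintro h rfl
  lia

/-- The BMW algebra of type `A_N`. -/
abbrev BMWTypeA (N : ℕ) : Type := BMWAlgebra N (typeA N)

/-- The Hecke algebra of type `A_N`, that is, of the symmetric group on `N + 1` letters. -/
abbrev HeckeTypeA (N : ℕ) : Type := RingQuot (HeckeRel N)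

namespace BMWTypeA

/-- The generator `g_{i+1}`; the junk value is `0` for `N ≤ i`. -/
noncomputable def g (N i : ℕ) : BMWTypeA N :=
  if h : i < N then RingQuot.mkAlgHom BMWField _ (ι BMWField (.inl ⟨i, h⟩)) else 0

/-- The generator `e_{i+1}`; the junk value is `0` for `N ≤ i`. -/
noncomputable def e (N i : ℕ) : BMWTypeA N :=
  if h : i < N then RingQuot.mkAlgHom BMWField _ (ι BMWField (.inr ⟨i, h⟩)) else 0

theorem isBMWFamily (N : ℕ) : IsBMWFamily lVar mVar deltaVar N (g N) (e N) where
  parameters := isBMWParameters_bmwField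
  comm i j hi hj hij := by
    simpa [g, hi, hj] using RingQuot.mkAlgHom_rel BMWField
      (BMWRel.gg (Q := typeA N) ⟨i, hi⟩ ⟨j, hj⟩ (by simp; lia) (by simp [typeA_adj]; lia))
  braid i hi := by
    have h : i < N := by lia
    simpa [g, hi, h] using RingQuot.mkAlgHom_rel BMWField
      (BMWRel.braid (Q := typeA N) ⟨i, h⟩ ⟨i + 1, hi⟩ (by simp [typeA_adj]))
  quad i hi := by
    simpa only [g, e, hi, dif_pos, map_smul, map_add, map_sub, map_mul, map_one] using
      RingQuot.mkAlgHom_rel BMWField (BMWRel.quad (Q := typeA N) ⟨i, hi⟩)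
  g_e i hi := by
    simpa only [g, e, hi, dif_pos, map_smul, map_mul] using
      RingQuot.mkAlgHom_rel BMWField (BMWRel.ge (Q := typeA N) ⟨i, hi⟩)
  e_g_e i hi := by
    have h : i < N := by lia
    simpa only [g, e, hi, h, dif_pos, map_smul, map_mul] using RingQuot.mkAlgHom_rel BMWField
      (BMWRel.ege (Q := typeA N) ⟨i, h⟩ ⟨i + 1, hi⟩ (by simp [typeA_adj]))
  e_g_e' i hi := by
    have h : i < N := by lia
    simpa only [g, e, hi, h, dif_pos, map_smul, map_mul] using RingQuot.mkAlgHom_rel BMWField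
      (BMWRel.ege (Q := typeA N) ⟨i + 1, hi⟩ ⟨i, h⟩ (by simp [typeA_adj]))

theorem initialSubalgebra_eq_top (N : ℕ) : initialSubalgebra BMWField (g N) N = ⊤ := by
  refine subalgebra_ringQuot_eq_top ?_
  rintro (i | i)
  · simpa [g] using mem_initialSubalgebra (K := BMWField) (g N) i.2
  · simpa [e] using (isBMWFamily N).e_mem i.2 i.2

end BMWTypeA

namespace HeckeTypeA

/-- The generator `T_{i+1}`; the junk value is `0` for `N ≤ i`. -/
noncomputable def T (N i : ℕ) : HeckeTypeA N :=
  if h : i < N then RingQuot.mkAlgHom BMWField _ (ι BMWField ⟨i, h⟩) else 0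

theorem isBMWFamily (N : ℕ) : IsBMWFamily lVar mVar deltaVar N (T N) 0 where
  parameters := isBMWParameters_bmwField
  comm i j hi hj hij := by
    simpa [T, hi, hj] using
      RingQuot.mkAlgHom_rel BMWField (HeckeRel.comm (N := N) ⟨i, hi⟩ ⟨j, hj⟩ (.inl hij))
  braid i hi := by
    have h : i < N := by lia
    simpa [T, hi, h] using
      RingQuot.mkAlgHom_rel BMWField (HeckeRel.braid (N := N) ⟨i, h⟩ ⟨i + 1, hi⟩ rfl)
  quad i hi := by
    have h := RingQuot.mkAlgHom_rel BMWField (HeckeRel.quad (N := N) ⟨i, hi⟩)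
    simp only [map_smul, map_sub, map_mul, map_one] at h
    simp [T, hi, h]
  g_e := by simp
  e_g_e := by simp
  e_g_e' := by simp

theorem initialSubalgebra_eq_top (N : ℕ) : initialSubalgebra BMWField (T N) N = ⊤ :=
  subalgebra_ringQuot_eq_top fun i => by
    simpa [T] using mem_initialSubalgebra (K := BMWField) (T N) i.2

end HeckeTypeA

end Generators

section Lift

variable {A : Type*} [Ring A] [Algebra BMWField A] {N : ℕ} {g e : ℕ → A}

theorem IsBMWFamily.lift_eq_of_bmwRel (H : IsBMWFamily lVar mVar deltaVar N g e)
    {x y : FreeAlgebra BMWField (Fin N ⊕ Fin N)} (h : BMWRel N (typeA N) x y) :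
    FreeAlgebra.lift BMWField (Sum.elim (fun i : Fin N => g i) (fun i : Fin N => e i)) x =
      FreeAlgebra.lift BMWField (Sum.elim (fun i : Fin N => g i) (fun i : Fin N => e i)) y := by
  induction h with
  | gg i j hne hadj =>
    rw [typeA_adj] at hadj
    simp only [map_mul, FreeAlgebra.lift_ι_apply, Sum.elim_inl]
    rcases lt_or_gt_of_ne (Fin.val_ne_iff.2 hne) with h | h
    · exact H.comm i j i.2 j.2 (by lia)
    · exact (H.comm j i j.2 i.2 (by lia)).symm
  | braid i j hadj =>
    simp only [map_mul, FreeAlgebra.lift_ι_apply, Sum.elim_inl]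
    rcases typeA_adj.1 hadj with h | h <;> rw [← h]
    · exact H.braid i (by lia)
    · exact (H.braid j (by lia)).symm
  | quad i =>
    simp only [map_mul, map_smul, map_add, map_sub, map_one, FreeAlgebra.lift_ι_apply,
      Sum.elim_inl, Sum.elim_inr, H.quad i i.2]
  | ge i =>
    simp only [map_mul, map_smul, FreeAlgebra.lift_ι_apply, Sum.elim_inl, Sum.elim_inr,
      H.g_e i i.2]
  | ege i j hadj =>
    simp only [map_mul, map_smul, FreeAlgebra.lift_ι_apply, Sum.elim_inl, Sum.elim_inr]
    rcases typeA_adj.1 hadj with h | h <;> rw [← h]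
    · exact H.e_g_e i (by lia)
    · exact H.e_g_e' j (by lia)

theorem IsBMWFamily.lift_eq_of_heckeRel (H : IsBMWFamily lVar mVar deltaVar N g 0)
    {x y : FreeAlgebra BMWField (Fin N)} (h : HeckeRel N x y) :
    FreeAlgebra.lift BMWField (fun i : Fin N => g i) x =
      FreeAlgebra.lift BMWField (fun i : Fin N => g i) y := by
  induction h with
  | comm i j h =>
    simp only [map_mul, FreeAlgebra.lift_ι_apply]
    rcases h with h | h
    · exact H.comm i j i.2 j.2 h
    · exact (H.comm j i j.2 i.2 h).symm
  | braid i j h =>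
    simp only [map_mul, FreeAlgebra.lift_ι_apply]
    rw [← h]
    exact H.braid i (by lia)
  | quad i =>
    simp only [map_mul, map_smul, map_sub, map_one, FreeAlgebra.lift_ι_apply, (H.node i.2).g_g,
      Pi.zero_apply, smul_zero, add_zero]

/-- The universal property of the BMW algebra of type `A_N`. -/
noncomputable def BMWTypeA.lift (H : IsBMWFamily lVar mVar deltaVar N g e) :
    BMWTypeA N →ₐ[BMWField] A :=
  RingQuot.liftAlgHom BMWField ⟨FreeAlgebra.lift BMWField _, fun _ _ => H.lift_eq_of_bmwRel⟩

theorem BMWTypeA.lift_g (H : IsBMWFamily lVar mVar deltaVar N g e) {i : ℕ} (hi : i < N) :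
    lift H (BMWTypeA.g N i) = g i := by
  simp [lift, BMWTypeA.g, hi]

theorem BMWTypeA.lift_e (H : IsBMWFamily lVar mVar deltaVar N g e) {i : ℕ} (hi : i < N) :
    lift H (BMWTypeA.e N i) = e i := by
  simp [lift, BMWTypeA.e, hi]

/-- The universal property of the Hecke algebra of type `A_N`, among families with `e = 0`. -/
noncomputable def HeckeTypeA.lift (H : IsBMWFamily lVar mVar deltaVar N g 0) :
    HeckeTypeA N →ₐ[BMWField] A :=
  RingQuot.liftAlgHom BMWField ⟨FreeAlgebra.lift BMWField _, fun _ _ => H.lift_eq_of_heckeRel⟩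

theorem HeckeTypeA.lift_T (H : IsBMWFamily lVar mVar deltaVar N g 0) {i : ℕ} (hi : i < N) :
    lift H (HeckeTypeA.T N i) = g i := by
  simp [lift, HeckeTypeA.T, hi]

end Lift

section TwoSidedSpan

variable {A : Type*} [Ring A] {e : A}

theorem mul_mul_mem_span_singleton (a b : A) : a * e * b ∈ TwoSidedIdeal.span {e} :=
  TwoSidedIdeal.mul_mem_right _ _ _
    (TwoSidedIdeal.mul_mem_left _ _ _ (TwoSidedIdeal.subset_span rfl))

theorem mem_span_singleton_induction {p : A → Prop} (zero : p 0)
    (add : ∀ x y, p x → p y → p (x + y)) (mul_mul : ∀ a b, p (a * e * b)) {x : A}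
    (hx : x ∈ TwoSidedIdeal.span {e}) : p x := by
  have h : ∀ a b, p (a * x * b) := by
    induction hx using TwoSidedIdeal.span_induction with
    | mem x hx =>
      obtain rfl := hx
      exact mul_mul
    | zero => simpa using zero
    | add x y _ _ hx hy =>
      exact fun a b => by simpa [mul_add, add_mul] using add _ _ (hx a b) (hy a b)
    | neg x _ hx => exact fun a b => by simpa using hx (-a) b
    | left_absorb c x _ hx => exact fun a b => by simpa [mul_assoc] using hx (a * c) b
    | right_absorb c x _ hx => exact fun a b => by simpa [mul_assoc] using hx a (c * b)
  simpa using h 1 1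

end TwoSidedSpan

namespace BMWTypeA

theorem algHom_ext {A : Type*} [Ring A] [Algebra BMWField A] {N : ℕ}
    {φ ψ : BMWTypeA N →ₐ[BMWField] A} (h : ∀ i < N, φ (g N i) = ψ (g N i)) : φ = ψ := by
  refine AlgHom.ext_of_adjoin_eq_top (initialSubalgebra_eq_top N) ?_
  rintro _ ⟨i, hi, rfl⟩
  exact h i hi

instance (N : ℕ) : Module.Finite BMWField (BMWTypeA N) where
  fg_top := by
    rw [← Algebra.top_toSubmodule, ← initialSubalgebra_eq_top]
    exact (isBMWFamily N).initialSubmodule_fg le_rfl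

/-- The homomorphism sending each generator to the generator of the same name. -/
noncomputable def inclusion {M N : ℕ} (h : M ≤ N) : BMWTypeA M →ₐ[BMWField] BMWTypeA N :=
  lift ((isBMWFamily N).mono h)

theorem inclusion_g {M N i : ℕ} (h : M ≤ N) (hi : i < M) : inclusion h (g M i) = g N i :=
  lift_g _ hi

theorem range_inclusion {M N : ℕ} (h : M ≤ N) :
    (inclusion h).range = initialSubalgebra BMWField (g N) M := by
  rw [← Algebra.map_top, ← initialSubalgebra_eq_top, initialSubalgebra, AlgHom.map_adjoin,
    ← Set.image_comp, initialSubalgebra]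
  exact congrArg _ (Set.image_congr fun i hi => inclusion_g h hi)

/-- The anti-involution fixing the generators. -/
noncomputable def reverse {N : ℕ} : BMWTypeA N →ₗ[BMWField] BMWTypeA N :=
  (MulOpposite.opLinearEquiv BMWField).symm.toLinearMap ∘ₗ (lift (isBMWFamily N).op).toLinearMap

section Reverse

variable {N : ℕ}

theorem reverse_apply (x : BMWTypeA N) : reverse x = (lift (isBMWFamily N).op x).unop := rfl

theorem reverse_mul (x y : BMWTypeA N) : reverse (x * y) = reverse y * reverse x := by
  simp [reverse_apply]

theorem reverse_algebraMap (c : BMWField) :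
    reverse (algebraMap BMWField (BMWTypeA N) c) = algebraMap _ _ c := by
  rw [reverse_apply, AlgHom.commutes]
  rfl

theorem reverse_g {i : ℕ} (hi : i < N) : reverse (g N i) = g N i := by
  rw [reverse_apply, lift_g _ hi, MulOpposite.unop_op]

theorem reverse_e {i : ℕ} (hi : i < N) : reverse (e N i) = e N i := by
  rw [reverse_apply, lift_e _ hi, MulOpposite.unop_op]

@[elab_as_elim]
theorem induction {p : BMWTypeA N → Prop} (g : ∀ i < N, p (g N i))
    (algebraMap : ∀ c, p (algebraMap BMWField _ c)) (add : ∀ x y, p x → p y → p (x + y))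
    (mul : ∀ x y, p x → p y → p (x * y)) (x : BMWTypeA N) : p x := by
  have hx : x ∈ initialSubalgebra BMWField (BMWTypeA.g N) N :=
    initialSubalgebra_eq_top N ▸ Algebra.mem_top
  induction hx using Algebra.adjoin_induction with
  | mem x hx =>
    obtain ⟨i, hi, rfl⟩ := hx
    exact g i hi
  | algebraMap r => exact algebraMap r
  | add x y _ _ hx hy => exact add x y hx hy
  | mul x y _ _ hx hy => exact mul x y hx hy

theorem reverse_reverse (x : BMWTypeA N) : reverse (reverse x) = x := by
  induction x using BMWTypeA.induction with
  | g i hi => rw [reverse_g hi, reverse_g hi]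
  | algebraMap c => rw [reverse_algebraMap, reverse_algebraMap]
  | add x y hx hy => rw [map_add, map_add, hx, hy]
  | mul x y hx hy => rw [reverse_mul, reverse_mul, hx, hy]

end Reverse

theorem exists_eq_algebraMap (x : BMWTypeA 0) : ∃ c, algebraMap BMWField _ c = x := by
  refine Algebra.mem_bot.1 ?_
  have : initialSubalgebra BMWField (g 0) 0 = ⊥ := by simp [initialSubalgebra]
  rw [← this, initialSubalgebra_eq_top]
  exact Algebra.mem_top

/-- The projection killing every `e_i`. -/
noncomputable def toHecke (N : ℕ) : BMWTypeA N →ₐ[BMWField] HeckeTypeA N :=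
  lift (HeckeTypeA.isBMWFamily N)

theorem toHecke_g {N i : ℕ} (hi : i < N) : toHecke N (g N i) = HeckeTypeA.T N i :=
  lift_g _ hi

theorem toHecke_surjective (N : ℕ) : Function.Surjective (toHecke N) := by
  rw [← AlgHom.range_eq_top, ← top_le_iff, ← HeckeTypeA.initialSubalgebra_eq_top]
  refine Algebra.adjoin_le ?_
  rintro _ ⟨i, hi, rfl⟩
  exact ⟨g N i, toHecke_g hi⟩

theorem e_mem_span_e {M i : ℕ} (hi : i ≤ M) :
    e (M + 1) i ∈ TwoSidedIdeal.span {e (M + 1) M} := by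
  induction hi using Nat.decreasingInduction with
  | self => exact TwoSidedIdeal.subset_span rfl
  | of_succ k hk ih =>
    rw [← ((isBMWFamily (M + 1)).edge (i := k) (by lia)).e_f_e]
    exact TwoSidedIdeal.mul_mem_right _ _ _ (TwoSidedIdeal.mul_mem_left _ _ _ ih)

theorem ker_toHecke (M : ℕ) :
    TwoSidedIdeal.ker (toHecke (M + 1)) = TwoSidedIdeal.span {e (M + 1) M} := by
  apply le_antisymm
  · intro x hx
    set c := (TwoSidedIdeal.span {e (M + 1) M}).ringCon
    let q : BMWTypeA (M + 1) →ₐ[BMWField] c.Quotient := c.mkₐ (α := BMWField)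
    have q_eq_zero {y : BMWTypeA (M + 1)} : q y = 0 ↔ y ∈ TwoSidedIdeal.span {e (M + 1) M} := by
      rw [← TwoSidedIdeal.ker_ringCon_mk' (TwoSidedIdeal.span {e (M + 1) M})]
      exact (TwoSidedIdeal.mem_ker _).symm
    have family : IsBMWFamily lVar mVar deltaVar (M + 1) (fun i => q (g (M + 1) i)) 0 :=
      ((isBMWFamily (M + 1)).map q).congr_right fun i hi =>
        q_eq_zero.2 (e_mem_span_e (Nat.lt_succ_iff.1 hi))
    have factor : (HeckeTypeA.lift family).comp (toHecke (M + 1)) = q :=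
      algHom_ext fun i hi => by
        rw [AlgHom.comp_apply, toHecke_g hi, HeckeTypeA.lift_T _ hi]
    rw [TwoSidedIdeal.mem_ker] at hx
    rw [← q_eq_zero, ← factor, AlgHom.comp_apply, hx, map_zero]
  · rw [TwoSidedIdeal.span_le, Set.singleton_subset_iff]
    exact (TwoSidedIdeal.mem_ker _).2 (lift_e _ M.lt_succ_self)

end BMWTypeA

/-! ### Normal words of the symmetric group -/

section NormalWord

/-- Index set of the normal form words of the symmetric group on `N + 1` letters: a Lehmer code. -/
def LehmerCode : ℕ → Type
  | 0 => Unit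
  | N + 1 => Fin (N + 2) × LehmerCode N

instance LehmerCode.fintype : (N : ℕ) → Fintype (LehmerCode N)
  | 0 => inferInstanceAs (Fintype Unit)
  | N + 1 =>
    haveI := LehmerCode.fintype N
    inferInstanceAs (Fintype (Fin (N + 2) × LehmerCode N))

/-- The product `g j * g (j + 1) * ⋯ * g (j + n - 1)`. -/
def ascendingProd {A : Type*} [Monoid A] (g : ℕ → A) : ℕ → ℕ → A
  | _, 0 => 1
  | j, n + 1 => g j * ascendingProd g (j + 1) n

/-- The normal form word in `g 0, …, g (N - 1)` with a given Lehmer code: a product of ascending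
runs ending in `g (N - 1), …, g 1, g 0`. -/
def normalWord {A : Type*} [Monoid A] (g : ℕ → A) : (N : ℕ) → LehmerCode N → A
  | 0, _ => 1
  | N + 1, (j, d) => ascendingProd g j (N + 1 - j) * normalWord g N d

section Monoid

variable {A C : Type*} [Monoid A] [Monoid C]

theorem map_ascendingProd (φ : A →* C) (g : ℕ → A) (j n : ℕ) :
    φ (ascendingProd g j n) = ascendingProd (fun i => φ (g i)) j n := by
  induction n generalizing j with
  | zero => exact map_one φ
  | succ n ih => rw [ascendingProd, map_mul, ih, ascendingProd]

theorem map_normalWord (φ : A →* C) (g : ℕ → A) (N : ℕ) (d : LehmerCode N) :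
    φ (normalWord g N d) = normalWord (fun i => φ (g i)) N d := by
  induction N with
  | zero => exact map_one φ
  | succ N ih =>
    obtain ⟨j, d⟩ := d
    rw [normalWord, map_mul, ih, map_ascendingProd, normalWord]

theorem ascendingProd_congr {g g' : ℕ → A} {j n : ℕ} (h : ∀ i < j + n, g i = g' i) :
    ascendingProd g j n = ascendingProd g' j n := by
  induction n generalizing j with
  | zero => rfl
  | succ n ih =>
    rw [ascendingProd, ascendingProd, h j (by lia), ih fun i hi => h i (by lia)]

theorem normalWord_congr {g g' : ℕ → A} {N : ℕ} (h : ∀ i < N, g i = g' i) (d : LehmerCode N) :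
    normalWord g N d = normalWord g' N d := by
  induction N with
  | zero => rfl
  | succ N ih =>
    obtain ⟨j, d⟩ := d
    rw [normalWord, normalWord, ih (fun i hi => h i (by lia)),
      ascendingProd_congr fun i hi => h i (by lia)]

end Monoid

section AdjacentSwaps

/-- The transposition of `i` and `i + 1`. -/
def adjacentSwap (i : ℕ) : Equiv.Perm ℕ := Equiv.swap i (i + 1)

theorem adjacentSwap_apply_of_ne {i p : ℕ} (h : p ≠ i) (h' : p ≠ i + 1) : adjacentSwap i p = p :=
  Equiv.swap_apply_of_ne_of_ne h h'

theorem ascendingProd_adjacentSwap_apply_of_lt {j p : ℕ} (h : p < j) (n : ℕ) :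
    ascendingProd adjacentSwap j n p = p := by
  induction n generalizing j with
  | zero => rfl
  | succ n ih =>
    rw [ascendingProd, Equiv.Perm.mul_apply, ih (by lia),
      adjacentSwap_apply_of_ne (by lia) (by lia)]

theorem ascendingProd_adjacentSwap_apply_of_gt {j n p : ℕ} (h : j + n < p) :
    ascendingProd adjacentSwap j n p = p := by
  induction n generalizing j with
  | zero => rfl
  | succ n ih =>
    rw [ascendingProd, Equiv.Perm.mul_apply, ih (by lia),
      adjacentSwap_apply_of_ne (by lia) (by lia)]

theorem ascendingProd_adjacentSwap_apply_add (j n : ℕ) :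
    ascendingProd adjacentSwap j n (j + n) = j := by
  induction n generalizing j with
  | zero => rfl
  | succ n ih =>
    rw [ascendingProd, Equiv.Perm.mul_apply, ← add_assoc, add_right_comm, ih, adjacentSwap,
      Equiv.swap_apply_right]

theorem normalWord_adjacentSwap_apply_of_lt {N p : ℕ} (d : LehmerCode N) (h : N < p) :
    normalWord adjacentSwap N d p = p := by
  induction N with
  | zero => rfl
  | succ N ih =>
    obtain ⟨j, d⟩ := d
    rw [normalWord, Equiv.Perm.mul_apply, ih _ (by lia),
      ascendingProd_adjacentSwap_apply_of_gt (by lia)]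

theorem normalWord_adjacentSwap_apply_last {N : ℕ} (j : Fin (N + 2)) (d : LehmerCode N) :
    normalWord adjacentSwap (N + 1) (j, d) (N + 1) = j := by
  rw [normalWord, Equiv.Perm.mul_apply, normalWord_adjacentSwap_apply_of_lt d N.lt_succ_self]
  convert ascendingProd_adjacentSwap_apply_add j (N + 1 - j) using 2
  lia

theorem normalWord_adjacentSwap_injective (N : ℕ) :
    Function.Injective (normalWord adjacentSwap N) := by
  induction N with
  | zero => exact fun _ _ _ => Subsingleton.elim (α := Unit) _ _
  | succ N ih =>
    rintro ⟨j, d⟩ ⟨j', d'⟩ h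
    obtain rfl : j = j' := Fin.ext <| by
      rw [← normalWord_adjacentSwap_apply_last j d, h, normalWord_adjacentSwap_apply_last]
    rw [normalWord, normalWord, mul_left_cancel_iff] at h
    rw [ih h]

end AdjacentSwaps

end NormalWord

namespace IsBMWFamily

variable {K A : Type*} [Field K] [Ring A] [Algebra K A] {l m d : K} {N : ℕ} {g : ℕ → A}

section

variable {e : ℕ → A}

theorem g_mul_ascendingProd_of_lt (H : IsBMWFamily l m d N g e) {i j n : ℕ} (h : i + 1 < j)
    (hn : j + n ≤ N) : g i * ascendingProd g j n = ascendingProd g j n * g i := by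
  induction n generalizing j with
  | zero => simp [ascendingProd]
  | succ n ih =>
    rw [ascendingProd, ← mul_assoc, H.comm i j (by lia) (by lia) (by lia), mul_assoc,
      ih (by lia) (by lia), mul_assoc]

theorem g_succ_mul_ascendingProd (H : IsBMWFamily l m d N g e) {i j n : ℕ} (h : j ≤ i)
    (hi : i + 1 < j + n) (hn : j + n ≤ N) :
    g (i + 1) * ascendingProd g j n = ascendingProd g j n * g i := by
  induction n generalizing j with
  | zero => lia
  | succ n ih =>
    obtain rfl | hij := h.eq_or_lt
    · obtain ⟨n, rfl⟩ : ∃ n', n = n' + 1 := ⟨n - 1, by lia⟩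
      have hcomm := H.g_mul_ascendingProd_of_lt (i := j) (j := j + 1 + 1) (n := n)
        (by lia) (by lia)
      simp only [ascendingProd]
      calc g (j + 1) * (g j * (g (j + 1) * ascendingProd g (j + 1 + 1) n))
          = g (j + 1) * g j * g (j + 1) * ascendingProd g (j + 1 + 1) n := by
            simp only [mul_assoc]
        _ = g j * g (j + 1) * (g j * ascendingProd g (j + 1 + 1) n) := by
            rw [← H.braid j (by lia), mul_assoc]
        _ = g j * (g (j + 1) * ascendingProd g (j + 1 + 1) n) * g j := by
            simp only [hcomm, mul_assoc]
    · rw [ascendingProd, ← mul_assoc, ← H.comm j (i + 1) (by lia) (by lia) (by lia), mul_assoc,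
        ih (by lia) (by lia) (by lia), mul_assoc]

end

theorem ascendingProd_mul_mem_span {M j n : ℕ} (hn : j + n = M + 1) {x : A}
    (hx : x ∈ Submodule.span K (Set.range (normalWord g M))) :
    ascendingProd g j n * x ∈ Submodule.span K (Set.range (normalWord g (M + 1))) := by
  suffices Submodule.span K (Set.range (normalWord g M)) ≤
      (Submodule.span K (Set.range (normalWord g (M + 1)))).comap
        (LinearMap.mulLeft K (ascendingProd g j n)) from this hx
  rw [Submodule.span_le]
  rintro _ ⟨d, rfl⟩
  refine Submodule.subset_span ⟨(⟨j, by lia⟩, d), ?_⟩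
  rw [normalWord, LinearMap.mulLeft_apply, ← hn, Nat.add_sub_cancel_left]

theorem one_mem_span_normalWord (K : Type*) {A : Type*} [Field K] [Ring A] [Algebra K A]
    (g : ℕ → A) (M : ℕ) :
    1 ∈ Submodule.span K (Set.range (normalWord g M)) := by
  induction M with
  | zero => exact Submodule.subset_span ⟨(), rfl⟩
  | succ M ih => simpa [ascendingProd] using ascendingProd_mul_mem_span (j := M + 1) (n := 0) rfl ih

theorem g_mul_mem_span_normalWord (H : IsBMWFamily l m d N g 0) {M : ℕ} (hM : M ≤ N) {i : ℕ}
    (hi : i < M) {x : A} (hx : x ∈ Submodule.span K (Set.range (normalWord g M))) :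
    g i * x ∈ Submodule.span K (Set.range (normalWord g M)) := by
  induction M generalizing i x with
  | zero => lia
  | succ M ih =>
    suffices Submodule.span K (Set.range (normalWord g (M + 1))) ≤
        (Submodule.span K (Set.range (normalWord g (M + 1)))).comap
          (LinearMap.mulLeft K (g i)) from this hx
    rw [Submodule.span_le]
    rintro _ ⟨⟨j, d⟩, rfl⟩
    obtain ⟨j, hj⟩ := j
    obtain ⟨n, hn⟩ : ∃ n, j + n = M + 1 := ⟨M + 1 - j, by lia⟩
    have hd : normalWord g M d ∈ Submodule.span K (Set.range (normalWord g M)) :=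
      Submodule.subset_span ⟨d, rfl⟩
    rw [normalWord, ← hn, Nat.add_sub_cancel_left, hn, SetLike.mem_coe, Submodule.mem_comap,
      LinearMap.mulLeft_apply, ← mul_assoc]
    rcases lt_trichotomy i j with hij | rfl | hij
    · obtain rfl | hij : j = i + 1 ∨ i + 1 < j := by lia
      · rw [show g i * ascendingProd g (i + 1) n = ascendingProd g i (n + 1) from rfl]
        exact ascendingProd_mul_mem_span (by lia) hd
      · rw [H.g_mul_ascendingProd_of_lt hij (by lia), mul_assoc]
        exact ascendingProd_mul_mem_span hn (ih (by lia) (by lia) hd)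
    · obtain ⟨n, rfl⟩ : ∃ n', n = n' + 1 := ⟨n - 1, by lia⟩
      have hg : g i * g i = 1 - m • g i := by
        rw [(H.node (by lia)).g_g, Pi.zero_apply, smul_zero, add_zero]
      rw [ascendingProd, ← mul_assoc, hg, sub_mul, one_mul, smul_mul_assoc, sub_mul,
        smul_mul_assoc]
      rw [show g i * ascendingProd g (i + 1) n = ascendingProd g i (n + 1) from rfl]
      exact sub_mem (ascendingProd_mul_mem_span (by lia) hd)
        (Submodule.smul_mem _ _ (ascendingProd_mul_mem_span hn hd))
    · obtain ⟨i, rfl⟩ : ∃ i', i = i' + 1 := ⟨i - 1, by lia⟩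
      rw [H.g_succ_mul_ascendingProd (by lia) (by lia) (by lia), mul_assoc]
      exact ascendingProd_mul_mem_span hn (ih (by lia) (by lia) hd)

end IsBMWFamily

theorem HeckeTypeA.mem_span_normalWord {N : ℕ} (x : HeckeTypeA N) :
    x ∈ Submodule.span BMWField (Set.range (normalWord (HeckeTypeA.T N) N)) :=
  initialSubmodule_le (IsBMWFamily.one_mem_span_normalWord _ _ _)
    (fun _ hi _ => (HeckeTypeA.isBMWFamily N).g_mul_mem_span_normalWord le_rfl hi)
    ((HeckeTypeA.initialSubalgebra_eq_top N).ge Algebra.mem_top)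

theorem BMWTypeA.exists_sub_sum_normalWord_mem_span_e {M : ℕ} (x : BMWTypeA (M + 1)) :
    ∃ c : LehmerCode (M + 1) → BMWField,
      x - ∑ d, c d • normalWord (g (M + 1)) (M + 1) d ∈ TwoSidedIdeal.span {e (M + 1) M} := by
  obtain ⟨c, hc⟩ := (Submodule.mem_span_range_iff_exists_fun _).1
    (HeckeTypeA.mem_span_normalWord (toHecke (M + 1) x))
  have toHecke_normalWord (d : LehmerCode (M + 1)) :
      toHecke (M + 1) (normalWord (g (M + 1)) (M + 1) d) =
        normalWord (HeckeTypeA.T (M + 1)) (M + 1) d :=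
    (map_normalWord (toHecke (M + 1)).toMonoidHom _ _ _).trans
      (normalWord_congr (fun _ => toHecke_g) d)
  refine ⟨c, ?_⟩
  rw [← ker_toHecke, TwoSidedIdeal.mem_ker, map_sub, map_sum, ← hc, sub_eq_zero]
  simp only [map_smul, toHecke_normalWord]

/-! ### Tensor powers of a quantum orthogonal space -/

section Slots

theorem linearFunctional_apply_comm {F ι κ : Type*} [Field F] [Finite ι]
    (φ : (ι → F) →ₗ[F] F) (ψ : (κ → F) →ₗ[F] F) (f : ι → κ → F) :
    φ (fun a => ψ (f a)) = ψ (fun b => φ fun a => f a b) := by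
  classical
  cases nonempty_fintype ι
  have expand (b : κ) : φ (fun a => f a b) = ∑ a, φ (fun j => if a = j then 1 else 0) • f a b := by
    rw [LinearMap.pi_apply_eq_sum_univ φ]
    simp only [smul_eq_mul, mul_comm]
  have hψ : (fun b => φ fun a => f a b) = ∑ a, φ (fun j => if a = j then 1 else 0) • f a := by
    ext b
    rw [expand, Finset.sum_apply]
    rfl
  rw [hψ, map_sum, LinearMap.pi_apply_eq_sum_univ φ]
  simp only [map_smul, smul_eq_mul, mul_comm]

variable {F I : Type*} [Field F]

/-- Replace the entries `i` and `i + 1` of a sequence. -/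
def updateTwo (x : ℕ → I) (i : ℕ) (u v : I) : ℕ → I :=
  Function.update (Function.update x i u) (i + 1) v

theorem updateTwo_eq_self (x : ℕ → I) (i : ℕ) : updateTwo x i (x i) (x (i + 1)) = x := by
  simp [updateTwo]

theorem updateTwo_apply_left (x : ℕ → I) (i : ℕ) (u v : I) : updateTwo x i u v i = u := by
  simp [updateTwo]

theorem updateTwo_apply_right (x : ℕ → I) (i : ℕ) (u v : I) :
    updateTwo x i u v (i + 1) = v := by
  simp [updateTwo]

theorem updateTwo_apply_of_ne (x : ℕ → I) {i p : ℕ} (u v : I) (h : p ≠ i) (h' : p ≠ i + 1) :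
    updateTwo x i u v p = x p := by
  simp [updateTwo, h, h']

theorem updateTwo_updateTwo (x : ℕ → I) (i : ℕ) (u v u' v' : I) :
    updateTwo (updateTwo x i u v) i u' v' = updateTwo x i u' v' := by
  ext p
  simp only [updateTwo, Function.update_apply]
  split_ifs <;> rfl

theorem updateTwo_comm (x : ℕ → I) {i j : ℕ} (h : i + 2 ≤ j) (u v u' v' : I) :
    updateTwo (updateTwo x j u v) i u' v' = updateTwo (updateTwo x i u' v') j u v := by
  ext p
  simp only [updateTwo, Function.update_apply]
  split_ifs <;> first | rfl | lia

theorem updateTwo_update_comm (x : ℕ → I) {i j : ℕ} (h : i + 1 < j) (u v y : I) :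
    updateTwo (Function.update x j y) i u v = Function.update (updateTwo x i u v) j y := by
  ext p
  simp only [updateTwo, Function.update_apply]
  split_ifs <;> first | rfl | lia

/-- Replace the entries `i`, `i + 1` and `i + 2` of a sequence. -/
def updateThree (x : ℕ → I) (i : ℕ) (u v w : I) : ℕ → I :=
  Function.update (Function.update (Function.update x i u) (i + 1) v) (i + 2) w

theorem updateThree_updateThree (x : ℕ → I) (i : ℕ) (u v w u' v' w' : I) :
    updateThree (updateThree x i u v w) i u' v' w' = updateThree x i u' v' w' := by
  ext p
  simp only [updateThree, Function.update_apply]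
  split_ifs <;> rfl

theorem updateThree_apply_last (x : ℕ → I) (i : ℕ) (u v : I) :
    updateThree x i u v (x (i + 2)) = updateTwo x i u v := by
  ext p
  simp only [updateThree, updateTwo, Function.update_apply]
  split_ifs <;> simp_all

theorem updateThree_apply_first (x : ℕ → I) (i : ℕ) (u v : I) :
    updateThree x i (x i) u v = updateTwo x (i + 1) u v := by
  simp [updateThree, updateTwo]

/-- The action of operators on two-variable functions on the variables `i` and `i + 1` of
functions of sequences. -/
def atSlots (i : ℕ) : Module.End F (I → I → F) →ₐ[F] Module.End F ((ℕ → I) → F) where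
  toFun T :=
    { toFun f x := T (fun u v => f (updateTwo x i u v)) (x i) (x (i + 1))
      map_add' f h := funext fun x => congrFun₂
        (T.map_add (fun u v => f (updateTwo x i u v)) fun u v => h (updateTwo x i u v)) _ _
      map_smul' c f := funext fun x => congrFun₂
        (T.map_smul c fun u v => f (updateTwo x i u v)) _ _ }
  map_one' := by
    ext f x
    exact congrArg f (updateTwo_eq_self x i)
  map_mul' T T' := by
    ext f x
    simp [updateTwo_updateTwo, updateTwo_apply_left, updateTwo_apply_right]
  map_zero' := rfl
  map_add' _ _ := rfl
  commutes' c := by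
    ext f x
    exact congrArg (c * f ·) (updateTwo_eq_self x i)

theorem atSlots_apply (i : ℕ) (T : Module.End F (I → I → F)) (f : (ℕ → I) → F) (x : ℕ → I) :
    atSlots i T f x = T (fun u v => f (updateTwo x i u v)) (x i) (x (i + 1)) := rfl

theorem atSlots_apply_updateTwo (i : ℕ) (T : Module.End F (I → I → F)) (f : (ℕ → I) → F)
    (x : ℕ → I) (u v : I) :
    atSlots i T f (updateTwo x i u v) = T (fun u v => f (updateTwo x i u v)) u v := by
  simp only [atSlots_apply, updateTwo_updateTwo, updateTwo_apply_left, updateTwo_apply_right]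

theorem atSlots_commute [Finite I] {i j : ℕ} (h : i + 2 ≤ j) (T T' : Module.End F (I → I → F)) :
    Commute (atSlots i T) (atSlots j T') := by
  ext f x
  let eval (T : Module.End F (I → I → F)) (a b : I) : (I × I → F) →ₗ[F] F :=
    LinearMap.proj b ∘ₗ LinearMap.proj a ∘ₗ T ∘ₗ (LinearEquiv.curry F F I I).toLinearMap
  have fubini := linearFunctional_apply_comm (eval T (x i) (x (i + 1)))
    (eval T' (x j) (x (j + 1)))
    fun a b => f (updateTwo (updateTwo x i a.1 a.2) j b.1 b.2)
  simp only [Module.End.mul_apply, atSlots_apply, updateTwo_comm x h,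
    updateTwo_apply_of_ne x _ _ (show j ≠ i by lia) (show j ≠ i + 1 by lia),
    updateTwo_apply_of_ne x _ _ (show j + 1 ≠ i by lia) (show j + 1 ≠ i + 1 by lia),
    updateTwo_apply_of_ne x _ _ (show i ≠ j by lia) (show i ≠ j + 1 by lia),
    updateTwo_apply_of_ne x _ _ (show i + 1 ≠ j by lia) (show i + 1 ≠ j + 1 by lia)]
  exact fubini

/-- The action of operators on three-variable functions on the variables `i`, `i + 1` and `i + 2`
of functions of sequences. -/
def atThreeSlots (i : ℕ) :
    Module.End F (I → I → I → F) →ₙ* Module.End F ((ℕ → I) → F) where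
  toFun T :=
    { toFun f x := T (fun u v w => f (updateThree x i u v w)) (x i) (x (i + 1)) (x (i + 2))
      map_add' f h := funext fun x => congrFun (congrFun₂
        (T.map_add (fun u v w => f (updateThree x i u v w))
          fun u v w => h (updateThree x i u v w)) _ _) _
      map_smul' c f := funext fun x => congrFun (congrFun₂
        (T.map_smul c fun u v w => f (updateThree x i u v w)) _ _) _ }
  map_mul' T T' := by
    ext f x
    simp only [LinearMap.coe_mk, AddHom.coe_mk, Module.End.mul_apply, updateThree_updateThree]
    simp [updateThree]

theorem atThreeSlots_smul (i : ℕ) (c : F) (T : Module.End F (I → I → I → F)) :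
    atThreeSlots i (c • T) = c • atThreeSlots i T := rfl

theorem atThreeSlots_leg₁₂ (i : ℕ) (T : Module.End F (I → I → F)) :
    atThreeSlots i (leg₁₂ T) = atSlots i T := by
  ext f x
  simp only [atThreeSlots, MulHom.coe_mk, LinearMap.coe_mk, AddHom.coe_mk, leg₁₂_apply,
    updateThree_apply_last, atSlots_apply]

theorem atThreeSlots_leg₂₃ (i : ℕ) (T : Module.End F (I → I → F)) :
    atThreeSlots i (leg₂₃ T) = atSlots (i + 1) T := by
  ext f x
  simp only [atThreeSlots, MulHom.coe_mk, LinearMap.coe_mk, AddHom.coe_mk, leg₂₃_apply,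
    updateThree_apply_first, atSlots_apply]

/-- Fix the entry `j` of the argument to be `y`. -/
def freezeSlot (j : ℕ) (y : I) : Module.End F ((ℕ → I) → F) where
  toFun f x := f (Function.update x j y)
  map_add' _ _ := rfl
  map_smul' _ _ := rfl

theorem freezeSlot_apply (j : ℕ) (y : I) (f : (ℕ → I) → F) (x : ℕ → I) :
    freezeSlot j y f x = f (Function.update x j y) := rfl

theorem commute_freezeSlot_atSlots {i j : ℕ} (h : i + 1 < j) (y : I)
    (T : Module.End F (I → I → F)) : Commute (freezeSlot j y) (atSlots i T) := by
  ext f x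
  simp only [Module.End.mul_apply, atSlots_apply, freezeSlot_apply, updateTwo_update_comm x h,
    Function.update_of_ne (show i ≠ j by lia), Function.update_of_ne (show i + 1 ≠ j by lia)]

end Slots

section Sums

variable {F I : Type*} [Field F] [Fintype I]

/-- Summation over the variable `i`. -/
def sumSlot (i : ℕ) : Module.End F ((ℕ → I) → F) where
  toFun f x := ∑ u, f (Function.update x i u)
  map_add' _ _ := funext fun _ => Finset.sum_add_distrib
  map_smul' _ _ := funext fun _ => (Finset.mul_sum _ _ _).symm

theorem sumSlot_apply (i : ℕ) (f : (ℕ → I) → F) (x : ℕ → I) :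
    sumSlot i f x = ∑ u, f (Function.update x i u) := rfl

theorem sumSlot_commute (i j : ℕ) : Commute (sumSlot (F := F) (I := I) i) (sumSlot j) := by
  obtain rfl | h := eq_or_ne i j
  · exact Commute.refl _
  ext f x
  simp only [Module.End.mul_apply, sumSlot_apply]
  rw [Finset.sum_comm]
  simp only [Function.update_comm h]

/-- Summation over the first `N` variables. -/
def sumSlots : ℕ → Module.End F ((ℕ → I) → F)
  | 0 => 1
  | N + 1 => sumSlots N * sumSlot N

theorem exists_sumSlots_eq_mul {N i : ℕ} (h : i + 2 ≤ N) :
    ∃ X, sumSlots (F := F) (I := I) N = X * (sumSlot i * sumSlot (i + 1)) := by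
  induction N with
  | zero => lia
  | succ N ih =>
    obtain rfl | h : N = i + 1 ∨ i + 2 ≤ N := by lia
    · exact ⟨sumSlots i, mul_assoc _ _ _⟩
    · obtain ⟨X, hX⟩ := ih h
      have comm : Commute (sumSlot (F := F) (I := I) N) (sumSlot i * sumSlot (i + 1)) :=
        (sumSlot_commute N i).mul_right (sumSlot_commute N (i + 1))
      exact ⟨X * sumSlot N, by rw [sumSlots, hX, mul_assoc, ← comm.eq, mul_assoc]⟩

/-- The operators `X` and `Y` are adjoint for the summation of products over the first `N`
variables. -/
def IsAdjointSlots (N : ℕ) (X Y : Module.End F ((ℕ → I) → F)) : Prop :=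
  ∀ f h, sumSlots N (X f * h) = sumSlots N (f * Y h)

namespace IsAdjointSlots

variable {N : ℕ} {X X' Y Y' : Module.End F ((ℕ → I) → F)}

theorem of_algebraMap (N : ℕ) (c : F) :
    IsAdjointSlots N (algebraMap F (Module.End F ((ℕ → I) → F)) c)
      (algebraMap F (Module.End F ((ℕ → I) → F)) c) := fun f h => by
  simp only [Module.algebraMap_end_apply, smul_mul_assoc, mul_smul_comm]

theorem add (h : IsAdjointSlots N X Y) (h' : IsAdjointSlots N X' Y') :
    IsAdjointSlots N (X + X') (Y + Y') := fun f g => by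
  simp only [LinearMap.add_apply, add_mul, mul_add, map_add, h f g, h' f g]

theorem mul (h : IsAdjointSlots N X Y) (h' : IsAdjointSlots N X' Y') :
    IsAdjointSlots N (X * X') (Y' * Y) := fun f g => by
  simp only [Module.End.mul_apply, h _ g, h' f]

theorem of_pairing_comm {T : Module.End F (I → I → F)}
    (hT : ∀ f g, pairing f (T g) = pairing (T f) g) {i : ℕ} (hi : i + 2 ≤ N) :
    IsAdjointSlots N (atSlots i T) (atSlots i T) := fun f g => by
  obtain ⟨X, hX⟩ := exists_sumSlots_eq_mul (F := F) (I := I) hi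
  rw [hX, Module.End.mul_apply, Module.End.mul_apply]
  refine congrArg X (funext fun x => ?_)
  have adjoint := hT (fun u v => f (updateTwo x i u v)) (fun u v => g (updateTwo x i u v))
  simp only [pairing, ← atSlots_apply_updateTwo] at adjoint
  exact adjoint.symm

end IsAdjointSlots

section Positivity

variable [LinearOrder F] [IsStrictOrderedRing F]

theorem eq_zero_of_sumSlots_eq_zero {N : ℕ} {f : (ℕ → I) → F} (hf : 0 ≤ f)
    (h : sumSlots N f = 0) : f = 0 := by
  induction N generalizing f with
  | zero => exact h
  | succ N ih =>
    have hnonneg (x : ℕ → I) : 0 ≤ sumSlot N f x := Finset.sum_nonneg fun u _ => hf _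
    have hsum : sumSlot N f = 0 := ih hnonneg h
    ext x
    have hx := (Finset.sum_eq_zero_iff_of_nonneg fun u _ => hf (Function.update x N u)).1
      (congrFun hsum x)
    simpa using hx (x N) (Finset.mem_univ _)

theorem IsAdjointSlots.eq_zero_of_mul_eq_zero {N : ℕ} {X Y : Module.End F ((ℕ → I) → F)}
    (h : IsAdjointSlots N X Y) (h0 : Y * X = 0) : X = 0 := by
  ext f : 1
  have hYX : Y (X f) = 0 := LinearMap.congr_fun h0 f
  have hnonneg (x : ℕ → I) : 0 ≤ (X f * X f) x := mul_self_nonneg (X f x)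
  have hsq : X f * X f = 0 := eq_zero_of_sumSlots_eq_zero hnonneg
    ((h f (X f)).trans (by rw [hYX, mul_zero, map_zero]))
  ext x
  exact mul_self_eq_zero.1 (congrFun hsq x)

end Positivity

end Sums

/-- Pairing with `w`, followed by multiplication of `w`. -/
def capCup {F I : Type*} [Field F] [Fintype I] (w : I → I → F) : Module.End F (I → I → F) where
  toFun f := pairing w f • w
  map_add' f g := (congrArg (· • w) (pairing_add w f g)).trans (add_smul _ _ _)
  map_smul' c f := (congrArg (· • w) (pairing_mul_left w f c)).trans (mul_smul _ _ _)

namespace QuantumOrthogonalSpace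

variable {F : Type*} [Field F] {q t : F} {k : ℕ} (S : QuantumOrthogonalSpace F q t k)

theorem leg₁₂_capCup (f : S.I → S.I → S.I → F) :
    leg₁₂ (capCup S.w) f = cup₁₂ S.w (cap₁₂ S.w f) := rfl

theorem leg₂₃_capCup (f : S.I → S.I → S.I → F) :
    leg₂₃ (capCup S.w) f = cup₂₃ S.w (cap₂₃ S.w f) := rfl

/-- The action of the generator `g i` of the BMW algebra on the tensor powers of the vector
representation. -/
noncomputable def G (i : ℕ) : Module.End F ((ℕ → S.I) → F) := atSlots i S.R

/-- The action of the generator `e i` of the BMW algebra on the tensor powers of the vector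
representation. -/
noncomputable def E (i : ℕ) : Module.End F ((ℕ → S.I) → F) := atSlots i (capCup S.w)

theorem E_apply (i : ℕ) (f : (ℕ → S.I) → F) (x : ℕ → S.I) :
    S.E i f x = pairing S.w (fun u v => f (updateTwo x i u v)) * S.w (x i) (x (i + 1)) := rfl

theorem smul_capCup (hl : t ^ 2 * q⁻¹ ≠ 0) :
    (q⁻¹ - q) • capCup S.w = (t ^ 2 * q⁻¹) • (S.R * S.R + (q⁻¹ - q) • S.R - 1) := by
  refine LinearMap.ext fun f => funext₂ fun x y => ?_
  have hl' := mul_inv_cancel₀ hl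
  rw [mul_inv, inv_inv] at hl'
  change (q⁻¹ - q) * (pairing S.w f * S.w x y) =
    t ^ 2 * q⁻¹ * (S.R (S.R f) x y + (q⁻¹ - q) * S.R f x y - f x y)
  rw [S.R_R]
  linear_combination (q - q⁻¹) * (pairing S.w f * S.w x y) * hl'

theorem R_mul_capCup : S.R * capCup S.w = (t ^ 2 * q⁻¹)⁻¹ • capCup S.w := by
  have hw : S.R S.w = (t ^ 2 * q⁻¹)⁻¹ • S.w := funext₂ fun x y => by
    rw [S.R_w, mul_inv, inv_inv, inv_pow, mul_comm q]
    rfl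
  refine LinearMap.ext fun f => ?_
  change S.R (pairing S.w f • S.w) = (t ^ 2 * q⁻¹)⁻¹ • pairing S.w f • S.w
  rw [map_smul, hw, smul_comm]

theorem leg₁₂_capCup_mul_mul : leg₁₂ (capCup S.w) * leg₂₃ S.R * leg₁₂ (capCup S.w) =
    (t ^ 2 * q⁻¹) • leg₁₂ (capCup S.w) := LinearMap.ext fun f => by
  simp only [Module.End.mul_apply, LinearMap.smul_apply, leg₁₂_capCup, cap₁₂_leg₂₃_cup₁₂]
  exact funext₃ fun x y z => mul_assoc _ _ _

theorem leg₂₃_capCup_mul_mul : leg₂₃ (capCup S.w) * leg₁₂ S.R * leg₂₃ (capCup S.w) =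
    (t ^ 2 * q⁻¹) • leg₂₃ (capCup S.w) := LinearMap.ext fun f => by
  simp only [Module.End.mul_apply, LinearMap.smul_apply, leg₂₃_capCup, cap₂₃_leg₁₂_cup₂₃]
  exact funext₃ fun x y z => mul_assoc _ _ _

theorem isBMWFamily (h : IsBMWParameters (t ^ 2 * q⁻¹) (q⁻¹ - q) (pairing S.w S.w)) (N : ℕ) :
    IsBMWFamily (t ^ 2 * q⁻¹) (q⁻¹ - q) (pairing S.w S.w) N S.G S.E where
  parameters := h
  comm i j _ _ hij := atSlots_commute hij S.R S.R
  braid i _ := by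
    simp only [G, ← atThreeSlots_leg₁₂ i, ← atThreeSlots_leg₂₃ i, ← map_mul]
    exact congrArg _ (LinearMap.ext S.braid)
  quad i _ := by
    simpa only [G, E, map_smul, map_sub, map_add, map_mul, map_one] using
      congrArg (atSlots i) (S.smul_capCup h.l_ne_zero)
  g_e i _ := by rw [G, E, ← map_mul, R_mul_capCup, map_smul]
  e_g_e i _ := by
    simp only [E, G, ← atThreeSlots_leg₁₂ i, ← atThreeSlots_leg₂₃ i, ← map_mul,
      leg₁₂_capCup_mul_mul, atThreeSlots_smul]
  e_g_e' i _ := by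
    simp only [E, G, ← atThreeSlots_leg₁₂ i, ← atThreeSlots_leg₂₃ i, ← map_mul,
      leg₂₃_capCup_mul_mul, atThreeSlots_smul]

theorem freezeSlot_eq_sum (M : ℕ) (y₀ : S.I) (f : (ℕ → S.I) → F) :
    freezeSlot (M + 1) y₀ f = ∑ y, freezeSlot (M + 1) y (S.E M fun z =>
      if z M = y then f (updateTwo z M (z (M + 1)) y₀) else 0) := by
  ext x
  have hE (y : S.I) : S.E M (fun z => if z M = y then f (updateTwo z M (z (M + 1)) y₀) else 0)
      (Function.update x (M + 1) y) =
        ∑ v, f (updateTwo x M v y₀) * (S.w (x M) y * S.w y v) := by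
    rw [E_apply, pairing, Finset.sum_eq_single y (fun u _ hu => by simp [updateTwo, hu]) (by simp),
      Finset.sum_mul]
    refine Finset.sum_congr rfl fun v _ => ?_
    have hM : Function.update x (M + 1) y M = x M := Function.update_of_ne (by lia) _ _
    have hupdate : updateTwo (Function.update x (M + 1) y) M v y₀ = updateTwo x M v y₀ := by
      rw [updateTwo, Function.update_comm (by lia), Function.update_idem,
        Function.update_comm (by lia), updateTwo]
    rw [if_pos (updateTwo_apply_left _ _ _ _), updateTwo_updateTwo, updateTwo_apply_right, hupdate,
      hM, Function.update_self]
    ring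
  simp only [Finset.sum_apply, freezeSlot_apply, hE]
  rw [Finset.sum_comm]
  simp only [← Finset.mul_sum, S.w_mul_w, mul_ite, mul_one, mul_zero, Finset.sum_ite_eq,
    Finset.mem_univ, if_true, updateTwo, Function.update_eq_self]

theorem eq_zero_of_mul_E_eq_zero {M : ℕ} {X : Module.End F ((ℕ → S.I) → F)}
    (hX : ∀ y, Commute X (freezeSlot (M + 1) y)) (h : X * S.E M = 0) : X = 0 := by
  have hXE (f) : X (S.E M f) = 0 := LinearMap.congr_fun h f
  have hXU (y f) : X (freezeSlot (M + 1) y f) = freezeSlot (M + 1) y (X f) :=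
    LinearMap.congr_fun (hX y).eq f
  ext f x
  have hx : X f x = X (freezeSlot (M + 1) (x (M + 1)) f) x := by
    rw [hXU, freezeSlot_apply, Function.update_eq_self]
  rw [hx, freezeSlot_eq_sum, map_sum]
  simp only [hXU, hXE, map_zero, Finset.sum_const_zero]
  rfl

/-- The functions supported on the sequences whose first `k` entries are isotropic labels. -/
def isotropicSubmodule : Submodule F ((ℕ → S.I) → F) where
  carrier := {f | ∀ x p, p < k → x p ∉ Set.range S.a → f x = 0}
  zero_mem' _ _ _ _ := rfl
  add_mem' hf hg x p hp hx := by rw [Pi.add_apply, hf x p hp hx, hg x p hp hx, add_zero]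
  smul_mem' c f hf x p hp hx := by rw [Pi.smul_apply, hf x p hp hx, smul_zero]

theorem apply_updateTwo_eq_zero {i : ℕ} (hi : i + 1 < k) {f : (ℕ → S.I) → F}
    (hf : f ∈ S.isotropicSubmodule) (x : ℕ → S.I) (u v : S.I)
    (h : ¬ (u ∈ Set.range S.a ∧ v ∈ Set.range S.a)) : f (updateTwo x i u v) = 0 := by
  rcases not_and_or.1 h with hu | hv
  · exact hf _ i (by lia) (by rwa [updateTwo_apply_left])
  · exact hf _ (i + 1) hi (by rwa [updateTwo_apply_right])

theorem G_mem_isotropicSubmodule {i : ℕ} (hi : i + 1 < k) {f : (ℕ → S.I) → F}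
    (hf : f ∈ S.isotropicSubmodule) : S.G i f ∈ S.isotropicSubmodule := fun x p hp hx => by
  rw [G, atSlots_apply]
  by_cases h : p = i ∨ p = i + 1
  · refine S.R_isotropic _ (S.apply_updateTwo_eq_zero hi hf x) _ _ fun hmem => hx ?_
    rcases h with rfl | rfl
    exacts [hmem.1, hmem.2]
  · have hzero : (fun u v => f (updateTwo x i u v)) = fun _ _ => 0 := by
      ext u v
      exact hf _ p hp (by rwa [updateTwo_apply_of_ne x u v (by tauto) (by tauto)])
    rw [hzero, R_zero]

theorem E_eq_zero_of_mem_isotropicSubmodule {i : ℕ} (hi : i + 1 < k) {f : (ℕ → S.I) → F}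
    (hf : f ∈ S.isotropicSubmodule) : S.E i f = 0 := by
  ext x
  rw [E_apply, S.pairing_w_eq_zero (S.apply_updateTwo_eq_zero hi hf x), zero_mul,
    Pi.zero_apply]

open Classical in
/-- The basis tensor with the isotropic label `a i` in slot `σ i` for all `i < k`, summed over all
labels of the remaining slots. -/
noncomputable def extremalVector (σ : Equiv.Perm ℕ) : (ℕ → S.I) → F :=
  fun x => if ∀ i : Fin k, x (σ i) = S.a i then 1 else 0

theorem extremalVector_one_mem : S.extremalVector 1 ∈ S.isotropicSubmodule :=
  fun _ p hp hx => if_neg fun h => hx ⟨⟨p, hp⟩, (h ⟨p, hp⟩).symm⟩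

theorem G_extremalVector {σ : Equiv.Perm ℕ} {p : ℕ} {i j : Fin k} (hij : i < j) (hi : σ i = p)
    (hj : σ j = p + 1) :
    S.G p (S.extremalVector σ) = S.extremalVector (adjacentSwap p * σ) := by
  classical
  ext x
  let others : Prop := ∀ l : Fin k, l ≠ i → l ≠ j → x (σ l) = S.a l
  have hne {l : Fin k} (hl : l ≠ i) (hl' : l ≠ j) : σ l ≠ p ∧ σ l ≠ p + 1 := by
    rw [← hj, ← hi, σ.injective.ne_iff, σ.injective.ne_iff]
    exact ⟨Fin.val_ne_of_ne hl, Fin.val_ne_of_ne hl'⟩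
  have hsplit (y : ℕ → S.I) (hy : ∀ r, r ≠ p → r ≠ p + 1 → y r = x r) :
      S.extremalVector σ y =
        (if others then 1 else 0) * if y p = S.a i ∧ y (p + 1) = S.a j then 1 else 0 := by
    have hiff : (∀ l : Fin k, y (σ l) = S.a l) ↔
        others ∧ y p = S.a i ∧ y (p + 1) = S.a j := by
      refine ⟨fun h => ⟨fun l hl hl' => ?_, hi ▸ h i, hj ▸ h j⟩, fun ⟨h, h', h''⟩ l => ?_⟩
      · rw [← hy _ (hne hl hl').1 (hne hl hl').2, h]
      · obtain rfl | hl := eq_or_ne l i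
        · rwa [hi]
        obtain rfl | hl' := eq_or_ne l j
        · rwa [hj]
        rw [hy _ (hne hl hl').1 (hne hl hl').2, h l hl hl']
    simp only [extremalVector, hiff, ite_and, mul_ite, mul_one, mul_zero]
    split_ifs <;> rfl
  have hleft (u v : S.I) : S.extremalVector σ (updateTwo x p u v) =
      (if others then 1 else 0) * if u = S.a i ∧ v = S.a j then 1 else 0 := by
    simp only [hsplit _ fun _ => updateTwo_apply_of_ne x u v, updateTwo_apply_left,
      updateTwo_apply_right]
  have hswap : S.extremalVector (adjacentSwap p * σ) x = S.extremalVector σ (x ∘ adjacentSwap p) :=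
    rfl
  rw [G, atSlots_apply, hswap, hsplit (x ∘ adjacentSwap p) fun _ h h' =>
    congrArg x (adjacentSwap_apply_of_ne h h')]
  simp only [hleft, R_mul_left, S.R_single i j hij, Function.comp_apply, adjacentSwap,
    Equiv.swap_apply_left, Equiv.swap_apply_right, and_comm]

theorem ascendingProd_G_extremalVector {σ : Equiv.Perm ℕ} {j n : ℕ}
    (h : ∀ p, j ≤ p → p < j + n → σ.symm p < σ.symm (j + n)) (hk : σ.symm (j + n) < k) :
    ascendingProd S.G j n (S.extremalVector σ) =
      S.extremalVector (ascendingProd adjacentSwap j n * σ) := by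
  induction n generalizing j with
  | zero => rw [ascendingProd, ascendingProd, one_mul, Module.End.one_apply]
  | succ n ih =>
    have hlt := h j le_rfl (by lia)
    rw [show j + (n + 1) = j + 1 + n by lia] at h hk hlt
    rw [ascendingProd, Module.End.mul_apply, ih (fun p hp hp' => h p (by lia) hp') hk,
      S.G_extremalVector (i := ⟨σ.symm j, hlt.trans hk⟩) (j := ⟨σ.symm (j + 1 + n), hk⟩) hlt,
      ascendingProd, mul_assoc]
    · simpa using ascendingProd_adjacentSwap_apply_of_lt j.lt_succ_self n
    · simpa using ascendingProd_adjacentSwap_apply_add (j + 1) n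

theorem normalWord_G_extremalVector {M : ℕ} (hM : M < k) (d : LehmerCode M) :
    normalWord S.G M d (S.extremalVector 1) = S.extremalVector (normalWord adjacentSwap M d) := by
  induction M with
  | zero => rfl
  | succ M ih =>
    obtain ⟨j, d⟩ := d
    have hj : (j : ℕ) + (M + 1 - j) = M + 1 := by lia
    have hlast : (normalWord adjacentSwap M d).symm (M + 1) = M + 1 := by
      rw [Equiv.symm_apply_eq, normalWord_adjacentSwap_apply_of_lt d M.lt_succ_self]
    rw [normalWord, Module.End.mul_apply, ih (by lia), ascendingProd_G_extremalVector, normalWord]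
    · rw [hj, hlast]
      intro p _ hp
      by_contra hge
      have hfix := normalWord_adjacentSwap_apply_of_lt d (not_lt.1 hge)
      rw [Equiv.apply_symm_apply] at hfix
      lia
    · rwa [hj, hlast]

theorem exists_extremalVector_eq_one [NeZero k] (σ : Equiv.Perm ℕ) :
    ∃ x, S.extremalVector σ x = 1 := by
  have hinj : Function.Injective fun i : Fin k => σ i :=
    σ.injective.comp Fin.val_injective
  exact ⟨Function.extend (fun i : Fin k => σ i) S.a fun _ => S.a 0,
    if_pos fun i => hinj.extend_apply _ _ i⟩

theorem eq_of_extremalVector_ne_zero {σ τ : Equiv.Perm ℕ} (hσ : ∀ p, k ≤ p → σ p = p)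
    (hτ : ∀ p, k ≤ p → τ p = p) {x : ℕ → S.I} (hx : S.extremalVector σ x ≠ 0)
    (hx' : S.extremalVector τ x ≠ 0) : σ = τ := by
  simp only [extremalVector, ne_eq, ite_eq_right_iff, one_ne_zero, imp_false, not_not] at hx hx'
  ext p
  rcases lt_or_ge p k with hp | hp
  · have hσp : σ p < k := by
      by_contra hge
      have := σ.injective (hσ _ (not_lt.1 hge))
      lia
    have hτp : τ.symm (σ p) < k := by
      by_contra hge
      have hfix := hτ _ (not_lt.1 hge)
      rw [Equiv.apply_symm_apply] at hfix
      lia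
    have hlabel : S.a ⟨p, hp⟩ = S.a ⟨τ.symm (σ p), hτp⟩ := by
      rw [← hx, ← hx', Equiv.apply_symm_apply]
    have hpos : p = τ.symm (σ p) := congrArg Fin.val (S.a.injective hlabel)
    exact ((Equiv.eq_symm_apply τ).1 hpos).symm
  · rw [hσ p hp, hτ p hp]

theorem linearIndependent_extremalVector {M : ℕ} (hM : M < k) :
    LinearIndependent F fun d : LehmerCode M =>
      S.extremalVector (normalWord adjacentSwap M d) := by
  have : NeZero k := ⟨by lia⟩
  have hfix (d : LehmerCode M) (p : ℕ) (hp : k ≤ p) : normalWord adjacentSwap M d p = p :=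
    normalWord_adjacentSwap_apply_of_lt d (by lia)
  rw [Fintype.linearIndependent_iff]
  intro c hc d
  obtain ⟨x, hx⟩ := S.exists_extremalVector_eq_one (normalWord adjacentSwap M d)
  have hother (d') (hd : d' ≠ d) : S.extremalVector (normalWord adjacentSwap M d') x = 0 := by
    by_contra hx'
    exact hd (normalWord_adjacentSwap_injective M
      (S.eq_of_extremalVector_ne_zero (hfix d') (hfix d) hx' (by rw [hx]; exact one_ne_zero)))
  have heval := congrFun hc x
  rw [Finset.sum_apply, Finset.sum_eq_single d (fun d' _ hd => by simp [hother d' hd]) (by simp)]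
    at heval
  simpa [hx] using heval

end QuantumOrthogonalSpace

/-! ### The ultraproduct of all specializations -/

section Evaluation

open Filter IntermediateField algebraAdjoinAdjoin

theorem exists_ringHom_bmwField {E L : Type*} [Field E] [CharZero E] [Field L]
    [Algebra E L] {a : E} (ha : Transcendental ℚ a) {b : L} (hb : Transcendental E b) :
    ∃ φ : BMWField →+* L, φ lVar = algebraMap E L a ∧ φ deltaVar = b := by
  have : CharZero L := charZero_of_injective_algebraMap (algebraMap E L).injective
  have hab : AlgebraicIndependent ℚ
      (Sum.elim (fun _ : Unit => b) fun _ : Unit => algebraMap E L a) :=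
    .sumElim_comp ((algebraicIndependent_unique_type_iff (ι := Unit)).2 ha)
      ((algebraicIndependent_unique_type_iff (ι := Unit)).2 hb)
  have hb' : Transcendental ℚ b := hab.transcendental (.inl ())
  have ha' : Transcendental ℚ⟮b⟯ (algebraMap E L a) := by
    have h := hab.transcendental_adjoin (s := {.inl ()}) (i := .inr ()) (by simp)
    rw [Set.image_singleton] at h
    exact (IsFractionRing.isAlgebraic_iff (Algebra.adjoin ℚ {b}) ℚ⟮b⟯ L).not.1 h
  let ι : RatFunc ℚ →+* ℚ⟮b⟯ := (RatFunc.algEquivOfTranscendental b hb').toRingHom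
  let φ : Polynomial (RatFunc ℚ) →+* L :=
    ((Polynomial.aeval (algebraMap E L a) : _ →ₐ[ℚ⟮b⟯] L) : _ →+* L).comp (Polynomial.mapRingHom ι)
  have hφ : Function.Injective φ :=
    (transcendental_iff_injective.1 ha').comp (Polynomial.map_injective ι ι.injective)
  refine ⟨IsFractionRing.lift hφ, ?_, ?_⟩
  · rw [lVar, ← RatFunc.algebraMap_X, IsFractionRing.lift_algebraMap]
    simp [φ]
  · rw [deltaVar, ← RatFunc.algebraMap_C, IsFractionRing.lift_algebraMap]
    simp [φ, ι]

theorem exists_transcendental_gt (x : ℝ) : ∃ a, Transcendental ℚ a ∧ x < a :=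
  ((Algebraic.countable ℚ ℝ).dense_compl ℝ).exists_gt x

noncomputable instance {α F : Type*} (l : Filter α) [CommSemiring F] : Algebra F (Germ l F) where
  algebraMap := (Germ.coeRingHom l).comp (algebraMap F (α → F))
  commutes' _ _ := mul_comm _ _
  smul_def' c x := by
    induction x using Germ.inductionOn with
    | h f => exact congrArg Germ.ofFun (Algebra.smul_def c f)

theorem transcendental_germ {F : Type*} [Field F] {d : ℕ → F} (hd : Function.Injective d) :
    Transcendental F (d : Germ (hyperfilter ℕ : Filter ℕ) F) := by
  refine transcendental_iff.2 fun p hp => ?_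
  by_contra hp0
  have hd_aeval : Polynomial.aeval (d : Germ (hyperfilter ℕ : Filter ℕ) F) p =
      Germ.ofFun fun k => Polynomial.aeval (d k) p := by
    have := congrArg (Germ.coeRingHom (hyperfilter ℕ : Filter ℕ)) (Polynomial.aeval_pi_apply d p)
    rwa [Polynomial.aeval_def, Polynomial.hom_eval₂] at this
  have hfin : {k | Polynomial.aeval (d k) p = 0}.Finite :=
    ((p.rootSet_finite F).preimage hd.injOn).subset fun k hk =>
      (Polynomial.mem_rootSet_of_ne hp0).2 hk
  obtain ⟨k, hk, hk'⟩ :=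
    ((Germ.coe_eq.1 (hd_aeval.symm.trans hp)).and hfin.compl_mem_hyperfilter).exists
  exact hk' hk

end Evaluation

section ReducedProduct

open Filter

variable {α : Type*} (l : Filter α) (A : α → Type*) [∀ k, Ring (A k)]

/-- Agreement of two families almost everywhere along a filter. -/
def eventualEqCon : RingCon (∀ k, A k) where
  r X Y := ∀ᶠ k in l, X k = Y k
  iseqv := ⟨fun _ => .of_forall fun _ => rfl, fun h => h.mono fun _ => Eq.symm,
    fun h h' => h.mp (h'.mono fun _ h' h => h.trans h')⟩
  add' h h' := h.mp (h'.mono fun _ h' h => congrArg₂ (· + ·) h h')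
  mul' h h' := h.mp (h'.mono fun _ h' h => congrArg₂ (· * ·) h h')

/-- The reduced product of a family of rings along a filter; the ultraproduct when the filter is an
ultrafilter. -/
abbrev ReducedProduct : Type _ := (eventualEqCon l A).Quotient

variable {l A}

theorem ReducedProduct.mk_eq_mk {X Y : ∀ k, A k} :
    (X : ReducedProduct l A) = Y ↔ ∀ᶠ k in l, X k = Y k :=
  RingCon.eq _

theorem ReducedProduct.mk_eq_zero {X : ∀ k, A k} :
    (X : ReducedProduct l A) = 0 ↔ ∀ᶠ k in l, X k = 0 := mk_eq_mk

variable {F : Type*} [Field F] [∀ k, Algebra F (A k)]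

/-- Scalars of the reduced product: germs of functions to the base field. -/
noncomputable def ReducedProduct.germAlgebraMap : Germ l F →+* ReducedProduct l A where
  toFun := Quotient.lift (fun c : α → F => ((fun k => algebraMap F (A k) (c k) : ∀ k, A k) :
    ReducedProduct l A)) fun _ _ h => mk_eq_mk.2 (h.mono fun _ h => congrArg _ h)
  map_one' := mk_eq_mk.2 (.of_forall fun _ => map_one _)
  map_zero' := mk_eq_mk.2 (.of_forall fun _ => map_zero _)
  map_mul' x y := by
    induction x, y using Germ.inductionOn₂ with
    | h c c' => exact mk_eq_mk.2 (.of_forall fun _ => map_mul _ _ _)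
  map_add' x y := by
    induction x, y using Germ.inductionOn₂ with
    | h c c' => exact mk_eq_mk.2 (.of_forall fun _ => map_add _ _ _)

noncomputable instance : Algebra (Germ l F) (ReducedProduct l A) :=
  ReducedProduct.germAlgebraMap.toAlgebra' fun c x => by
    induction c using Germ.inductionOn with
    | h c =>
      obtain ⟨X, rfl⟩ := (eventualEqCon l A).mk'_surjective x
      exact ReducedProduct.mk_eq_mk.2 (.of_forall fun k => Algebra.commutes (c k) (X k))

theorem ReducedProduct.germ_smul_mk (c : α → F) (X : ∀ k, A k) :
    (c : Germ l F) • (X : ReducedProduct l A) = ((fun k => c k • X k : ∀ k, A k) : _) :=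
  mk_eq_mk.2 (.of_forall fun k => (Algebra.smul_def (c k) (X k)).symm)

end ReducedProduct

section Transfer

open Filter

variable {α K F : Type*} {l : Ultrafilter α} [Field K] [Field F]

theorem IsBMWParameters.eventually {a m d : K} (h : IsBMWParameters a m d)
    (φ : K →+* Germ (l : Filter α) F) {a' m' d' : α → F} (ha : φ a = a') (hm : φ m = m')
    (hd : φ d = d') : ∀ᶠ k in (l : Filter α), IsBMWParameters (a' k) (m' k) (d' k) := by
  have hne {c : K} (hc : c ≠ 0) {c' : α → F} (h : φ c = c') : ∀ᶠ k in (l : Filter α), c' k ≠ 0 := by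
    refine Ultrafilter.eventually_not.2 fun h0 => (map_ne_zero φ).2 hc ?_
    exact h.trans (Germ.coe_eq.2 h0)
  have hrel : (m' * (1 - d') : α → F) =ᶠ[l] a' - a'⁻¹ := by
    refine Germ.coe_eq.1 ?_
    push_cast
    rw [← ha, ← hm, ← hd]
    simpa using congrArg φ h.m_mul_one_sub
  have h1 : φ (m * a + 1) = (m' * a' + 1 : α → F) := by
    rw [map_add, map_mul, map_one, ha, hm]
    rfl
  filter_upwards [hne h.l_ne_zero ha, hne h.m_ne_zero hm, hne h.m_mul_l_add_one_ne_zero h1, hrel]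
    with k hl hm h1 hrel
  exact ⟨hl, hm, h1, hrel⟩

variable {A : α → Type*} [∀ k, Ring (A k)] [∀ k, Algebra F (A k)]
  [Algebra K (ReducedProduct (l : Filter α) A)]

theorem ReducedProduct.smul_mk {φ : K →+* Germ (l : Filter α) F}
    (hφ : ∀ (c : K) (x : ReducedProduct (l : Filter α) A), c • x = φ c • x) {c : K} {c' : α → F}
    (hc : φ c = c') (X : ∀ k, A k) :
    c • (X : ReducedProduct (l : Filter α) A) = ((fun k => c' k • X k : ∀ k, A k) : _) := by
  rw [hφ, hc, germ_smul_mk]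

theorem IsBMWFamily.reducedProduct {a m d : K} (h : IsBMWParameters a m d)
    {φ : K →+* Germ (l : Filter α) F}
    (hφ : ∀ (c : K) (x : ReducedProduct (l : Filter α) A), c • x = φ c • x)
    {a' m' d' : α → F} (ha : φ a = a') (hm : φ m = m') {N : ℕ} {g e : ∀ k, ℕ → A k}
    (H : ∀ᶠ k in (l : Filter α), IsBMWFamily (a' k) (m' k) (d' k) N (g k) (e k)) :
    IsBMWFamily a m d N (fun i => ((fun k => g k i : ∀ k, A k) : ReducedProduct (l : Filter α) A))
      (fun i => ((fun k => e k i : ∀ k, A k) : ReducedProduct (l : Filter α) A)) where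
  parameters := h
  comm i j hi hj hij := ReducedProduct.mk_eq_mk.2 (H.mono fun _ H => H.comm i j hi hj hij)
  braid i hi := ReducedProduct.mk_eq_mk.2 (H.mono fun _ H => H.braid i hi)
  quad i hi := by
    simp only [ReducedProduct.smul_mk hφ hm]
    refine (ReducedProduct.mk_eq_mk.2 (H.mono fun _ H => H.quad i hi)).trans
      (ReducedProduct.smul_mk hφ ha _).symm
  g_e i hi := by
    rw [ReducedProduct.smul_mk hφ ((map_inv₀ φ a).trans (congrArg _ ha))]
    exact ReducedProduct.mk_eq_mk.2 (H.mono fun _ H => H.g_e i hi)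
  e_g_e i hi := by
    rw [ReducedProduct.smul_mk hφ ha]
    exact ReducedProduct.mk_eq_mk.2 (H.mono fun _ H => H.e_g_e i hi)
  e_g_e' i hi := by
    rw [ReducedProduct.smul_mk hφ ha]
    exact ReducedProduct.mk_eq_mk.2 (H.mono fun _ H => H.e_g_e' i hi)

end Transfer

namespace RealSpecialization

open Filter

/-- A transcendental real number greater than `1`, the common value of `l` in all specializations
of the parameters. -/
noncomputable def l : ℝ := (exists_transcendental_gt 1).choose

theorem transcendental_l : Transcendental ℚ l := (exists_transcendental_gt 1).choose_spec.1

theorem one_lt_l : 1 < l := (exists_transcendental_gt 1).choose_spec.2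

/-- The quantum parameter of the `k`-th specialization. -/
noncomputable def q (k : ℕ) : ℝ := l ^ ((2 * k + 1 : ℕ) : ℝ)⁻¹

theorem q_pow (k : ℕ) : q k ^ (2 * k + 1) = l :=
  Real.rpow_inv_natCast_pow (zero_le_one.trans one_lt_l.le) (2 * k).succ_ne_zero

theorem one_lt_q (k : ℕ) : 1 < q k := Real.one_lt_rpow one_lt_l (by positivity)

theorem q_ne_zero (k : ℕ) : q k ≠ 0 := (zero_lt_one.trans (one_lt_q k)).ne'

/-- The quantum orthogonal space giving the `k`-th specialization. -/
noncomputable def space (k : ℕ) : QuantumOrthogonalSpace ℝ (q k) (q k ^ (k + 1)) (k + 1) :=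
  (exists_quantumOrthogonalSpace (q_ne_zero k) (k + 1)).some

/-- The value of `δ` in the `k`-th specialization. -/
noncomputable def delta (k : ℕ) : ℝ := pairing (space k).w (space k).w

theorem pow_sq_mul_inv (k : ℕ) : (q k ^ (k + 1)) ^ 2 * (q k)⁻¹ = l := by
  have := q_ne_zero k
  rw [← q_pow k]
  field_simp
  ring

theorem m_mul_one_sub_delta (k : ℕ) : ((q k)⁻¹ - q k) * (1 - delta k) = l - l⁻¹ := by
  have hl : q k * (q k ^ (k + 1))⁻¹ ^ 2 = l⁻¹ := by
    rw [← pow_sq_mul_inv k, mul_inv, inv_inv, inv_pow, mul_comm]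
  have h := (space k).pairing_w_w
  rw [pow_sq_mul_inv, hl, ← delta] at h
  linear_combination h

theorem delta_injective : Function.Injective delta := by
  intro j k h
  have hl : l - l⁻¹ ≠ 0 :=
    (sub_pos.2 ((inv_lt_one_of_one_lt₀ one_lt_l).trans one_lt_l)).ne'
  have hm : (q j)⁻¹ - q j = (q k)⁻¹ - q k := by
    refine mul_right_cancel₀ (right_ne_zero_of_mul (a := (q k)⁻¹ - q k) (b := 1 - delta k) ?_) ?_
    · rwa [m_mul_one_sub_delta]
    · rw [m_mul_one_sub_delta, ← h, m_mul_one_sub_delta]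
  have hanti : StrictAntiOn (fun x : ℝ => x⁻¹ - x) (Set.Ioi 0) := fun x hx y _ hxy =>
    sub_lt_sub (inv_strictAnti₀ hx hxy) hxy
  have hpos (k : ℕ) : q k ∈ Set.Ioi 0 := zero_lt_one.trans (one_lt_q k)
  have hq : q j = q k := hanti.injOn (hpos j) (hpos k) hm
  have hexp : 2 * j + 1 = 2 * k + 1 := by
    refine pow_right_injective₀ (hpos k) (one_lt_q k).ne' ?_
    exact (hq ▸ q_pow j).trans (q_pow k).symm
  lia

theorem exists_evaluation : ∃ φ : BMWField →+* Germ (hyperfilter ℕ : Filter ℕ) ℝ,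
    φ lVar = algebraMap ℝ _ l ∧ φ deltaVar = delta :=
  exists_ringHom_bmwField transcendental_l (transcendental_germ delta_injective)

/-- The embedding of `ℚ(l,δ)` into the ultrapower of `ℝ` given by all specializations. -/
noncomputable def evaluation : BMWField →+* Germ (hyperfilter ℕ : Filter ℕ) ℝ :=
  exists_evaluation.choose

theorem evaluation_lVar :
    evaluation lVar = (fun k => (q k ^ (k + 1)) ^ 2 * (q k)⁻¹ : ℕ → ℝ) :=
  exists_evaluation.choose_spec.1.trans
    (congrArg Germ.ofFun (funext fun k => (pow_sq_mul_inv k).symm))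

theorem evaluation_deltaVar : evaluation deltaVar = delta := exists_evaluation.choose_spec.2

theorem evaluation_mVar : evaluation mVar = (fun k => (q k)⁻¹ - q k : ℕ → ℝ) := by
  have h : 1 - evaluation deltaVar ≠ 0 := by
    rw [← map_one evaluation, ← map_sub]
    exact (map_ne_zero evaluation).2 one_sub_deltaVar_ne_zero
  refine mul_right_cancel₀ h ?_
  rw [← map_one evaluation, ← map_sub, ← map_mul, isBMWParameters_bmwField.m_mul_one_sub, map_sub,
    map_inv₀, evaluation_lVar, map_sub, map_one, evaluation_deltaVar]
  refine congrArg Germ.ofFun (funext fun k => ?_)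
  simp only [pow_sq_mul_inv]
  exact (m_mul_one_sub_delta k).symm

/-- The algebra of operators on the tensor powers of the `k`-th quantum orthogonal space. -/
abbrev Operator (k : ℕ) : Type := Module.End ℝ ((ℕ → (space k).I) → ℝ)

/-- The ultraproduct of the operator algebras of all specializations. -/
abbrev OperatorUltraproduct : Type := ReducedProduct (hyperfilter ℕ : Filter ℕ) Operator

noncomputable instance : Algebra BMWField OperatorUltraproduct := .compHom _ evaluation

theorem smul_eq_evaluation_smul (c : BMWField) (x : OperatorUltraproduct) :
    c • x = evaluation c • x := rfl

theorem eventually_isBMWFamily (N : ℕ) : ∀ᶠ k in (hyperfilter ℕ : Filter ℕ),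
    IsBMWFamily ((q k ^ (k + 1)) ^ 2 * (q k)⁻¹) ((q k)⁻¹ - q k) (delta k) N
      (space k).G (space k).E :=
  (isBMWParameters_bmwField.eventually evaluation evaluation_lVar evaluation_mVar
    evaluation_deltaVar).mono fun k h => (space k).isBMWFamily h N

end RealSpecialization

section TensorRepresentation

open Filter RealSpecialization BMWTypeA

/-- The action of the BMW algebra on the tensor powers of all specializations. -/
noncomputable def tensorRep (N : ℕ) : BMWTypeA N →ₐ[BMWField] OperatorUltraproduct :=
  BMWTypeA.lift (.reducedProduct isBMWParameters_bmwField smul_eq_evaluation_smul evaluation_lVar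
    evaluation_mVar (eventually_isBMWFamily N))

theorem tensorRep_g {N i : ℕ} (hi : i < N) :
    tensorRep N (g N i) = (fun k => (space k).G i : ∀ k, Operator k) :=
  lift_g _ hi

theorem tensorRep_e {N i : ℕ} (hi : i < N) :
    tensorRep N (e N i) = (fun k => (space k).E i : ∀ k, Operator k) :=
  lift_e _ hi

theorem tensorRep_inclusion {M N : ℕ} (h : M ≤ N) (x : BMWTypeA M) :
    tensorRep N (inclusion h x) = tensorRep M x := by
  have hcomp : (tensorRep N).comp (inclusion h) = tensorRep M :=
    BMWTypeA.algHom_ext (A := OperatorUltraproduct) fun i hi => by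
      rw [AlgHom.comp_apply, inclusion_g h hi, tensorRep_g hi, tensorRep_g (hi.trans_le h)]
  exact DFunLike.congr_fun hcomp x

theorem exists_tensorRep_algebraMap (N : ℕ) (c : BMWField) : ∃ c' : ℕ → ℝ,
    tensorRep N (algebraMap BMWField _ c) =
      (fun k => algebraMap ℝ _ (c' k) : ∀ k, Operator k) := by
  obtain ⟨c', hc'⟩ := Quotient.exists_rep (evaluation c)
  refine ⟨c', (AlgHom.commutes _ c).trans ?_⟩
  change ReducedProduct.germAlgebraMap (evaluation c) = _
  rw [← hc']
  rfl

theorem exists_tensorRep_mem {N : ℕ}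
    {P : ∀ k, Subalgebra ℝ (Operator k)}
    (hP : ∀ᶠ k in (hyperfilter ℕ : Filter ℕ), ∀ i < N, (space k).G i ∈ P k) (x : BMWTypeA N) :
    ∃ X : ∀ k, Operator k,
      tensorRep N x = X ∧ ∀ᶠ k in (hyperfilter ℕ : Filter ℕ), X k ∈ P k := by
  induction x using BMWTypeA.induction with
  | g i hi => exact ⟨_, tensorRep_g hi, hP.mono fun k h => h i hi⟩
  | algebraMap c =>
    obtain ⟨c', hc'⟩ := exists_tensorRep_algebraMap N c
    exact ⟨_, hc', .of_forall fun k => (P k).algebraMap_mem (c' k)⟩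
  | add x y hx hy =>
    obtain ⟨X, hX, hXP⟩ := hx
    obtain ⟨Y, hY, hYP⟩ := hy
    exact ⟨X + Y, (map_add _ x y).trans (congrArg₂ (· + ·) hX hY),
      hXP.mp (hYP.mono fun k h h' => (P k).add_mem h' h)⟩
  | mul x y hx hy =>
    obtain ⟨X, hX, hXP⟩ := hx
    obtain ⟨Y, hY, hYP⟩ := hy
    exact ⟨X * Y, (map_mul _ x y).trans (congrArg₂ (· * ·) hX hY),
      hXP.mp (hYP.mono fun k h h' => (P k).mul_mem h' h)⟩

theorem exists_isAdjointSlots_tensorRep {N : ℕ} (x : BMWTypeA N) :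
    ∃ X Y : ∀ k, Operator k,
      tensorRep N x = X ∧ tensorRep N (reverse x) = Y ∧
        ∀ k, IsAdjointSlots (N + 1) (X k) (Y k) := by
  induction x using BMWTypeA.induction with
  | g i hi =>
    refine ⟨_, _, tensorRep_g hi, (congrArg _ (reverse_g hi)).trans (tensorRep_g hi), fun k => ?_⟩
    exact .of_pairing_comm (space k).pairing_R (by lia)
  | algebraMap c =>
    obtain ⟨c', hc'⟩ := exists_tensorRep_algebraMap N c
    exact ⟨_, _, hc', (congrArg _ (reverse_algebraMap c)).trans hc',
      fun k => .of_algebraMap _ (c' k)⟩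
  | add x y hx hy =>
    obtain ⟨X, X', hX, hX', hXX'⟩ := hx
    obtain ⟨Y, Y', hY, hY', hYY'⟩ := hy
    refine ⟨X + Y, X' + Y', (map_add _ x y).trans (congrArg₂ (· + ·) hX hY), ?_,
      fun k => (hXX' k).add (hYY' k)⟩
    rw [map_add, map_add, hX', hY']
    rfl
  | mul x y hx hy =>
    obtain ⟨X, X', hX, hX', hXX'⟩ := hx
    obtain ⟨Y, Y', hY, hY', hYY'⟩ := hy
    refine ⟨X * Y, Y' * X', (map_mul _ x y).trans (congrArg₂ (· * ·) hX hY), ?_,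
      fun k => (hXX' k).mul (hYY' k)⟩
    rw [reverse_mul, map_mul, hX', hY']
    rfl

theorem tensorRep_eq_zero_of_reverse_mul_self {N : ℕ} {x : BMWTypeA N}
    (h : tensorRep N (reverse x * x) = 0) : tensorRep N x = 0 := by
  obtain ⟨X, Y, hX, hY, hXY⟩ := exists_isAdjointSlots_tensorRep x
  rw [map_mul, hX, hY] at h
  rw [hX]
  exact ReducedProduct.mk_eq_zero.2 ((ReducedProduct.mk_eq_zero (X := Y * X).1 h).mono fun k hk =>
    (hXY k).eq_zero_of_mul_eq_zero hk)

theorem tensorRep_reverse_eq_zero {N : ℕ} {x : BMWTypeA N} (h : tensorRep N x = 0) :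
    tensorRep N (reverse x) = 0 :=
  tensorRep_eq_zero_of_reverse_mul_self (by rw [reverse_reverse, map_mul, h, zero_mul])

theorem tensorRep_eq_zero_of_mul_e {M : ℕ} {x : BMWTypeA M}
    (h : tensorRep (M + 1) (inclusion M.le_succ x * e (M + 1) M) = 0) : tensorRep M x = 0 := by
  obtain ⟨X, hX, hXP⟩ := exists_tensorRep_mem
    (P := fun k => Subalgebra.centralizer ℝ (Set.range (freezeSlot (M + 1))))
    (.of_forall fun k i hi => by
      rintro _ ⟨y, rfl⟩
      exact commute_freezeSlot_atSlots (by lia) y (space k).R) x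
  rw [map_mul, tensorRep_inclusion, tensorRep_e M.lt_succ_self, hX] at h
  rw [hX]
  refine ReducedProduct.mk_eq_zero.2 ?_
  filter_upwards [hXP, ReducedProduct.mk_eq_zero (X := X * fun k => (space k).E M).1 h]
    with k hXP hk
  exact (space k).eq_zero_of_mul_E_eq_zero (fun y => (hXP _ ⟨y, rfl⟩).symm) hk

/-- The endomorphisms preserving a submodule. -/
def stabilizerSubalgebra {R V : Type*} [CommSemiring R] [AddCommMonoid V] [Module R V]
    (p : Submodule R V) : Subalgebra R (Module.End R V) where
  carrier := {X | ∀ v ∈ p, X v ∈ p}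
  mul_mem' hX hY v hv := hX _ (hY v hv)
  add_mem' hX hY v hv := p.add_mem (hX v hv) (hY v hv)
  algebraMap_mem' c _ hv := p.smul_mem c hv

theorem exists_tensorRep_mem_span_e {M : ℕ} {x : BMWTypeA (M + 1)}
    (hx : x ∈ TwoSidedIdeal.span {e (M + 1) M}) :
    ∃ X : ∀ k, Operator k,
      tensorRep (M + 1) x = X ∧ ∀ᶠ k in (hyperfilter ℕ : Filter ℕ),
        ∀ f ∈ (space k).isotropicSubmodule, X k f = 0 := by
  have hlarge : ∀ᶠ k in (hyperfilter ℕ : Filter ℕ), M < k :=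
    (Filter.eventually_gt_atTop M).filter_mono Nat.hyperfilter_le_atTop
  have hstab := exists_tensorRep_mem (N := M + 1)
    (P := fun k => stabilizerSubalgebra (space k).isotropicSubmodule)
    (hlarge.mono fun k hk i hi _ hf => (space k).G_mem_isotropicSubmodule (by lia) hf)
  refine mem_span_singleton_induction (p := fun x => ∃ X : ∀ k, Operator k,
    tensorRep (M + 1) x = X ∧ ∀ᶠ k in (hyperfilter ℕ : Filter ℕ),
      ∀ f ∈ (space k).isotropicSubmodule, X k f = 0) ?zero ?add ?mul_mul hx
  case zero => exact ⟨0, map_zero _, .of_forall fun _ _ _ => rfl⟩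
  case add =>
    rintro x y ⟨X, hX, hX0⟩ ⟨Y, hY, hY0⟩
    refine ⟨X + Y, (map_add _ x y).trans (congrArg₂ (· + ·) hX hY), ?_⟩
    filter_upwards [hX0, hY0] with k hX0 hY0 f hf
    rw [Pi.add_apply, LinearMap.add_apply, hX0 f hf, hY0 f hf, add_zero]
  case mul_mul =>
    intro a b
    obtain ⟨X, hX, -⟩ := hstab a
    obtain ⟨Y, hY, hYP⟩ := hstab b
    refine ⟨X * (fun k => (space k).E M) * Y, ?_, ?_⟩
    · rw [map_mul, map_mul, hX, hY, tensorRep_e M.lt_succ_self]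
      rfl
    filter_upwards [hYP, hlarge] with k hYP hk f hf
    refine (congrArg (X k) ?_).trans (map_zero _)
    exact (space k).E_eq_zero_of_mem_isotropicSubmodule (by lia) (hYP f hf)

theorem tensorRep_normalWord (N : ℕ) (d : LehmerCode N) :
    tensorRep N (normalWord (g N) N d) =
      (fun k => normalWord (space k).G N d : ∀ k, Operator k) := by
  let G : ℕ → ∀ k, Operator k := fun i k => (space k).G i
  have hG : normalWord G N d = fun k => normalWord (space k).G N d := funext fun k =>
    map_normalWord (Pi.evalMonoidHom (Operator) k) G N d
  calc tensorRep N (normalWord (g N) N d)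
      = normalWord (fun i => tensorRep N (g N i)) N d :=
        map_normalWord (tensorRep N : BMWTypeA N →* OperatorUltraproduct) _ N d
    _ = normalWord (fun i => (G i : OperatorUltraproduct)) N d :=
        normalWord_congr (fun i hi => tensorRep_g hi) d
    _ = ((normalWord G N d : ∀ k, Operator k) : OperatorUltraproduct) :=
        (map_normalWord (A := ∀ k, Operator k) (C := OperatorUltraproduct)
          (eventualEqCon (hyperfilter ℕ : Filter ℕ) Operator).mk' G N d).symm
    _ = _ := congrArg _ hG

theorem eq_zero_of_tensorRep_sum_normalWord_add {M : ℕ} {c : LehmerCode (M + 1) → BMWField}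
    {y : BMWTypeA (M + 1)} (hy : y ∈ TwoSidedIdeal.span {e (M + 1) M})
    (h : tensorRep (M + 1) (∑ d, c d • normalWord (g (M + 1)) (M + 1) d + y) = 0) : c = 0 := by
  obtain ⟨Y, hY, hY0⟩ := exists_tensorRep_mem_span_e hy
  choose c' hc' using fun d => Quotient.exists_rep (evaluation (c d))
  have hsum : tensorRep (M + 1) (∑ d, c d • normalWord (g (M + 1)) (M + 1) d + y) =
      (((∑ d, fun k => c' d k • normalWord (space k).G (M + 1) d) + Y :
        ∀ k, Operator k) : OperatorUltraproduct) := by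
    rw [map_add, map_sum, hY, RingCon.coe_add]
    refine congrArg (· + _) ((Finset.sum_congr rfl fun d _ => ?_).trans
      (map_sum (eventualEqCon (hyperfilter ℕ : Filter ℕ) Operator).mk' _ _).symm)
    rw [map_smul, tensorRep_normalWord]
    exact ReducedProduct.smul_mk smul_eq_evaluation_smul (hc' d).symm _
  have hlarge : ∀ᶠ k in (hyperfilter ℕ : Filter ℕ), M < k :=
    (Filter.eventually_gt_atTop M).filter_mono Nat.hyperfilter_le_atTop
  have hc'0 : ∀ᶠ k in (hyperfilter ℕ : Filter ℕ), ∀ d, c' d k = 0 := by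
    filter_upwards [ReducedProduct.mk_eq_zero.1 (hsum.symm.trans h), hY0, hlarge] with k hk hY0 hMk
    refine Fintype.linearIndependent_iff.1
      ((space k).linearIndependent_extremalVector (M := M + 1) (by lia)) (fun d => c' d k) ?_
    have hv := LinearMap.congr_fun hk ((space k).extremalVector 1)
    simpa only [Pi.add_apply, LinearMap.add_apply, hY0 _ (space k).extremalVector_one_mem, add_zero,
      Finset.sum_apply, LinearMap.sum_apply, LinearMap.smul_apply, LinearMap.zero_apply,
      (space k).normalWord_G_extremalVector (Nat.add_lt_add_right hMk 1)] using hv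
  funext d
  refine (map_eq_zero evaluation).1 ((hc' d).symm.trans (Germ.coe_eq.2 ?_))
  exact hc'0.mono fun k hk => hk d

end TensorRepresentation

/-! ### The central idempotent -/

section AnisotropicInvolution

variable {A B : Type*} [Ring A] [Ring B] {f : B →+* A} {r : B → B}

theorem eq_zero_of_map_pow_two_pow_eq_zero (r_mul : ∀ x y, r (x * y) = r y * r x)
    (anisotropic : ∀ x, f (r x * x) = 0 → f x = 0) (n : ℕ) {y : B} (hy : r y = y)
    (h : f y ^ 2 ^ n = 0) : f y = 0 := by
  induction n generalizing y with
  | zero => simpa only [pow_zero, pow_one] using h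
  | succ n ih =>
    refine anisotropic y ?_
    rw [hy]
    refine ih (by rw [r_mul, hy]) ?_
    rw [map_mul, ← pow_two, ← pow_mul, ← pow_succ', h]

-- A nonzero element `f x` of the radical would yield the nilpotent self-adjoint `f (r x * x) ≠ 0`.
theorem isSemisimpleRing_of_anisotropic [IsArtinianRing A] (hf : Function.Surjective f)
    (r_mul : ∀ x y, r (x * y) = r y * r x) (r_r : ∀ x, r (r x) = x)
    (anisotropic : ∀ x, f (r x * x) = 0 → f x = 0) : IsSemisimpleRing A := by
  rw [IsArtinianRing.isSemisimpleRing_iff_jacobson, eq_bot_iff]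
  intro a ha
  obtain ⟨x, rfl⟩ := hf a
  obtain ⟨n, hn⟩ := IsSemiprimaryRing.isNilpotent (R := A)
  have hmem := Ideal.pow_mem_pow (Ideal.mul_mem_left _ (f (r x)) ha) n
  have hnil : f (r x * x) ^ n = 0 := by
    rw [map_mul]
    rwa [hn] at hmem
  exact anisotropic x <| eq_zero_of_map_pow_two_pow_eq_zero r_mul anisotropic n
    (by rw [r_mul, r_r]) (pow_eq_zero_of_le Nat.lt_two_pow_self.le hnil)

theorem exists_map_mul_eq_map_of_anisotropic {K A B : Type*} [Field K] [Ring A] [Ring B]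
    [Algebra K A] [Algebra K B] [Module.Finite K B] (f : B →ₐ[K] A) {r : B → B}
    (r_mul : ∀ x y, r (x * y) = r y * r x) (r_r : ∀ x, r (r x) = x)
    (anisotropic : ∀ x, f (r x * x) = 0 → f x = 0) (J : TwoSidedIdeal B) :
    ∃ z ∈ J, ∀ j ∈ J, f (j * z) = f j := by
  let π : B →+* f.range := f.rangeRestrict.toRingHom
  have hπ : Function.Surjective π := f.rangeRestrict_surjective
  have : Module.Finite K f.range := .of_surjective f.rangeRestrict.toLinearMap hπ
  have : IsArtinianRing f.range := .of_finite K _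
  have : IsSemisimpleRing f.range := isSemisimpleRing_of_anisotropic hπ r_mul r_r fun x h =>
    Subtype.ext (anisotropic x (congrArg Subtype.val h))
  obtain ⟨ε, hε, hspan⟩ := IsSemisimpleRing.ideal_eq_span_idempotent (J.asIdeal.map π)
  have hεJ : ε ∈ J.asIdeal.map π := hspan ▸ Ideal.mem_span_singleton_self ε
  obtain ⟨z, hz, rfl⟩ := (Ideal.mem_map_iff_of_surjective π hπ).1 hεJ
  refine ⟨z, hz, fun j hj => congrArg Subtype.val (?_ : π (j * z) = π j)⟩
  obtain ⟨a, ha⟩ := Ideal.mem_span_singleton'.1 (hspan ▸ Ideal.mem_map_of_mem π hj)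
  rw [map_mul, ← ha, mul_assoc, hε]

end AnisotropicInvolution

/-- A central idempotent generating a two-sided ideal, for which it is the identity element. -/
structure IsCentralIdentity {A : Type*} [Ring A] (I : TwoSidedIdeal A) (z : A) : Prop where
  mem : z ∈ I
  mul_self_eq : ∀ j ∈ I, j * z = j
  comm : ∀ b, Commute b z

theorem isCentralIdentity_of_left_of_right {A : Type*} [Ring A] {I : TwoSidedIdeal A} {z z' : A}
    (hz : z ∈ I) (hz' : z' ∈ I) (mul_z : ∀ j ∈ I, j * z = j) (z'_mul : ∀ j ∈ I, z' * j = j) :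
    IsCentralIdentity I z := by
  obtain rfl : z' = z := by rw [← mul_z z' hz', z'_mul z hz]
  refine ⟨hz, mul_z, fun b => ?_⟩
  rw [Commute, SemiconjBy, ← z'_mul (b * z') (I.mul_mem_left _ _ hz), ← mul_assoc,
    mul_z _ (I.mul_mem_right _ _ hz)]

namespace BMWTypeA

variable {M : ℕ}

theorem mul_e_eq_zero_of_tensorRep (hinj : Function.Injective (tensorRep M))
    {x : BMWTypeA (M + 1)} (h : tensorRep (M + 1) (x * e (M + 1) M) = 0) :
    x * e (M + 1) M = 0 := by
  obtain ⟨y, hy, hyx⟩ := (isBMWFamily (M + 1)).exists_mul_e_eq M.lt_succ_self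
    (x := x) (by rw [initialSubalgebra_eq_top]; trivial)
  rw [← range_inclusion M.le_succ] at hy
  obtain ⟨y, rfl⟩ := hy
  rw [← hyx] at h ⊢
  have hy : y = 0 := hinj (by rw [map_zero]; exact tensorRep_eq_zero_of_mul_e h)
  rw [hy]
  exact (congrArg (· * _) (map_zero (inclusion M.le_succ))).trans (zero_mul _)

theorem e_mul_eq_zero_of_tensorRep (hinj : Function.Injective (tensorRep M))
    {x : BMWTypeA (M + 1)} (h : tensorRep (M + 1) (e (M + 1) M * x) = 0) :
    e (M + 1) M * x = 0 := by
  have hrev : reverse (e (M + 1) M * x) = 0 := by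
    have h' := tensorRep_reverse_eq_zero h
    rw [reverse_mul, reverse_e M.lt_succ_self] at h' ⊢
    exact mul_e_eq_zero_of_tensorRep hinj h'
  rw [← reverse_reverse (e (M + 1) M * x), hrev, map_zero]

theorem reverse_mem_span_e {x : BMWTypeA (M + 1)} (hx : x ∈ TwoSidedIdeal.span {e (M + 1) M}) :
    reverse x ∈ TwoSidedIdeal.span {e (M + 1) M} := by
  refine mem_span_singleton_induction
    (p := fun x => reverse x ∈ TwoSidedIdeal.span {e (M + 1) M}) ?zero ?add ?mul_mul hx
  case zero => rw [map_zero]; exact zero_mem _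
  case add => intro x y hx hy; rw [map_add]; exact add_mem hx hy
  case mul_mul =>
    intro a b
    rw [reverse_mul, reverse_mul, reverse_e M.lt_succ_self, ← mul_assoc]
    exact mul_mul_mem_span_singleton _ _

theorem exists_right_identity_span_e (hinj : Function.Injective (tensorRep M)) :
    ∃ z ∈ TwoSidedIdeal.span {e (M + 1) M},
      ∀ j ∈ TwoSidedIdeal.span {e (M + 1) M}, j * z = j := by
  obtain ⟨z, hz, map_mul_z⟩ := exists_map_mul_eq_map_of_anisotropic
    (A := RealSpecialization.OperatorUltraproduct) (tensorRep (M + 1)) reverse_mul reverse_reverse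
    (fun _ => tensorRep_eq_zero_of_reverse_mul_self) (TwoSidedIdeal.span {e (M + 1) M})
  refine ⟨z, hz, fun j hj => mem_span_singleton_induction (p := fun j => j * z = j)
    (zero_mul _) (fun x y hx hy => by rw [add_mul, hx, hy]) (fun a b => ?_) hj⟩
  have heb : e (M + 1) M * b ∈ TwoSidedIdeal.span {e (M + 1) M} :=
    TwoSidedIdeal.mul_mem_right _ _ _ (e_mem_span_e le_rfl)
  have hez : e (M + 1) M * (b * z - b) = 0 := by
    refine e_mul_eq_zero_of_tensorRep hinj ?_
    rw [mul_sub, ← mul_assoc, map_sub, sub_eq_zero]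
    exact map_mul_z _ heb
  rw [mul_sub, sub_eq_zero, ← mul_assoc] at hez
  rw [mul_assoc, mul_assoc, ← mul_assoc _ b, hez, mul_assoc]

theorem exists_isCentralIdentity_of_injective (hinj : Function.Injective (tensorRep M)) :
    ∃ z, IsCentralIdentity (TwoSidedIdeal.span {e (M + 1) M}) z := by
  obtain ⟨z, hz, mul_z⟩ := exists_right_identity_span_e hinj
  refine ⟨z, isCentralIdentity_of_left_of_right hz (reverse_mem_span_e hz) mul_z fun j hj => ?_⟩
  have h := congrArg reverse (mul_z _ (reverse_mem_span_e hj))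
  rwa [reverse_mul, reverse_reverse] at h

instance : Nontrivial RealSpecialization.OperatorUltraproduct where
  exists_pair_ne := ⟨1, 0, fun h => by
    obtain ⟨k, h01⟩ := (ReducedProduct.mk_eq_zero (X := 1).1 h).exists
    have : Nonempty (RealSpecialization.space k).I := ⟨(RealSpecialization.space k).a 0⟩
    exact one_ne_zero h01⟩

theorem tensorRep_injective (N : ℕ) : Function.Injective (tensorRep N) := by
  induction N with
  | zero =>
    refine (injective_iff_map_eq_zero _).2 fun x hx => ?_
    obtain ⟨c, rfl⟩ := exists_eq_algebraMap x
    have hc : algebraMap BMWField RealSpecialization.OperatorUltraproduct c = 0 :=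
      (AlgHom.commutes _ c).symm.trans hx
    rw [(map_eq_zero _).1 hc, map_zero]
  | succ M hinj =>
    refine (injective_iff_map_eq_zero _).2 fun x hx => ?_
    obtain ⟨c, hc⟩ := exists_sub_sum_normalWord_mem_span_e x
    obtain rfl : c = 0 := eq_zero_of_tensorRep_sum_normalWord_add hc
      (by rwa [add_sub_cancel])
    have hxJ : x ∈ TwoSidedIdeal.span {e (M + 1) M} := by
      simpa only [Pi.zero_apply, zero_smul, Finset.sum_const_zero, sub_zero] using hc
    obtain ⟨z, hz, mul_z⟩ := exists_right_identity_span_e hinj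
    have hxz : x * z = 0 := by
      refine mem_span_singleton_induction (p := fun j => x * j = 0) (mul_zero _)
        (fun u v hu hv => by rw [mul_add, hu, hv, add_zero]) (fun a b => ?_) hz
      rw [← mul_assoc, ← mul_assoc, mul_e_eq_zero_of_tensorRep hinj (x := x * a)
        (by rw [map_mul, map_mul, hx, zero_mul, zero_mul]), zero_mul]
    rw [← mul_z x hxJ, hxz]

theorem exists_isCentralIdentity (M : ℕ) :
    ∃ z, IsCentralIdentity (TwoSidedIdeal.span {e (M + 1) M}) z :=
  exists_isCentralIdentity_of_injective (tensorRep_injective M)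

theorem eq_zero_of_inclusion_mul_e (h : M - 1 ≤ M + 1) {x : BMWTypeA (M - 1)}
    (hx : inclusion h x * e (M + 1) M = 0) : x = 0 := by
  refine tensorRep_injective _ ?_
  rw [map_zero, ← tensorRep_inclusion (Nat.sub_le M 1) x]
  refine tensorRep_eq_zero_of_mul_e ?_
  rw [map_mul, tensorRep_inclusion, tensorRep_inclusion, ← tensorRep_inclusion h, ← map_mul, hx,
    map_zero]

end BMWTypeA

/-! ### Full corners and Morita equivalence -/

section CornerEmbedding

variable {S B : Type*} [Ring S] [Ring B] {φ : S →ₙ+* B}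

/-- `φ` identifies `S` with the corner ring `fBf` of the idempotent `f = φ 1` of `B`. -/
structure IsCornerEmbedding (φ : S →ₙ+* B) : Prop where
  injective : Function.Injective φ
  exists_eq (b : B) : ∃ s, φ s = φ 1 * b * φ 1

/-- A corner `fBf` whose idempotent `f` is full, that is, generates `B` as a two-sided ideal. -/
structure IsFullCornerEmbedding (φ : S →ₙ+* B) : Prop extends IsCornerEmbedding φ where
  one_mem_span : 1 ∈ TwoSidedIdeal.span {φ 1}

theorem map_one_mul_map (s : S) : φ 1 * φ s = φ s := by rw [← map_mul, one_mul]

theorem map_mul_map_one (s : S) : φ s * φ 1 = φ s := by rw [← map_mul, mul_one]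

end CornerEmbedding

section Morita

universe u v

variable {S B : Type u} [Ring S] [Ring B] {φ : S →ₙ+* B}

section CornerSubgroup

variable (φ) {M N : Type v} [AddCommGroup M] [Module B M] [AddCommGroup N] [Module B N]

variable (M) in
/-- The subgroup `fM` of a `B`-module `M`, where `f = φ 1`; it is a module over `S`. -/
def cornerSubgroup : AddSubgroup M :=
  (DistribSMul.toAddMonoidHom M (φ 1)).eqLocus (.id M)

variable {φ} in
theorem map_one_smul_coe (m : cornerSubgroup φ M) : φ 1 • (m : M) = m := m.2

theorem map_smul_mem_cornerSubgroup (s : S) (m : M) : φ s • m ∈ cornerSubgroup φ M :=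
  (mul_smul _ _ _).symm.trans (congrArg (· • m) (map_one_mul_map s))

instance : Module S (cornerSubgroup φ M) where
  smul s m := ⟨φ s • (m : M), map_smul_mem_cornerSubgroup φ s _⟩
  one_smul m := Subtype.ext m.2
  mul_smul s t m := Subtype.ext ((congrArg (· • (m : M)) (map_mul φ s t)).trans (mul_smul _ _ _))
  smul_zero _ := Subtype.ext (smul_zero _)
  smul_add _ _ _ := Subtype.ext (smul_add _ _ _)
  add_smul s t m := Subtype.ext ((congrArg (· • (m : M)) (map_add φ s t)).trans (add_smul _ _ _))
  zero_smul m := Subtype.ext ((congrArg (· • (m : M)) (map_zero φ)).trans (zero_smul _ _))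

variable {φ} in
theorem coe_corner_smul (s : S) (m : cornerSubgroup φ M) :
    ((s • m : cornerSubgroup φ M) : M) = φ s • (m : M) := rfl

/-- The restriction `fM → fN` of a `B`-linear map `M → N`. -/
def cornerMap (h : M →ₗ[B] N) : cornerSubgroup φ M →ₗ[S] cornerSubgroup φ N where
  toFun m := ⟨h m, (map_smul h _ _).symm.trans (congrArg h m.2)⟩
  map_add' _ _ := Subtype.ext (map_add h _ _)
  map_smul' _ _ := Subtype.ext (map_smul h _ _)

end CornerSubgroup

section Coinduced

variable (φ) (X : Type u) [AddCommGroup X] [Module S X]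

/-- Right multiplication by `b` on the bimodule `fB`. -/
def cornerMulRight (b : B) : cornerSubgroup φ B →ₗ[S] cornerSubgroup φ B :=
  cornerMap φ (LinearMap.mulRight B b)

/-- The `B`-module `Hom_S(fB, X)` coinduced from an `S`-module `X`. -/
def Coinduced : Type u := cornerSubgroup φ B →ₗ[S] X

namespace Coinduced

instance : AddCommGroup (Coinduced φ X) := inferInstanceAs (AddCommGroup (_ →ₗ[S] X))

instance : FunLike (Coinduced φ X) (cornerSubgroup φ B) X :=
  inferInstanceAs (FunLike (_ →ₗ[S] X) _ _)

instance : LinearMapClass (Coinduced φ X) S (cornerSubgroup φ B) X :=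
  inferInstanceAs (LinearMapClass (_ →ₗ[S] X) _ _ _)

variable {φ X} in
theorem ext {α β : Coinduced φ X} (h : ∀ u, α u = β u) : α = β := DFunLike.ext _ _ h

instance : Module B (Coinduced φ X) where
  smul b α := LinearMap.comp α (cornerMulRight φ b)
  one_smul α := ext fun _ => congrArg α (Subtype.ext (mul_one _))
  mul_smul _ _ α := ext fun _ => congrArg α (Subtype.ext (mul_assoc _ _ _).symm)
  smul_zero _ := rfl
  smul_add _ _ _ := rfl
  add_smul b c α := ext fun u =>
    (congrArg α (Subtype.ext (mul_add (u : B) b c))).trans (map_add α _ _)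
  zero_smul α := ext fun u => (congrArg α (Subtype.ext (mul_zero (u : B)))).trans (map_zero α)

variable {φ X}

theorem smul_apply (b : B) (α : Coinduced φ X) (u : cornerSubgroup φ B) :
    (b • α) u = α (cornerMulRight φ b u) := rfl

/-- Postcomposition, the action of `Coinduced φ` on morphisms. -/
def map {Y : Type u} [AddCommGroup Y] [Module S Y] (h : X →ₗ[S] Y) :
    Coinduced φ X →ₗ[B] Coinduced φ Y where
  toFun α := h.comp α
  map_add' _ _ := ext fun _ => map_add h _ _
  map_smul' _ _ := rfl

end Coinduced

end Coinduced

namespace IsFullCornerEmbedding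

section Unit

variable (φ) (M : Type u) [AddCommGroup M] [Module B M]

/-- The unit `M → Hom_S(fB, fM)`, sending `m` to `u ↦ u • m`. -/
def unit : M →ₗ[B] Coinduced φ (cornerSubgroup φ M) where
  toFun m := ({
    toFun u := ⟨(u : B) • m,
      (mul_smul _ _ _).symm.trans (congrArg (· • m) (map_one_smul_coe u))⟩
    map_add' u v := Subtype.ext (add_smul (u : B) v m)
    map_smul' s u := Subtype.ext (mul_smul (φ s) (u : B) m) } :
    cornerSubgroup φ B →ₗ[S] cornerSubgroup φ M)
  map_add' m m' := Coinduced.ext fun u => Subtype.ext (smul_add (u : B) m m')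
  map_smul' b m := Coinduced.ext fun u => Subtype.ext (mul_smul (u : B) b m).symm

variable {φ}

theorem unit_injective (H : IsFullCornerEmbedding φ) : Function.Injective (unit φ M) := by
  refine (injective_iff_map_eq_zero _).2 fun m hm => ?_
  have hspan : (1 : B) • m = 0 := mem_span_singleton_induction (p := fun b => b • m = 0)
    (zero_smul _ _) (fun x y hx hy => by rw [add_smul, hx, hy, add_zero]) (fun a b => ?_)
    H.one_mem_span
  · rwa [one_smul] at hspan
  · have hfb : (unit φ M m ⟨φ 1 * b, map_smul_mem_cornerSubgroup φ 1 b⟩ : M) = 0 := by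
      rw [hm]
      rfl
    rw [mul_assoc, mul_smul, show (φ 1 * b) • m = 0 from hfb, smul_zero]

theorem unit_surjective (H : IsFullCornerEmbedding φ) : Function.Surjective (unit φ M) := by
  intro α
  have hspan : ∃ m : M, unit φ M m = (1 : B) • α := by
    refine mem_span_singleton_induction (p := fun b => ∃ m : M, unit φ M m = b • α)
      ⟨0, by rw [map_zero, zero_smul]⟩
      (fun x y ⟨m, hm⟩ ⟨m', hm'⟩ => ⟨m + m', by rw [map_add, hm, hm', add_smul]⟩)
      (fun a b => ?_) H.one_mem_span
    let fb : cornerSubgroup φ B := ⟨φ 1 * b, map_smul_mem_cornerSubgroup φ 1 b⟩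
    refine ⟨a • (α fb : M), Coinduced.ext fun u => Subtype.ext ?_⟩
    obtain ⟨s, hs⟩ := H.exists_eq ((u : B) * a)
    have hsu : φ s = (u : B) * a * φ 1 := by
      rw [hs, ← mul_assoc, ← smul_eq_mul (φ 1), map_one_smul_coe]
    calc (u : B) • a • (α fb : M) = φ s • (α fb : M) := by
          rw [hsu, ← mul_smul, mul_smul _ (φ 1), map_one_smul_coe]
      _ = α (s • fb) := by rw [map_smul, coe_corner_smul]
      _ = ((a * φ 1 * b) • α) u := by
          rw [Coinduced.smul_apply]
          refine congrArg (fun v => (α v : M)) (Subtype.ext ?_)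
          change φ s * (φ 1 * b) = (u : B) * (a * φ 1 * b)
          rw [← mul_assoc, map_mul_map_one, hsu]
          simp only [mul_assoc]
  obtain ⟨m, hm⟩ := hspan
  exact ⟨m, hm.trans (one_smul B α)⟩

end Unit

section Counit

variable (φ) (X : Type u) [AddCommGroup X] [Module S X]

/-- The counit `f Hom_S(fB, X) → X`, evaluation at `f`. -/
def counit : cornerSubgroup φ (Coinduced φ X) →ₗ[S] X where
  toFun α := (α : Coinduced φ X) ⟨φ 1, map_one_mul_map 1⟩
  map_add' _ _ := rfl
  map_smul' s α := by
    rw [coe_corner_smul, Coinduced.smul_apply, RingHom.id_apply, ← map_smul]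
    refine congrArg _ (Subtype.ext ?_)
    exact (map_one_mul_map s).trans (map_mul_map_one s).symm

variable {φ}

/-- The left `S`-linear map `fB → S` sending `u` to the element of `S` corresponding to `uf`. -/
noncomputable def mulMapOne (H : IsFullCornerEmbedding φ) : cornerSubgroup φ B →ₗ[S] S where
  toFun u := (H.exists_eq u).choose
  map_add' u v := H.injective <| by
    rw [map_add, (H.exists_eq _).choose_spec, (H.exists_eq _).choose_spec,
      (H.exists_eq _).choose_spec, AddSubgroup.coe_add, mul_add, add_mul]
  map_smul' s u := H.injective <| by
    rw [smul_eq_mul, map_mul, (H.exists_eq _).choose_spec, RingHom.id_apply,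
      (H.exists_eq _).choose_spec, coe_corner_smul, smul_eq_mul]
    simp only [← mul_assoc, map_one_mul_map, map_mul_map_one]

theorem map_mulMapOne (H : IsFullCornerEmbedding φ) (u : cornerSubgroup φ B) :
    φ (H.mulMapOne u) = u * φ 1 :=
  (H.exists_eq u).choose_spec.trans (congrArg (· * φ 1) u.2)

theorem counit_injective (H : IsFullCornerEmbedding φ) : Function.Injective (counit φ X) := by
  refine (injective_iff_map_eq_zero _).2 fun α hα => Subtype.ext (Coinduced.ext fun u => ?_)
  have hu : cornerMulRight φ (φ 1) u = H.mulMapOne u • ⟨φ 1, map_one_mul_map 1⟩ :=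
    Subtype.ext <| by
      rw [coe_corner_smul, map_mulMapOne, smul_eq_mul, mul_assoc, map_mul_map_one]
      rfl
  rw [← map_one_smul_coe α, Coinduced.smul_apply, hu, map_smul]
  exact (congrArg _ hα).trans (smul_zero _)

theorem counit_surjective (H : IsFullCornerEmbedding φ) : Function.Surjective (counit φ X) := by
  intro x
  let α : Coinduced φ X := (LinearMap.toSpanSingleton S X x).comp H.mulMapOne
  have hα (u : cornerSubgroup φ B) : α u = H.mulMapOne u • x := rfl
  refine ⟨⟨α, Coinduced.ext fun u => ?_⟩, ?_⟩
  · change α (cornerMulRight φ (φ 1) u) = α u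
    rw [hα, hα]
    refine congrArg (· • x) (H.injective ?_)
    rw [map_mulMapOne, map_mulMapOne]
    exact (mul_assoc _ _ _).trans (congrArg _ (map_mul_map_one 1))
  · change α _ = x
    have h : H.mulMapOne ⟨φ 1, map_one_mul_map 1⟩ = 1 :=
      H.injective ((H.map_mulMapOne _).trans (map_mul_map_one 1))
    rw [hα, h, one_smul]

end Counit

open CategoryTheory

theorem moritaEquivalent (H : IsFullCornerEmbedding φ) : MoritaEquivalent B S := by
  let F : ModuleCat.{u} B ⥤ ModuleCat.{u} S :=
    { obj M := .of S (cornerSubgroup φ M)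
      map h := ModuleCat.ofHom (cornerMap φ h.hom) }
  let G : ModuleCat.{u} S ⥤ ModuleCat.{u} B :=
    { obj X := .of B (Coinduced φ X)
      map h := ModuleCat.ofHom (Coinduced.map h.hom) }
  have η : 𝟭 _ ≅ F ⋙ G := NatIso.ofComponents
    (fun M => (LinearEquiv.ofBijective (unit φ M)
      ⟨H.unit_injective M, H.unit_surjective M⟩).toModuleIso)
    fun h => ModuleCat.hom_ext <| LinearMap.ext fun m => Coinduced.ext fun u => Subtype.ext <|
      show (u : B) • h.hom m = h.hom ((u : B) • m) from (map_smul h.hom (u : B) m).symm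
  have ε : G ⋙ F ≅ 𝟭 _ := NatIso.ofComponents
    (fun X => (LinearEquiv.ofBijective (counit φ X)
      ⟨H.counit_injective X, H.counit_surjective X⟩).toModuleIso)
    fun _ => rfl
  exact ⟨.mk F G η ε⟩

end IsFullCornerEmbedding

end Morita

section CornerConstructions

variable {S T B : Type*} [Ring S] [Ring T] [Ring B]

theorem IsCornerEmbedding.comp {χ : T →ₙ+* B} {ψ : S →ₙ+* T} (Hχ : IsCornerEmbedding χ)
    (Hψ : IsCornerEmbedding ψ) : IsCornerEmbedding (χ.comp ψ) where
  injective := Hχ.injective.comp Hψ.injective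
  exists_eq b := by
    obtain ⟨t, ht⟩ := Hχ.exists_eq b
    obtain ⟨s, hs⟩ := Hψ.exists_eq t
    refine ⟨s, ?_⟩
    simp only [NonUnitalRingHom.comp_apply, hs, map_mul, ht, ← mul_assoc, map_mul_map_one]
    rw [mul_assoc _ (χ 1), map_one_mul_map]

theorem IsFullCornerEmbedding.span_map_map_one {ψ : S →ₙ+* T} (H : IsFullCornerEmbedding ψ)
    (χ : T →ₙ+* B) : TwoSidedIdeal.span {χ (ψ 1)} = TwoSidedIdeal.span {χ 1} := by
  refine le_antisymm (TwoSidedIdeal.span_le.2 (Set.singleton_subset_iff.2 ?_))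
    (TwoSidedIdeal.span_le.2 (Set.singleton_subset_iff.2 ?_))
  · rw [← map_one_mul_map (ψ 1)]
    exact TwoSidedIdeal.mul_mem_right _ _ _ (TwoSidedIdeal.subset_span (Set.mem_singleton _))
  · refine mem_span_singleton_induction (p := fun t => χ t ∈ TwoSidedIdeal.span {χ (ψ 1)})
      ?_ (fun x y hx hy => ?_) (fun a b => ?_) H.one_mem_span
    · rw [map_zero]
      exact TwoSidedIdeal.zero_mem _
    · rw [map_add]
      exact TwoSidedIdeal.add_mem _ hx hy
    · rw [map_mul, map_mul]
      exact mul_mul_mem_span_singleton _ _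

theorem IsFullCornerEmbedding.comp {χ : T →ₙ+* B} {ψ : S →ₙ+* T} (Hχ : IsFullCornerEmbedding χ)
    (Hψ : IsFullCornerEmbedding ψ) : IsFullCornerEmbedding (χ.comp ψ) where
  toIsCornerEmbedding := Hχ.toIsCornerEmbedding.comp Hψ.toIsCornerEmbedding
  one_mem_span := (Hψ.span_map_map_one χ).symm ▸ Hχ.one_mem_span

theorem isFullCornerEmbedding_ringEquiv (ε : S ≃+* B) :
    IsFullCornerEmbedding ((ε : S →+* B) : S →ₙ+* B) where
  injective := ε.injective
  exists_eq b := ⟨ε.symm b, by simp⟩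
  one_mem_span := TwoSidedIdeal.subset_span (map_one ε).symm

/-- The sum `(s, t) ↦ σ s + ε t` of two homomorphisms with orthogonal images. -/
def orthogonalSum (σ : S →ₙ+* B) (ε : T →ₙ+* B) (h : ∀ s t, σ s * ε t = 0)
    (h' : ∀ s t, ε t * σ s = 0) : S × T →ₙ+* B where
  toFun x := σ x.1 + ε x.2
  map_zero' := by simp
  map_add' x y := by
    rw [Prod.fst_add, Prod.snd_add, map_add, map_add, add_add_add_comm]
  map_mul' x y := by
    rw [Prod.fst_mul, Prod.snd_mul, map_mul, map_mul, mul_add, add_mul, add_mul, h, h', add_zero,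
      zero_add]

section OrthogonalSum

variable {σ : S →ₙ+* B} {ε : T →ₙ+* B} (h : ∀ s t, σ s * ε t = 0) (h' : ∀ s t, ε t * σ s = 0)

theorem map_one_mul_orthogonalSum (x : S × T) : σ 1 * orthogonalSum σ ε h h' x = σ x.1 := by
  change σ 1 * (σ x.1 + ε x.2) = σ x.1
  rw [mul_add, map_one_mul_map, h, add_zero]

theorem map_one_mul_orthogonalSum' (x : S × T) : ε 1 * orthogonalSum σ ε h h' x = ε x.2 := by
  change ε 1 * (σ x.1 + ε x.2) = ε x.2
  rw [mul_add, map_one_mul_map, h', zero_add]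

theorem isFullCornerEmbedding_orthogonalSum (hσ : IsCornerEmbedding σ) (hε : IsCornerEmbedding ε)
    (comm : ∀ b, Commute b (σ 1)) (mem_span : 1 - σ 1 ∈ TwoSidedIdeal.span {ε 1}) :
    IsFullCornerEmbedding (orthogonalSum σ ε h h') where
  injective x y hxy := by
    refine Prod.ext (hσ.injective ?_) (hε.injective ?_)
    · rw [← map_one_mul_orthogonalSum h h', hxy, map_one_mul_orthogonalSum]
    · rw [← map_one_mul_orthogonalSum' h h', hxy, map_one_mul_orthogonalSum']
  exists_eq b := by
    obtain ⟨s, hs⟩ := hσ.exists_eq b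
    obtain ⟨t, ht⟩ := hε.exists_eq b
    refine ⟨(s, t), ?_⟩
    change σ s + ε t = (σ 1 + ε 1) * b * (σ 1 + ε 1)
    have hσε : σ 1 * b * ε 1 = 0 := by rw [← (comm b).eq, mul_assoc, h, mul_zero]
    have hεσ : ε 1 * b * σ 1 = 0 := by rw [mul_assoc, (comm b).eq, ← mul_assoc, h', zero_mul]
    rw [mul_add, add_mul, add_mul, add_mul, hσε, hεσ, add_zero, zero_add, hs, ht]
  one_mem_span := by
    set φ := orthogonalSum σ ε h h'
    have mul_mem (b : B) : b * φ 1 ∈ TwoSidedIdeal.span {φ 1} :=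
      TwoSidedIdeal.mul_mem_left _ _ _ (TwoSidedIdeal.subset_span (Set.mem_singleton _))
    have map_one_mem : σ 1 ∈ TwoSidedIdeal.span {φ 1} :=
      map_one_mul_orthogonalSum h h' 1 ▸ mul_mem (σ 1)
    have map_one_mem' : ε 1 ∈ TwoSidedIdeal.span {φ 1} :=
      map_one_mul_orthogonalSum' h h' 1 ▸ mul_mem (ε 1)
    rw [← sub_add_cancel 1 (σ 1)]
    exact TwoSidedIdeal.add_mem _
      (TwoSidedIdeal.span_le.2 (Set.singleton_subset_iff.2 map_one_mem') mem_span) map_one_mem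

end OrthogonalSum

namespace IsCentralIdentity

variable {I : TwoSidedIdeal B} {z : B}

theorem mul_one_sub (hz : IsCentralIdentity I z) {j : B} (hj : j ∈ I) : j * (1 - z) = 0 := by
  rw [mul_sub, mul_one, hz.mul_self_eq j hj, sub_self]

theorem commute_one_sub (hz : IsCentralIdentity I z) (b : B) : Commute b (1 - z) :=
  (Commute.one_right b).sub_right (hz.comm b)

theorem isIdempotentElem_one_sub (hz : IsCentralIdentity I z) : IsIdempotentElem (1 - z) :=
  IsIdempotentElem.one_sub (hz.mul_self_eq z hz.mem)

variable {p : B →+* S}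

theorem exists_section (hp : Function.Surjective p)
    (hz : IsCentralIdentity (TwoSidedIdeal.ker p) z) :
    ∃ σ : S →ₙ+* B, ∀ b, σ (p b) = b * (1 - z) := by
  choose q hq using hp
  have hσ {x y : B} (h : p x = p y) : x * (1 - z) = y * (1 - z) := by
    rw [← sub_eq_zero, ← sub_mul]
    exact hz.mul_one_sub ((TwoSidedIdeal.mem_ker _).2 (by rw [map_sub, h, sub_self]))
  refine ⟨{
    toFun s := q s * (1 - z)
    map_zero' := by rw [hσ ((hq 0).trans (map_zero p).symm), zero_mul]
    map_add' s t := by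
      rw [← add_mul]
      exact hσ (by rw [map_add, hq, hq, hq])
    map_mul' s t := by
      rw [mul_assoc, ← mul_assoc (1 - z), ← (hz.commute_one_sub _).eq, mul_assoc,
        hz.isIdempotentElem_one_sub.eq, ← mul_assoc]
      exact hσ (by rw [map_mul, hq, hq, hq]) }, fun b => hσ (hq _)⟩

theorem isCornerEmbedding_section (hp : Function.Surjective p)
    (hz : IsCentralIdentity (TwoSidedIdeal.ker p) z) {σ : S →ₙ+* B}
    (hσ : ∀ b, σ (p b) = b * (1 - z)) : IsCornerEmbedding σ where
  injective := by
    refine Function.LeftInverse.injective (g := p) fun s => ?_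
    obtain ⟨b, rfl⟩ := hp s
    rw [hσ, map_mul, map_sub, map_one, (TwoSidedIdeal.mem_ker _).1 hz.mem, sub_zero, mul_one]
  exists_eq b := by
    refine ⟨p b, ?_⟩
    rw [← map_one p, hσ, hσ, one_mul, ← (hz.commute_one_sub b).eq, mul_assoc,
      hz.isIdempotentElem_one_sub.eq]

/-- The ring splits as `B ≃ B / BfB × BfB`, and `f = ε 1` is full in the second factor. -/
theorem exists_isFullCornerEmbedding (hp : Function.Surjective p) {ε : T →ₙ+* B}
    (hε : IsCornerEmbedding ε) (ker_p : TwoSidedIdeal.ker p = TwoSidedIdeal.span {ε 1})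
    (hz : IsCentralIdentity (TwoSidedIdeal.ker p) z) :
    ∃ φ : S × T →ₙ+* B, IsFullCornerEmbedding φ := by
  obtain ⟨σ, hσ⟩ := hz.exists_section hp
  have ε_mem (t : T) : ε t ∈ TwoSidedIdeal.ker p := by
    rw [ker_p, ← map_one_mul_map t]
    exact TwoSidedIdeal.mul_mem_right _ _ _ (TwoSidedIdeal.subset_span (Set.mem_singleton _))
  have σ_ε (s : S) (t : T) : σ s * ε t = 0 := by
    obtain ⟨b, rfl⟩ := hp s
    rw [hσ, mul_assoc, ← (hz.commute_one_sub _).eq, hz.mul_one_sub (ε_mem t), mul_zero]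
  have ε_σ (s : S) (t : T) : ε t * σ s = 0 := by
    obtain ⟨b, rfl⟩ := hp s
    rw [hσ, ← mul_assoc, hz.mul_one_sub (TwoSidedIdeal.mul_mem_right _ _ _ (ε_mem t))]
  have σ_one : σ 1 = 1 - z := by rw [← map_one p, hσ, one_mul]
  refine ⟨_, isFullCornerEmbedding_orthogonalSum σ_ε ε_σ (hz.isCornerEmbedding_section hp hσ) hε
    (σ_one ▸ hz.commute_one_sub) ?_⟩
  rw [σ_one, sub_sub_cancel, ← ker_p]
  exact hz.mem

end IsCentralIdentity

theorem span_singleton_smul {K : Type*} [Field K] [Algebra K B] {c : K} (hc : c ≠ 0) (b : B) :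
    TwoSidedIdeal.span {c • b} = TwoSidedIdeal.span {b} := by
  refine le_antisymm (TwoSidedIdeal.span_le.2 (Set.singleton_subset_iff.2 ?_))
    (TwoSidedIdeal.span_le.2 (Set.singleton_subset_iff.2 ?_))
  · have h := mul_mul_mem_span_singleton (e := b) (algebraMap K B c) 1
    rwa [mul_one, ← Algebra.smul_def] at h
  · have h := mul_mul_mem_span_singleton (e := c • b) (algebraMap K B c⁻¹) 1
    rwa [mul_one, ← Algebra.smul_def, inv_smul_smul₀ hc] at h

/-- The homomorphism `a ↦ ι a * f`, for an idempotent `f` commuting with the image of `ι`. -/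
def mulIdempotent (ι : S →+* B) {f : B} (hf : IsIdempotentElem f) (comm : ∀ s, Commute (ι s) f) :
    S →ₙ+* B where
  toFun s := ι s * f
  map_zero' := by rw [map_zero, zero_mul]
  map_add' s t := by rw [map_add, add_mul]
  map_mul' s t := by
    rw [mul_assoc, ← mul_assoc f, ← (comm t).eq, mul_assoc, hf.eq, ← mul_assoc, map_mul]

theorem isCornerEmbedding_mulIdempotent {ι : S →+* B} {f : B} (hf : IsIdempotentElem f)
    (comm : ∀ s, Commute (ι s) f) (eq_zero : ∀ s, ι s * f = 0 → s = 0)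
    (exists_eq : ∀ b, ∃ s, ι s * f = f * b * f) : IsCornerEmbedding (mulIdempotent ι hf comm) where
  injective := (injective_iff_map_eq_zero _).2 eq_zero
  exists_eq b := by
    obtain ⟨s, hs⟩ := exists_eq b
    refine ⟨s, ?_⟩
    change ι s * f = ι 1 * f * b * (ι 1 * f)
    rw [map_one, one_mul, hs]

end CornerConstructions

namespace BMWTypeA

section Corner

variable (M : ℕ)

theorem isIdempotentElem_inv_smul_e : IsIdempotentElem (deltaVar⁻¹ • e (M + 1) M) := by
  rw [IsIdempotentElem, smul_mul_smul_comm, ((isBMWFamily (M + 1)).node M.lt_succ_self).e_e,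
    smul_smul, mul_assoc, inv_mul_cancel₀ deltaVar_ne_zero, mul_one]

variable {M}

theorem commute_inclusion_inv_smul_e (h : M - 1 ≤ M + 1) (x : BMWTypeA (M - 1)) :
    Commute (inclusion h x) (deltaVar⁻¹ • e (M + 1) M) := by
  refine Commute.smul_right ?_ _
  refine commute_of_mem_initialSubalgebra (K := BMWField) (g := g (M + 1))
    (k := M - 1) (fun i hi => ?_) (range_inclusion h ▸ ⟨x, rfl⟩)
  have H := isBMWFamily (M + 1)
  exact (H.node M.lt_succ_self).commute_e (H.comm i M (by lia) (by lia) (by lia))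

/-- The embedding `x ↦ x δ⁻¹e_{M+1}` of `B(A_{M-1})` onto a corner of `B(A_{M+1})`. -/
noncomputable def cornerEmbedding (h : M - 1 ≤ M + 1) : BMWTypeA (M - 1) →ₙ+* BMWTypeA (M + 1) :=
  mulIdempotent (inclusion h).toRingHom (isIdempotentElem_inv_smul_e M)
    (commute_inclusion_inv_smul_e h)

theorem cornerEmbedding_one (h : M - 1 ≤ M + 1) :
    cornerEmbedding h 1 = deltaVar⁻¹ • e (M + 1) M :=
  (congrArg (· * _) (map_one (inclusion h))).trans (one_mul _)

theorem isCornerEmbedding_cornerEmbedding (h : M - 1 ≤ M + 1) :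
    IsCornerEmbedding (cornerEmbedding h) := by
  refine isCornerEmbedding_mulIdempotent _ _ (fun x hx => ?_) fun b => ?_
  · have hx' : deltaVar⁻¹ • (inclusion h x * e (M + 1) M) = 0 := (mul_smul_comm _ _ _).symm.trans hx
    exact eq_zero_of_inclusion_mul_e h
      ((smul_eq_zero_iff_right (inv_ne_zero deltaVar_ne_zero)).1 hx')
  · obtain ⟨y, hy, hye⟩ := (isBMWFamily (M + 1)).exists_mul_e_eq_e_mul_mul_e M.lt_succ_self
      (x := b) (initialSubalgebra_eq_top (M + 1) ▸ Algebra.mem_top)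
    rw [← range_inclusion h] at hy
    obtain ⟨y, rfl⟩ := hy
    refine ⟨deltaVar⁻¹ • y, ?_⟩
    change inclusion h (deltaVar⁻¹ • y) * _ = _
    simp only [map_smul, smul_mul_assoc, mul_smul_comm]
    exact congrArg _ (congrArg _ hye)

end Corner

theorem exists_isFullCornerEmbedding_heckeTypeA_prod {M : ℕ} {S : Type*} [Ring S]
    {ψ : S →ₙ+* BMWTypeA (M - 1)} (Hψ : IsFullCornerEmbedding ψ) :
    ∃ φ : HeckeTypeA (M + 1) × S →ₙ+* BMWTypeA (M + 1), IsFullCornerEmbedding φ := by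
  have h : M - 1 ≤ M + 1 := by lia
  obtain ⟨z, hz⟩ := exists_isCentralIdentity M
  rw [← ker_toHecke] at hz
  refine hz.exists_isFullCornerEmbedding (p := (toHecke (M + 1)).toRingHom)
    (toHecke_surjective (M + 1))
    ((isCornerEmbedding_cornerEmbedding h).comp Hψ.toIsCornerEmbedding) ?_
  rw [NonUnitalRingHom.comp_apply, Hψ.span_map_map_one, cornerEmbedding_one]
  exact (ker_toHecke M).trans (span_singleton_smul (inv_ne_zero deltaVar_ne_zero) _).symm

theorem toHecke_zero_bijective : Function.Bijective (toHecke 0) := by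
  refine ⟨?_, toHecke_surjective 0⟩
  have family : IsBMWFamily lVar mVar deltaVar 0 (g 0) 0 :=
    (isBMWFamily 0).congr_right fun _ hi => absurd hi (Nat.not_lt_zero _)
  have comp_eq_id : (HeckeTypeA.lift family).comp (toHecke 0) = AlgHom.id BMWField _ :=
    algHom_ext fun _ hi => absurd hi (Nat.not_lt_zero _)
  exact Function.LeftInverse.injective (DFunLike.congr_fun comp_eq_id)

end BMWTypeA

section Pi

/-- The decomposition of a product of rings over `Fin (k + 1)` into its first and other factors. -/
def piFinSuccRingEquiv {k : ℕ} (R : Fin (k + 1) → Type*) [∀ i, Ring (R i)] :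
    (∀ i, R i) ≃+* R 0 × ∀ i : Fin k, R i.succ where
  toEquiv := (Fin.consEquiv R).symm
  map_mul' _ _ := rfl
  map_add' _ _ := rfl

theorem nonempty_pi_heckeAlgebra_ringEquiv (n : ℕ) :
    Nonempty (((i : Fin ((n + 2) / 2 + 1)) → HeckeAlgebra (n + 2 - 2 * (i : ℕ))) ≃+*
      HeckeTypeA (n + 1) × ((i : Fin (n / 2 + 1)) → HeckeAlgebra (n - 2 * (i : ℕ)))) := by
  rw [show (n + 2) / 2 = n / 2 + 1 by lia]
  refine ⟨(piFinSuccRingEquiv _).trans ((RingEquiv.refl _).prodCongr (.piCongrRight fun i => ?_))⟩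
  exact RingEquiv.cast (R := HeckeAlgebra) (by rw [Fin.val_succ]; lia)

end Pi

theorem exists_isFullCornerEmbedding_pi_heckeAlgebra (n : ℕ) :
    ∃ φ : ((i : Fin (n / 2 + 1)) → HeckeAlgebra (n - 2 * (i : ℕ))) →ₙ+* BMWTypeA (n - 1),
      IsFullCornerEmbedding φ := by
  have base : ∃ φ : HeckeTypeA 0 →ₙ+* BMWTypeA 0, IsFullCornerEmbedding φ :=
    ⟨_, isFullCornerEmbedding_ringEquiv
      (RingEquiv.ofBijective (BMWTypeA.toHecke 0) BMWTypeA.toHecke_zero_bijective).symm⟩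
  induction n using Nat.twoStepInduction with
  | zero =>
    obtain ⟨φ, H⟩ := base
    exact ⟨_, H.comp (isFullCornerEmbedding_ringEquiv
      (RingEquiv.piUnique fun i : Fin 1 => HeckeAlgebra (0 - 2 * (i : ℕ))))⟩
  | one =>
    obtain ⟨φ, H⟩ := base
    exact ⟨_, H.comp (isFullCornerEmbedding_ringEquiv
      (RingEquiv.piUnique fun i : Fin 1 => HeckeAlgebra (1 - 2 * (i : ℕ))))⟩
  | more n ih _ =>
    obtain ⟨ψ, Hψ⟩ := ih
    obtain ⟨φ, Hφ⟩ := BMWTypeA.exists_isFullCornerEmbedding_heckeTypeA_prod Hψ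
    obtain ⟨ε⟩ := nonempty_pi_heckeAlgebra_ringEquiv n
    exact ⟨_, Hφ.comp (isFullCornerEmbedding_ringEquiv ε)⟩

/-- For `n ≥ 2`, the Birman–Murakami–Wenzl algebra
`B(A_{n-1})` over `K = ℚ(l,δ)` is Morita equivalent to the direct sum
`⊕_{i=0}^{⌊n/2⌋} H_{n-2i}` of Iwahori–Hecke algebras of the symmetric groups
`S_{n-2i}` over `K` (with quadratic relation `T_j² = 1 - m·T_j`). -/
theorem bmwAlgebra_typeA_moritaEquivalent_heckeAlgebras
    (n : ℕ) (hn : 2 ≤ n) :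
    MoritaEquivalent (BMWAlgebra (n - 1) (typeA (n - 1)))
      ((i : Fin (n / 2 + 1)) → HeckeAlgebra (n - 2 * (i : ℕ))) := by
  obtain ⟨_, H⟩ := exists_isFullCornerEmbedding_pi_heckeAlgebra n
  exact H.moritaEquivalent
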